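/- Let a ≥ 0 and let (q,r) and (q̃,r̃) be two a-admissible pairs, with conjugate exponents q̃', r̃'. There exists a constant C(a,r,r̃) > 0 such that for every φ ∈ 𝒮⁺ and F ∈ 𝕊⁺, the function u(x,t) = ∫₀^∞ S_a(x,y,t) φ(y) y^a dy + ∫₀^t ∫₀^∞ S_a(x,y,t−s) F(y,s) y^a dy ds satisfies ‖u‖_{L^q_t L^r_a} ≤ C(a,r,r̃) (‖φ‖_{L²_a} + ‖F‖_{L^{q̃'}_t L^{r̃'}_a}). -/

import Mathlib

open MeasureTheory Filter Set

noncomputable def besselJ (ν : ℂ) (z : ℝ) : ℂ :=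
  ∑' k : ℕ, ((-1 : ℂ) ^ k / (Complex.Gamma (k + 1) * Complex.Gamma (ν + k + 1))) *
    ((z : ℂ) / 2) ^ (2 * (k : ℂ) + ν)

noncomputable def DIter : ℕ → (ℝ → ℂ) → (ℝ → ℂ)
  | 0, φ => φ
  | k + 1, φ => fun x => (1 / (x : ℂ)) * deriv (DIter k φ) x

def SPlus (φ : ℝ → ℂ) : Prop :=
  ContDiffOn ℝ (⊤ : ℕ∞) φ (Ioi 0) ∧
  ∀ m k : ℕ, ∃ C : ℝ, ∀ x > (0:ℝ), ‖(x : ℂ) ^ m * DIter k φ x‖ ≤ C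

noncomputable def Skernel (a x y t : ℝ) : ℂ :=
  if 0 < t then
    Complex.exp (-(Complex.I) * (((a + 1) * Real.pi / 4 : ℝ) : ℂ)) *
      (((2 * |t|) ^ (-(a + 1) / 2) : ℝ) : ℂ) *
      (((x * y / (2 * |t|)) ^ ((1 - a) / 2) : ℝ) : ℂ) *
      besselJ (((a - 1) / 2 : ℝ) : ℂ) (x * y / (2 * |t|)) *
      Complex.exp (Complex.I * ((((x ^ 2 + y ^ 2) / (4 * |t|)) : ℝ) : ℂ))
  else
    Complex.exp ((Complex.I) * (((a + 1) * Real.pi / 4 : ℝ) : ℂ)) *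
      (((2 * |t|) ^ (-(a + 1) / 2) : ℝ) : ℂ) *
      (((x * y / (2 * |t|)) ^ ((1 - a) / 2) : ℝ) : ℂ) *
      besselJ (((a - 1) / 2 : ℝ) : ℂ) (x * y / (2 * |t|)) *
      Complex.exp (-(Complex.I) * ((((x ^ 2 + y ^ 2) / (4 * |t|)) : ℝ) : ℂ))

noncomputable def Sop (a t : ℝ) (φ : ℝ → ℂ) (x : ℝ) : ℂ :=
  ∫ y in Ioi (0:ℝ), Skernel a x y t * φ y * ((y ^ a : ℝ) : ℂ)

noncomputable def LrA (a r : ℝ) (f : ℝ → ℂ) : ℝ :=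
  (∫ x in Ioi (0:ℝ), ‖f x‖ ^ r * x ^ a) ^ (1 / r)

noncomputable def mixedNorm (a q r : ℝ) (u : ℝ → ℝ → ℂ) : ℝ :=
  (∫ t : ℝ, LrA a r (fun x => u x t) ^ q) ^ (1 / q)

def Admissible (a q r : ℝ) : Prop :=
  2 < r ∧ (1 < a → r < 2 * (a + 1) / (a - 1)) ∧ 2 / q = (a + 1) * (1 / 2 - 1 / r)

noncomputable def DxIter : ℕ → (ℝ → ℝ → ℂ) → (ℝ → ℝ → ℂ)
  | 0, F => F
  | k + 1, F => fun x t => (1 / (x : ℂ)) * deriv (fun x' => DxIter k F x' t) x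

noncomputable def DtIter (l : ℕ) (F : ℝ → ℝ → ℂ) : ℝ → ℝ → ℂ :=
  fun x t => iteratedDeriv l (fun t' => F x t') t

def SPlusT (F : ℝ → ℝ → ℂ) : Prop :=
  ContDiffOn ℝ (⊤ : ℕ∞) (fun p : ℝ × ℝ => F p.1 p.2) (Ioi 0 ×ˢ univ) ∧
  ∀ p : ℕ, ∃ C : ℝ, ∀ k l : ℕ, k + l ≤ p → ∀ x > (0:ℝ), ∀ t : ℝ,
    (1 + x ^ 2 + t ^ 2) ^ ((p : ℝ) / 2) * ‖DxIter k (DtIter l F) x t‖ ≤ C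

/-!
The function `j(z) = z ^ (-ν) J_ν(z)` solves a damped oscillator equation when `ν ≥ -1 / 2`, so
it is bounded by its value at `0`; hence `|S_a(x, y, t)| ≤ B |t| ^ (-(a + 1) / 2)`. The flow of
the kernel maps the Gaussian of parameter `ζ`, suitably normalised, to the one of parameter
`ζ + 4 i t`, and the pairing of two Gaussians depends only on the sum of their parameters `ζ` and
`conj η`. Since Gaussians span a dense subspace, the flow is a unitary group on `L²_a`.

Interpolating the dispersive bound with unitarity gives decay from `L^{r'}` to `L^r` with rate
`|t| ^ (-2 / q)`. The Hardy–Littlewood–Sobolev inequality then bounds the bilinear form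
`∫∫ ⟨U_{t - s} F_s, G_t⟩` for exponents dual to `(q, r)`, with absolute values inside the time
integrals, so that any time cutoff may be inserted. By the `T T*` argument and duality this yields
the homogeneous estimate, the inhomogeneous estimate for a single pair, and the energy estimate in
`L^∞_t L²` for the source term. Two different pairs lie on one line through the energy endpoint:
if `r ≤ r̃`, interpolate between the energy and the `(q̃, r̃)` estimate for the same source; the
case `r̃ ≤ r` follows by duality, which transposes the cutoff.
-/

open scoped ENNReal ComplexConjugate

namespace Strichartz

section L2Pairing

variable {X : Type*} [MeasurableSpace X] {μ : Measure X} {u v : X → ℂ}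

lemma integral_mul_conj_eq_inner (hu : MemLp u 2 μ) (hv : MemLp v 2 μ) :
    ∫ x, u x * conj (v x) ∂μ = inner ℂ (hv.toLp v) (hu.toLp u) := by
  rw [L2.inner_def]
  refine integral_congr_ae ?_
  filter_upwards [hu.coeFn_toLp, hv.coeFn_toLp] with x hux hvx
  rw [hux, hvx, RCLike.inner_apply]

lemma eLpNorm_two_eq_of_integral_mul_conj_eq (hu : MemLp u 2 μ) (hv : MemLp v 2 μ)
    (h : ∫ x, u x * conj (u x) ∂μ = ∫ x, v x * conj (v x) ∂μ) :
    eLpNorm u 2 μ = eLpNorm v 2 μ := by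
  rw [integral_mul_conj_eq_inner hu hu, integral_mul_conj_eq_inner hv hv,
    inner_self_eq_norm_sq_to_K, inner_self_eq_norm_sq_to_K] at h
  have hsq : ‖hu.toLp u‖ ^ 2 = ‖hv.toLp v‖ ^ 2 := by exact_mod_cast h
  rw [sq_eq_sq₀ (norm_nonneg _) (norm_nonneg _), Lp.norm_toLp, Lp.norm_toLp] at hsq
  exact (ENNReal.toReal_eq_toReal_iff' hu.2.ne hv.2.ne).1 hsq

lemma tendsto_integral_mul_conj {U V : ℕ → X → ℂ} (hu : MemLp u 2 μ) (hv : MemLp v 2 μ)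
    (hU : ∀ n, MemLp (U n) 2 μ) (hV : ∀ n, MemLp (V n) 2 μ)
    (hUu : Tendsto (fun n => eLpNorm (U n - u) 2 μ) atTop (nhds 0))
    (hVv : Tendsto (fun n => eLpNorm (V n - v) 2 μ) atTop (nhds 0)) :
    Tendsto (fun n => ∫ x, U n x * conj (V n x) ∂μ) atTop (nhds (∫ x, u x * conj (v x) ∂μ)) := by
  simp_rw [fun n => integral_mul_conj_eq_inner (hU n) (hV n)]
  rw [integral_mul_conj_eq_inner hu hv]
  exact ((Lp.tendsto_Lp_iff_tendsto_eLpNorm'' V hV v hv).2 hVv).inner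
    ((Lp.tendsto_Lp_iff_tendsto_eLpNorm'' U hU u hu).2 hUu)

end L2Pairing

section DispersiveGroup

variable {X : Type*} [MeasurableSpace X] {μ : Measure X} {k : ℝ → X → X → ℂ} {B σ : ℝ}
  {f g : X → ℂ}

/-- Membership in `L¹ ∩ L²`, the class of data on which an integral operator with bounded kernel
and its `L²` theory are both available. -/
structure MemL1L2 (f : X → ℂ) (μ : Measure X) : Prop where
  integrable : Integrable f μ
  memLp : MemLp f 2 μ

lemma MemL1L2.sub (hf : MemL1L2 f μ) (hg : MemL1L2 g μ) : MemL1L2 (f - g) μ :=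
  ⟨hf.1.sub hg.1, hf.2.sub hg.2⟩

lemma memL1L2_indicator_const {s : Set X} (hs : MeasurableSet s) (hμs : μ s ≠ ∞) (c : ℂ) :
    MemL1L2 (s.indicator fun _ => c) μ :=
  ⟨(integrable_indicator_iff hs).2 (integrableOn_const hμs),
    memLp_indicator_const 2 hs c (Or.inr hμs)⟩

/-- The flow of the evolution with kernel `k t x y`: the identity at time `0`, where the kernel is
singular, and otherwise the integral operator with kernel `k t`. -/
noncomputable def flow (k : ℝ → X → X → ℂ) (μ : Measure X) (t : ℝ) (f : X → ℂ) (x : X) : ℂ :=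
  if t = 0 then f x else ∫ y, k t x y * f y ∂μ

@[simp] lemma flow_zero (f : X → ℂ) : flow k μ 0 f = f := by
  ext x
  exact if_pos rfl

lemma flow_of_ne_zero {t : ℝ} (ht : t ≠ 0) (f : X → ℂ) :
    flow k μ t f = fun x => ∫ y, k t x y * f y ∂μ := by
  ext x
  exact if_neg ht

/-- A measurable kernel obeying the dispersive bound `‖k t x y‖ ≤ B |t| ^ (-σ)`. -/
structure IsDispersiveKernel (k : ℝ → X → X → ℂ) (B σ : ℝ) : Prop where
  measurable : Measurable fun p : ℝ × X × X => k p.1 p.2.1 p.2.2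
  norm_le : ∀ t x y, ‖k t x y‖ ≤ B * |t| ^ (-σ)

/-- The relation `⟨U_t f, U_s g⟩ = ⟨U_{t - s} f, g⟩` in `L²(μ)`, which encodes unitarity and the
group law of the flow together. -/
def PairingInvariant (k : ℝ → X → X → ℂ) (μ : Measure X) (f g : X → ℂ) : Prop :=
  ∀ t s, ∫ x, flow k μ t f x * conj (flow k μ s g x) ∂μ = ∫ x, flow k μ (t - s) f x * conj (g x) ∂μ

lemma PairingInvariant.symm (h : PairingInvariant k μ f g) : PairingInvariant k μ g f := by
  have hconj : ∀ u v : X → ℂ, ∫ x, u x * conj (v x) ∂μ = conj (∫ x, v x * conj (u x) ∂μ) :=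
    fun u v => by
      rw [← integral_conj]
      simp only [map_mul, Complex.conj_conj, mul_comm]
  intro t s
  have hzero := h 0 (t - s)
  rw [flow_zero, zero_sub, neg_sub] at hzero
  rw [hconj, h s t, ← hzero, ← hconj]

/-- A dispersive kernel whose flow is a unitary group on `L²(μ)`. -/
structure IsDispersiveGroup (k : ℝ → X → X → ℂ) (μ : Measure X) (B σ : ℝ) : Prop
    extends IsDispersiveKernel k B σ where
  memLp_flow : ∀ t f, MemL1L2 f μ → MemLp (flow k μ t f) 2 μ
  pairingInvariant : ∀ f g, MemL1L2 f μ → MemL1L2 g μ → PairingInvariant k μ f g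

lemma flow_smul (t : ℝ) (c : ℂ) (f : X → ℂ) : flow k μ t (c • f) = c • flow k μ t f := by
  rcases eq_or_ne t 0 with rfl | ht
  · simp only [flow_zero]
  · ext x
    simp only [flow_of_ne_zero ht, Pi.smul_apply, smul_eq_mul, mul_left_comm _ c]
    exact integral_const_mul _ _

lemma flow_fun_zero (t : ℝ) : flow k μ t 0 = 0 := by
  simpa only [zero_smul] using flow_smul (k := k) (μ := μ) t 0 0

namespace IsDispersiveKernel

lemma measurable_right (hk : IsDispersiveKernel k B σ) (t : ℝ) (x : X) : Measurable (k t x) :=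
  hk.measurable.comp (f := fun y => (t, x, y)) (by fun_prop)

lemma integrable_mul (hk : IsDispersiveKernel k B σ) (t : ℝ) (x : X) (hf : Integrable f μ) :
    Integrable (fun y => k t x y * f y) μ :=
  hf.bdd_mul (hk.measurable_right t x).aestronglyMeasurable (Eventually.of_forall (hk.norm_le t x))

lemma flow_add (hk : IsDispersiveKernel k B σ) (t : ℝ) (hf : Integrable f μ)
    (hg : Integrable g μ) : flow k μ t (f + g) = flow k μ t f + flow k μ t g := by
  rcases eq_or_ne t 0 with rfl | ht
  · simp only [flow_zero]
  · ext x
    simp only [flow_of_ne_zero ht, Pi.add_apply, mul_add]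
    exact integral_add (hk.integrable_mul t x hf) (hk.integrable_mul t x hg)

lemma flow_sub (hk : IsDispersiveKernel k B σ) (t : ℝ) (hf : Integrable f μ)
    (hg : Integrable g μ) : flow k μ t (f - g) = flow k μ t f - flow k μ t g := by
  rw [sub_eq_add_neg f, ← neg_one_smul ℂ g, hk.flow_add t hf (hg.smul _), flow_smul,
    neg_one_smul, ← sub_eq_add_neg]

lemma enorm_flow_le (hk : IsDispersiveKernel k B σ) {t : ℝ} (ht : t ≠ 0) (f : X → ℂ) (x : X) :
    ‖flow k μ t f x‖ₑ ≤ ENNReal.ofReal (B * |t| ^ (-σ)) * eLpNorm f 1 μ := by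
  rw [flow_of_ne_zero ht, eLpNorm_one_eq_lintegral_enorm,
    ← lintegral_const_mul' _ _ ENNReal.ofReal_ne_top]
  refine (enorm_integral_le_lintegral_enorm _).trans (lintegral_mono fun y => ?_)
  rw [enorm_mul, ← ofReal_norm]
  gcongr
  exact hk.norm_le t x y

lemma tendsto_flow (hk : IsDispersiveKernel k B σ) {t : ℝ} (ht : t ≠ 0) (hf : Integrable f μ)
    {F : ℕ → X → ℂ} (hF : ∀ n, Integrable (F n) μ)
    (hlim : Tendsto (fun n => eLpNorm (F n - f) 1 μ) atTop (nhds 0)) (x : X) :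
    Tendsto (fun n => flow k μ t (F n) x) atTop (nhds (flow k μ t f x)) := by
  have hbound := ENNReal.Tendsto.const_mul (a := ENNReal.ofReal (B * |t| ^ (-σ))) hlim
    (Or.inr ENNReal.ofReal_ne_top)
  rw [mul_zero] at hbound
  rw [tendsto_iff_edist_tendsto_0]
  refine tendsto_of_tendsto_of_tendsto_of_le_of_le tendsto_const_nhds hbound (fun _ => zero_le)
    fun n => ?_
  rw [edist_eq_enorm_sub, ← Pi.sub_apply, ← hk.flow_sub t (hF n) hf]
  exact hk.enorm_flow_le ht _ x

end IsDispersiveKernel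

/-- Generators of a core for the flow: a set on which the flow is a unitary group and whose linear
span is dense in `L¹ ∩ L²` for both norms at once. -/
structure GeneratesUnitaryCore (S : Set (X → ℂ)) (k : ℝ → X → X → ℂ) (μ : Measure X) : Prop where
  memL1L2 : ∀ f ∈ S, MemL1L2 f μ
  memLp_flow : ∀ t, ∀ f ∈ S, MemLp (flow k μ t f) 2 μ
  pairingInvariant : ∀ f ∈ S, ∀ g ∈ S, PairingInvariant k μ f g
  dense : ∀ f, MemL1L2 f μ → ∀ ε ≠ 0, ∃ g ∈ Submodule.span ℂ S,
    eLpNorm (g - f) 1 μ ≤ ε ∧ eLpNorm (g - f) 2 μ ≤ ε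

namespace GeneratesUnitaryCore

variable {S : Set (X → ℂ)}

lemma memL1L2_span (hS : GeneratesUnitaryCore S k μ) (hf : f ∈ Submodule.span ℂ S) :
    MemL1L2 f μ := by
  induction hf using Submodule.span_induction with
  | mem f hf => exact hS.memL1L2 f hf
  | zero => exact ⟨integrable_zero _ _ _, MemLp.zero⟩
  | add f g _ _ hf hg => exact ⟨hf.1.add hg.1, hf.2.add hg.2⟩
  | smul c f _ hf => exact ⟨hf.1.smul c, hf.2.const_smul c⟩

lemma memLp_flow_span (hS : GeneratesUnitaryCore S k μ) (hk : IsDispersiveKernel k B σ) (t : ℝ)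
    (hf : f ∈ Submodule.span ℂ S) : MemLp (flow k μ t f) 2 μ := by
  induction hf using Submodule.span_induction with
  | mem f hf => exact hS.memLp_flow t f hf
  | zero => rw [flow_fun_zero]; exact MemLp.zero
  | add f g hf hg hft hgt =>
    rw [hk.flow_add t (hS.memL1L2_span hf).integrable (hS.memL1L2_span hg).integrable]
    exact hft.add hgt
  | smul c f _ hft => exact flow_smul t c f ▸ hft.const_smul c

lemma pairingInvariant_span_left (hS : GeneratesUnitaryCore S k μ) (hk : IsDispersiveKernel k B σ)
    (hg : ∀ t, MemLp (flow k μ t g) 2 μ) (h : ∀ f ∈ S, PairingInvariant k μ f g)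
    (hf : f ∈ Submodule.span ℂ S) : PairingInvariant k μ f g := by
  have hint : ∀ {u : X → ℂ} t s, u ∈ Submodule.span ℂ S →
      Integrable (fun x => flow k μ t u x * conj (flow k μ s g x)) μ := fun t s hu =>
    (hS.memLp_flow_span hk t hu).integrable_mul (hg s).star
  have hint' : ∀ {u : X → ℂ} t, u ∈ Submodule.span ℂ S →
      Integrable (fun x => flow k μ t u x * conj (g x)) μ := fun t hu => by
    simpa only [flow_zero] using hint t 0 hu
  induction hf using Submodule.span_induction with
  | mem f hf => exact h f hf
  | zero => intro t s; simp only [flow_fun_zero, Pi.zero_apply, zero_mul]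
  | add f₁ f₂ hf₁ hf₂ h₁ h₂ =>
    intro t s
    have hadd := fun t => hk.flow_add t (hS.memL1L2_span hf₁).integrable
      (hS.memL1L2_span hf₂).integrable
    simp only [hadd, Pi.add_apply, add_mul]
    rw [integral_add (hint t s hf₁) (hint t s hf₂), h₁ t s, h₂ t s,
      ← integral_add (hint' (t - s) hf₁) (hint' (t - s) hf₂)]
  | smul c f _ hf =>
    intro t s
    simp only [flow_smul, Pi.smul_apply, smul_eq_mul, mul_assoc]
    rw [integral_const_mul, hf t s, ← integral_const_mul]

lemma pairingInvariant_span (hS : GeneratesUnitaryCore S k μ) (hk : IsDispersiveKernel k B σ)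
    (hf : f ∈ Submodule.span ℂ S) (hg : g ∈ Submodule.span ℂ S) : PairingInvariant k μ f g :=
  hS.pairingInvariant_span_left hk (fun t => hS.memLp_flow_span hk t hg) (fun u hu =>
    (hS.pairingInvariant_span_left hk (fun t => hS.memLp_flow t u hu)
      (fun v hv => hS.pairingInvariant v hv u hu) hg).symm) hf

lemma eLpNorm_flow (hS : GeneratesUnitaryCore S k μ) (hk : IsDispersiveKernel k B σ) (t : ℝ)
    (hf : f ∈ Submodule.span ℂ S) : eLpNorm (flow k μ t f) 2 μ = eLpNorm f 2 μ := by
  refine eLpNorm_two_eq_of_integral_mul_conj_eq (hS.memLp_flow_span hk t hf)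
    (hS.memL1L2_span hf).memLp ?_
  rw [hS.pairingInvariant_span hk hf hf t t, sub_self, flow_zero]

lemma exists_seq_tendsto (hS : GeneratesUnitaryCore S k μ) (hf : MemL1L2 f μ) :
    ∃ F : ℕ → X → ℂ, (∀ n, F n ∈ Submodule.span ℂ S) ∧
      Tendsto (fun n => eLpNorm (F n - f) 1 μ) atTop (nhds 0) ∧
      Tendsto (fun n => eLpNorm (F n - f) 2 μ) atTop (nhds 0) := by
  choose F hFS hF1 hF2 using fun n : ℕ => hS.dense f hf (n : ℝ≥0∞)⁻¹
    (ENNReal.inv_ne_zero.2 (ENNReal.natCast_ne_top n))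
  have hlim := fun p hp => tendsto_of_tendsto_of_tendsto_of_le_of_le tendsto_const_nhds
    ENNReal.tendsto_inv_nat_nhds_zero (f := fun n => eLpNorm (F n - f) p μ) (fun _ => zero_le) hp
  exact ⟨F, hFS, hlim 1 hF1, hlim 2 hF2⟩

lemma aestronglyMeasurable_flow (hS : GeneratesUnitaryCore S k μ) (hk : IsDispersiveKernel k B σ)
    (t : ℝ) (hf : MemL1L2 f μ) : AEStronglyMeasurable (flow k μ t f) μ := by
  rcases eq_or_ne t 0 with rfl | ht
  · simpa only [flow_zero] using hf.memLp.1
  · obtain ⟨F, hFS, hF1, -⟩ := hS.exists_seq_tendsto hf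
    exact aestronglyMeasurable_of_tendsto_ae atTop (fun n => (hS.memLp_flow_span hk t (hFS n)).1)
      (Eventually.of_forall (hk.tendsto_flow ht hf.integrable
        (fun n => (hS.memL1L2_span (hFS n)).integrable) hF1))

lemma eLpNorm_flow_le (hS : GeneratesUnitaryCore S k μ) (hk : IsDispersiveKernel k B σ) (t : ℝ)
    (hf : MemL1L2 f μ) : eLpNorm (flow k μ t f) 2 μ ≤ eLpNorm f 2 μ := by
  rcases eq_or_ne t 0 with rfl | ht
  · rw [flow_zero]
  obtain ⟨F, hFS, hF1, hF2⟩ := hS.exists_seq_tendsto hf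
  have hlim : Tendsto (fun n => eLpNorm f 2 μ + eLpNorm (F n - f) 2 μ) atTop
      (nhds (eLpNorm f 2 μ)) := by
    simpa only [add_zero] using hF2.const_add (eLpNorm f 2 μ)
  calc eLpNorm (flow k μ t f) 2 μ
      ≤ liminf (fun n => eLpNorm (flow k μ t (F n)) 2 μ) atTop :=
        Lp.eLpNorm_lim_le_liminf_eLpNorm (fun n => (hS.memLp_flow_span hk t (hFS n)).1) _
          (Eventually.of_forall (hk.tendsto_flow ht hf.integrable
            (fun n => (hS.memL1L2_span (hFS n)).integrable) hF1))
    _ ≤ liminf (fun n => eLpNorm f 2 μ + eLpNorm (F n - f) 2 μ) atTop := by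
        refine liminf_le_liminf (Eventually.of_forall fun n => ?_)
        have hFn := (hS.memL1L2_span (hFS n)).memLp
        rw [hS.eLpNorm_flow hk t (hFS n)]
        simpa only [add_sub_cancel] using
          eLpNorm_add_le hf.memLp.1 (hFn.sub hf.memLp).1 one_le_two
    _ = eLpNorm f 2 μ := hlim.liminf_eq

lemma memLp_flow_of_memL1L2 (hS : GeneratesUnitaryCore S k μ) (hk : IsDispersiveKernel k B σ)
    (t : ℝ) (hf : MemL1L2 f μ) : MemLp (flow k μ t f) 2 μ :=
  ⟨hS.aestronglyMeasurable_flow hk t hf, (hS.eLpNorm_flow_le hk t hf).trans_lt hf.memLp.2⟩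

theorem isDispersiveGroup (hS : GeneratesUnitaryCore S k μ) (hk : IsDispersiveKernel k B σ) :
    IsDispersiveGroup k μ B σ where
  toIsDispersiveKernel := hk
  memLp_flow t f hf := hS.memLp_flow_of_memL1L2 hk t hf
  pairingInvariant f g hf hg := by
    intro t s
    obtain ⟨F, hFS, -, hF⟩ := hS.exists_seq_tendsto hf
    obtain ⟨G, hGS, -, hG⟩ := hS.exists_seq_tendsto hg
    have hflow : ∀ {u : X → ℂ} {U : ℕ → X → ℂ} (t : ℝ), MemL1L2 u μ →
        (∀ n, U n ∈ Submodule.span ℂ S) →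
        Tendsto (fun n => eLpNorm (U n - u) 2 μ) atTop (nhds 0) →
        Tendsto (fun n => eLpNorm (flow k μ t (U n) - flow k μ t u) 2 μ) atTop (nhds 0) := by
      intro u U t hu hUS hU
      refine tendsto_of_tendsto_of_tendsto_of_le_of_le tendsto_const_nhds hU (fun _ => zero_le)
        fun n => ?_
      have hUn := hS.memL1L2_span (hUS n)
      rw [← hk.flow_sub t hUn.integrable hu.integrable]
      exact hS.eLpNorm_flow_le hk t (hUn.sub hu)
    have hleft := tendsto_integral_mul_conj (hS.memLp_flow_of_memL1L2 hk t hf)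
      (hS.memLp_flow_of_memL1L2 hk s hg)
      (fun n => hS.memLp_flow_span hk t (hFS n)) (fun n => hS.memLp_flow_span hk s (hGS n))
      (hflow t hf hFS hF) (hflow s hg hGS hG)
    have hright := tendsto_integral_mul_conj (hS.memLp_flow_of_memL1L2 hk (t - s) hf) hg.memLp
      (fun n => hS.memLp_flow_span hk (t - s) (hFS n)) (fun n => (hS.memL1L2_span (hGS n)).memLp)
      (hflow (t - s) hf hFS hF) hG
    refine tendsto_nhds_unique hleft (hright.congr fun n => ?_)
    exact (hS.pairingInvariant_span hk (hFS n) (hGS n) t s).symm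

end GeneratesUnitaryCore

end DispersiveGroup

section WeightedMeasure

variable {X : Type*} [MeasurableSpace X] {μ : Measure X} {w : X → ℝ≥0∞} {f : X → ℂ}

/-- The measure `(1 + w⁻¹) μ`. For integrable `w`, its `L²` norm controls the `L¹(μ)` and the
`L²(μ)` norm at the same time. -/
noncomputable def invWeighted (μ : Measure X) (w : X → ℝ≥0∞) : Measure X :=
  μ.withDensity fun x => 1 + (w x)⁻¹

lemma le_invWeighted (μ : Measure X) (w : X → ℝ≥0∞) : μ ≤ invWeighted μ w := by
  calc μ = μ.withDensity 1 := withDensity_one.symm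
    _ ≤ invWeighted μ w := withDensity_mono (Eventually.of_forall fun x => le_self_add)

lemma lintegral_sq_invWeighted (hw : AEMeasurable w μ) (hw0 : ∀ x, w x ≠ 0) (f : X → ℂ) :
    ∫⁻ x, ‖f x‖ₑ ^ 2 ∂invWeighted μ w = ∫⁻ x, (1 + (w x)⁻¹) * ‖f x‖ₑ ^ 2 ∂μ := by
  exact lintegral_withDensity_eq_lintegral_mul_non_measurable₀ μ
    (hw.inv.const_add 1) (Eventually.of_forall fun x => by simp [hw0 x, pos_iff_ne_zero]) _

lemma eLpNorm_two_eq_lintegral (μ : Measure X) (f : X → ℂ) :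
    eLpNorm f 2 μ = (∫⁻ x, ‖f x‖ₑ ^ 2 ∂μ) ^ (1 / 2 : ℝ) := by
  rw [eLpNorm_eq_lintegral_rpow_enorm_toReal two_ne_zero ENNReal.ofNat_ne_top]
  simp

lemma eLpNorm_two_sq (μ : Measure X) (f : X → ℂ) :
    eLpNorm f 2 μ ^ 2 = ∫⁻ x, ‖f x‖ₑ ^ 2 ∂μ := by
  rw [eLpNorm_two_eq_lintegral, ← ENNReal.rpow_natCast, ← ENNReal.rpow_mul]
  simp

lemma eLpNorm_one_le_eLpNorm_two_invWeighted (hw : AEMeasurable w μ) (hw0 : ∀ x, w x ≠ 0)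
    (hw_top : ∀ x, w x ≠ ∞) (hf : AEStronglyMeasurable f μ) :
    eLpNorm f 1 μ ≤ eLpNorm f 2 (invWeighted μ w) * (∫⁻ x, w x ∂μ) ^ (1 / 2 : ℝ) := by
  have hsplit : ∀ x, ‖f x‖ₑ = ‖f x‖ₑ * (w x) ^ (-(1 / 2) : ℝ) * (w x) ^ (1 / 2 : ℝ) := fun x => by
    rw [mul_assoc, ← ENNReal.rpow_add _ _ (hw0 x) (hw_top x), neg_add_cancel, ENNReal.rpow_zero,
      mul_one]
  rw [eLpNorm_one_eq_lintegral_enorm, eLpNorm_two_eq_lintegral, lintegral_sq_invWeighted hw hw0]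
  calc ∫⁻ x, ‖f x‖ₑ ∂μ
      = ∫⁻ x, ‖f x‖ₑ * (w x) ^ (-(1 / 2) : ℝ) * (w x) ^ (1 / 2 : ℝ) ∂μ :=
        lintegral_congr hsplit
    _ ≤ (∫⁻ x, (‖f x‖ₑ * (w x) ^ (-(1 / 2) : ℝ)) ^ (2 : ℝ) ∂μ) ^ (1 / 2 : ℝ) *
          (∫⁻ x, ((w x) ^ (1 / 2 : ℝ)) ^ (2 : ℝ) ∂μ) ^ (1 / 2 : ℝ) :=
        ENNReal.lintegral_mul_le_Lp_mul_Lq μ Real.HolderConjugate.two_two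
          (hf.enorm.mul (hw.pow_const _)) (hw.pow_const _)
    _ ≤ _ := by
        gcongr with x x
        · rw [ENNReal.mul_rpow_of_nonneg _ _ zero_le_two, ← ENNReal.rpow_mul, mul_comm,
            ENNReal.rpow_two, neg_mul, one_div, inv_mul_cancel₀ two_ne_zero, ENNReal.rpow_neg_one]
          gcongr
          exact le_add_self
        · rw [← ENNReal.rpow_mul, one_div, inv_mul_cancel₀ two_ne_zero, ENNReal.rpow_one]

lemma memLp_invWeighted (hw : AEMeasurable w μ) (hw0 : ∀ x, w x ≠ 0) (hf : MemL1L2 f μ)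
    (hfw : ∀ x, ‖f x‖ₑ ≤ w x) : MemLp f 2 (invWeighted μ w) := by
  refine ⟨hf.memLp.1.mono_ac (withDensity_absolutelyContinuous _ _), ?_⟩
  rw [eLpNorm_two_eq_lintegral, lintegral_sq_invWeighted hw hw0]
  refine ENNReal.rpow_lt_top_of_nonneg (by norm_num) (ne_top_of_le_ne_top ?_
    (lintegral_mono fun x => show _ ≤ ‖f x‖ₑ ^ 2 + ‖f x‖ₑ from ?_))
  · rw [lintegral_add_right' _ hf.integrable.1.enorm]
    refine ENNReal.add_ne_top.2 ⟨fun htop => hf.memLp.2.ne ?_, hf.integrable.2.ne⟩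
    rw [eLpNorm_two_eq_lintegral, htop, ENNReal.top_rpow_of_pos (by norm_num)]
  · rw [add_mul, one_mul, sq, ← mul_assoc]
    gcongr
    refine (mul_le_mul_left (mul_le_mul_right (hfw x) _) _).trans ?_
    exact (mul_le_mul_left (ENNReal.inv_mul_le_one (w x)) ‖f x‖ₑ).trans_eq (one_mul _)

lemma isLocallyFiniteMeasure_of_memLp [TopologicalSpace X] {ν : Measure X} {p : ℝ≥0∞}
    (hp : p ≠ 0) (hp_top : p ≠ ∞) (hf : Continuous f) (hf0 : ∀ x, f x ≠ 0) (h : MemLp f p ν) :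
    IsLocallyFiniteMeasure ν where
  finiteAtNhds x := by
    have hx : 0 < ‖f x‖₊ := nnnorm_pos.2 (hf0 x)
    refine ⟨_, ?_, h.meas_ge_lt_top hp hp_top (half_pos hx).ne'⟩
    filter_upwards [hf.nnnorm.continuousAt.eventually (lt_mem_nhds (half_lt_self hx))]
      with y hy using hy.le

end WeightedMeasure

section Interpolation

variable {X : Type*} [MeasurableSpace X] {μ : Measure X} {K : X → X → ℂ} {D : ℝ≥0∞}
  {f g : X → ℂ} {p : ℝ}

lemma MemL1L2.mono (hf : MemL1L2 f μ) (hg : AEStronglyMeasurable g μ) {c : ℝ}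
    (h : ∀ x, ‖g x‖ ≤ c * ‖f x‖) : MemL1L2 g μ :=
  ⟨memLp_one_iff_integrable.1
      ((memLp_one_iff_integrable.2 hf.integrable).of_le_mul hg (Eventually.of_forall h)),
    hf.memLp.of_le_mul hg (Eventually.of_forall h)⟩

lemma MemL1L2.lintegral_rpow_ne_top (hf : MemL1L2 f μ) (hp1 : 1 ≤ p) (hp2 : p ≤ 2) :
    ∫⁻ x, ‖f x‖ₑ ^ p ∂μ ≠ ∞ := by
  have hsq : ∫⁻ x, ‖f x‖ₑ ^ 2 ∂μ ≠ ∞ := fun htop => hf.memLp.2.ne <| by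
    rw [eLpNorm_two_eq_lintegral, htop, ENNReal.top_rpow_of_pos (by norm_num)]
  refine ne_top_of_le_ne_top (ENNReal.add_ne_top.2 ⟨hf.integrable.2.ne, hsq⟩) ?_
  rw [← lintegral_add_left' hf.integrable.1.enorm]
  refine lintegral_mono fun x => ?_
  rcases le_total ‖f x‖ₑ 1 with h | h
  · exact ((ENNReal.rpow_le_rpow_of_exponent_ge h hp1).trans_eq (ENNReal.rpow_one _)).trans
      le_self_add
  · exact ((ENNReal.rpow_le_rpow_of_exponent_le h hp2).trans_eq (ENNReal.rpow_two _)).trans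
      le_add_self

lemma lintegral_enorm_eq_zero_of_rpow (hf : AEStronglyMeasurable f μ) (hp : 0 < p)
    (h : ∫⁻ x, ‖f x‖ₑ ^ p ∂μ = 0) : ∫⁻ x, ‖f x‖ₑ ∂μ = 0 := by
  rw [lintegral_eq_zero_iff' (hf.enorm.pow_const p)] at h
  rw [lintegral_eq_zero_iff' hf.enorm]
  filter_upwards [h] with x hx using (ENNReal.rpow_eq_zero_iff_of_pos hp).1 hx

/-- The sesquilinear form `⟨K f, g⟩` of the integral operator with kernel `K`. -/
noncomputable def kernelForm (K : X → X → ℂ) (μ : Measure X) (f g : X → ℂ) : ℂ :=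
  ∫ q : X × X, K q.1 q.2 * f q.2 * conj (g q.1) ∂μ.prod μ

/-- A measurable kernel bounded by the finite constant `D`. -/
structure IsBoundedKernel (K : X → X → ℂ) (D : ℝ≥0∞) : Prop where
  measurable : Measurable fun q : X × X => K q.1 q.2
  ne_top : D ≠ ∞
  enorm_le : ∀ x y, ‖K x y‖ₑ ≤ D

/-- A kernel bounded by `D` whose integral operator contracts `L²(μ)`; these are the two endpoint
bounds between which the operator is interpolated. -/
structure IsL2Contraction (K : X → X → ℂ) (μ : Measure X) (D : ℝ≥0∞) : Prop
    extends IsBoundedKernel K D where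
  enorm_kernelForm_le : ∀ f g, MemL1L2 f μ → MemL1L2 g μ →
    ‖kernelForm K μ f g‖ₑ ≤ eLpNorm f 2 μ * eLpNorm g 2 μ

/-- The phase of `z` if `z` exceeds the height `l`; `z` is the superposition of its layers. -/
noncomputable def layer (l : ℝ) (z : ℂ) : ℂ := if l < ‖z‖ then z / ‖z‖ else 0

/-- The part of `z` below height `1 / l`. -/
noncomputable def lowPart (l : ℝ) (z : ℂ) : ℂ := if l * ‖z‖ < 1 then z else 0

lemma measurable_layer : Measurable fun q : ℝ × ℂ => layer q.1 q.2 :=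
  Measurable.ite (measurableSet_lt measurable_fst measurable_snd.norm)
    (measurable_snd.div (Complex.measurable_ofReal.comp measurable_snd.norm)) measurable_const

lemma measurable_lowPart : Measurable fun q : ℝ × ℂ => lowPart q.1 q.2 :=
  Measurable.ite (measurableSet_lt (measurable_fst.mul measurable_snd.norm) measurable_const)
    measurable_snd measurable_const

lemma enorm_layer {l : ℝ} (hl : 0 < l) (z : ℂ) : ‖layer l z‖ₑ = if l < ‖z‖ then 1 else 0 := by
  unfold layer
  split_ifs with h
  · rw [← ofReal_norm, norm_div, Complex.norm_real, norm_norm, div_self (hl.trans h).ne',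
      ENNReal.ofReal_one]
  · exact enorm_zero

lemma norm_layer_le {l : ℝ} (hl : 0 < l) (z : ℂ) : ‖layer l z‖ ≤ l⁻¹ * ‖z‖ := by
  unfold layer
  split_ifs with h
  · rw [norm_div, Complex.norm_real, norm_norm, div_self (hl.trans h).ne', ← div_eq_inv_mul,
      one_le_div hl]
    exact h.le
  · rw [norm_zero]; positivity

lemma lintegral_Ioi_ite_rpow {β c : ℝ} (hβ : -1 < β) (hc : 0 ≤ c) :
    ∫⁻ l in Ioi (0 : ℝ), (if l < c then ENNReal.ofReal (l ^ β) else 0) =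
      ENNReal.ofReal (c ^ (β + 1) / (β + 1)) := by
  have hI : IntegrableOn (fun l : ℝ => l ^ β) (Ioo 0 c) :=
    ((intervalIntegrable_iff_integrableOn_Ioc_of_le hc).1
      (intervalIntegral.intervalIntegrable_rpow' hβ)).mono_set Ioo_subset_Ioc_self
  calc ∫⁻ l in Ioi (0 : ℝ), (if l < c then ENNReal.ofReal (l ^ β) else 0)
      = ∫⁻ l in Ioo (0 : ℝ) c, ENNReal.ofReal (l ^ β) := by
        rw [← Ioi_inter_Iio, inter_comm, ← setLIntegral_indicator measurableSet_Iio]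
        rfl
    _ = ENNReal.ofReal (∫ l in Ioo (0 : ℝ) c, l ^ β) := by
        refine (ofReal_integral_eq_lintegral_ofReal hI ?_).symm
        filter_upwards [ae_restrict_mem measurableSet_Ioo] with l hl using
          Real.rpow_nonneg hl.1.le _
    _ = ENNReal.ofReal (c ^ (β + 1) / (β + 1)) := by
        rw [← integral_Ioc_eq_integral_Ioo, ← intervalIntegral.integral_of_le hc,
          integral_rpow (Or.inl hβ), Real.zero_rpow (by linarith), sub_zero]

lemma lintegral_rpow_mul_enorm_layer (hp : 0 < p) (z : ℂ) :
    ∫⁻ l in Ioi (0 : ℝ), ENNReal.ofReal (l ^ (p - 1)) * ‖layer l z‖ₑ =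
      ENNReal.ofReal (1 / p) * ‖z‖ₑ ^ p := by
  have hlayer : ∀ l ∈ Ioi (0 : ℝ), ENNReal.ofReal (l ^ (p - 1)) * ‖layer l z‖ₑ =
      if l < ‖z‖ then ENNReal.ofReal (l ^ (p - 1)) else 0 := fun l hl => by
    rw [enorm_layer hl, mul_ite, mul_one, mul_zero]
  rw [setLIntegral_congr_fun measurableSet_Ioi hlayer,
    lintegral_Ioi_ite_rpow (by linarith) (norm_nonneg _), sub_add_cancel, div_eq_mul_one_div,
    mul_comm, ENNReal.ofReal_mul (by positivity), ← ENNReal.ofReal_rpow_of_nonneg (norm_nonneg _)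
    hp.le, ofReal_norm]

lemma lintegral_enorm_layer (z : ℂ) : ∫⁻ l in Ioi (0 : ℝ), ‖layer l z‖ₑ = ‖z‖ₑ := by
  simpa using lintegral_rpow_mul_enorm_layer one_pos z

lemma integral_layer (z : ℂ) : ∫ l in Ioi (0 : ℝ), layer l z = z := by
  have hlayer : ∀ l, layer l z = (Iio ‖z‖).indicator (fun _ => z / (‖z‖ : ℂ)) l := fun _ => rfl
  simp_rw [hlayer]
  rw [setIntegral_indicator measurableSet_Iio, Ioi_inter_Iio, setIntegral_const,
    Real.volume_real_Ioo_of_le (norm_nonneg z), sub_zero, Complex.real_smul]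
  rcases eq_or_ne z 0 with rfl | hz
  · simp only [norm_zero, Complex.ofReal_zero, zero_mul]
  · exact mul_div_cancel₀ z (by simpa using hz)

lemma lintegral_rpow_mul_enorm_lowPart_sq (hp0 : 0 < p) (hp2 : p < 2) (z : ℂ) :
    ∫⁻ l in Ioi (0 : ℝ), ENNReal.ofReal (l ^ (1 - p)) * ‖lowPart l z‖ₑ ^ 2 =
      ENNReal.ofReal (1 / (2 - p)) * ‖z‖ₑ ^ p := by
  rcases eq_or_ne z 0 with rfl | hz
  · simp [lowPart, hp0]
  have hpos : 0 < ‖z‖ := norm_pos_iff.2 hz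
  have hlow : ∀ l, ENNReal.ofReal (l ^ (1 - p)) * ‖lowPart l z‖ₑ ^ 2 =
      ‖z‖ₑ ^ 2 * if l < 1 / ‖z‖ then ENNReal.ofReal (l ^ (1 - p)) else 0 := fun l => by
    simp only [lowPart, lt_div_iff₀ hpos]
    split_ifs
    · exact mul_comm _ _
    · simp
  have hpow : ‖z‖ ^ 2 * (1 / ‖z‖) ^ (2 - p) = ‖z‖ ^ p := by
    rw [one_div, Real.inv_rpow hpos.le, ← Real.rpow_neg hpos.le, ← Real.rpow_natCast,
      ← Real.rpow_add hpos]
    congr 1; push_cast; ring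
  simp_rw [hlow]
  rw [lintegral_const_mul' _ _ (by simp), lintegral_Ioi_ite_rpow (by linarith) (by positivity),
    ← ofReal_norm, ← ENNReal.ofReal_pow hpos.le, ← ENNReal.ofReal_mul (by positivity),
    ENNReal.ofReal_rpow_of_nonneg hpos.le hp0.le,
    ← ENNReal.ofReal_mul (one_div_nonneg.2 (by linarith)), show 1 - p + 1 = 2 - p by ring,
    ← mul_div_assoc, hpow, one_div_mul_eq_div]

lemma enorm_sub_lowPart_le {l : ℝ} (hl : 0 < l) (hp : 1 < p) (z : ℂ) :
    ‖z - lowPart l z‖ₑ ≤ ENNReal.ofReal (l ^ (p - 1)) * ‖z‖ₑ ^ p := by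
  unfold lowPart
  split_ifs with h
  · simp only [sub_self, enorm_zero, zero_le]
  have hz : 0 ≤ ‖z‖ := norm_nonneg _
  rw [sub_zero, ← ofReal_norm, ENNReal.ofReal_rpow_of_nonneg hz (by linarith),
    ← ENNReal.ofReal_mul (by positivity)]
  refine ENNReal.ofReal_le_ofReal ?_
  calc ‖z‖ ≤ (l * ‖z‖) ^ (p - 1) * ‖z‖ :=
        le_mul_of_one_le_left hz (Real.one_le_rpow (not_lt.1 h) (by linarith))
    _ = l ^ (p - 1) * ‖z‖ ^ p := by
        rw [Real.mul_rpow hl.le hz, mul_assoc, ← Real.rpow_add_one' hz (by linarith),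
          sub_add_cancel]

lemma mul_le_mul_sq_add_inv_mul_sq (A E : ℝ≥0∞) {c : ℝ≥0∞} (h0 : c ≠ 0) (h_top : c ≠ ∞) :
    A * E ≤ c * A ^ 2 + c⁻¹ * E ^ 2 := by
  rcases le_total E (c * A) with h | h
  · calc A * E ≤ A * (c * A) := by gcongr
      _ = c * A ^ 2 := by ring
      _ ≤ _ := le_self_add
  · have hA : A ≤ c⁻¹ * E := by
      rw [mul_comm, ← div_eq_mul_inv, ENNReal.le_div_iff_mul_le (Or.inl h0) (Or.inl h_top),
        mul_comm]
      exact h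
    calc A * E ≤ (c⁻¹ * E) * E := by gcongr
      _ = c⁻¹ * E ^ 2 := by ring
      _ ≤ _ := le_add_self

lemma aemeasurable_layer_comp (hf : AEStronglyMeasurable f μ) (l : ℝ) :
    AEMeasurable (fun x => layer l (f x)) μ :=
  (measurable_layer.comp (measurable_const.prodMk measurable_id)).comp_aemeasurable hf.aemeasurable

lemma memL1L2_layer (hf : MemL1L2 f μ) {l : ℝ} (hl : 0 < l) :
    MemL1L2 (fun x => layer l (f x)) μ :=
  hf.mono (aemeasurable_layer_comp hf.memLp.1 l).aestronglyMeasurable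
    fun x => norm_layer_le hl (f x)

lemma memL1L2_lowPart (hf : MemL1L2 f μ) (l : ℝ) : MemL1L2 (fun x => lowPart l (f x)) μ :=
  hf.mono ((measurable_lowPart.comp (measurable_const.prodMk measurable_id)).comp_aemeasurable
    hf.memLp.1.aemeasurable).aestronglyMeasurable (c := 1) fun x => by
      unfold lowPart; split_ifs <;> simp

lemma lintegral_rpow_layer [SFinite μ] (hf : AEStronglyMeasurable f μ) (hp : 0 < p) :
    ∫⁻ l in Ioi (0 : ℝ), ENNReal.ofReal (l ^ (p - 1)) * ∫⁻ x, ‖layer l (f x)‖ₑ ∂μ =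
      ENNReal.ofReal (1 / p) * ∫⁻ x, ‖f x‖ₑ ^ p ∂μ := by
  simp_rw [← lintegral_const_mul' _ _ ENNReal.ofReal_ne_top, ← lintegral_rpow_mul_enorm_layer hp]
  refine lintegral_lintegral_swap ?_
  exact (measurable_fst.pow_const _).ennreal_ofReal.aemeasurable.mul
    (measurable_layer.comp_aemeasurable
      (measurable_fst.aemeasurable.prodMk hf.aemeasurable.comp_snd)).enorm

lemma lintegral_rpow_lowPart [SFinite μ] (hg : AEStronglyMeasurable g μ) (hp0 : 0 < p)
    (hp2 : p < 2) :
    ∫⁻ l in Ioi (0 : ℝ), ENNReal.ofReal (l ^ (1 - p)) * ∫⁻ x, ‖lowPart l (g x)‖ₑ ^ 2 ∂μ =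
      ENNReal.ofReal (1 / (2 - p)) * ∫⁻ x, ‖g x‖ₑ ^ p ∂μ := by
  simp_rw [← lintegral_const_mul' _ _ ENNReal.ofReal_ne_top,
    ← lintegral_rpow_mul_enorm_lowPart_sq hp0 hp2]
  refine lintegral_lintegral_swap ?_
  exact (measurable_fst.pow_const _).ennreal_ofReal.aemeasurable.mul
    ((measurable_lowPart.comp_aemeasurable
      (measurable_fst.aemeasurable.prodMk hg.aemeasurable.comp_snd)).enorm.pow_const 2)

lemma kernelForm_smul (c d : ℂ) :
    kernelForm K μ (c • f) (d • g) = c * conj d * kernelForm K μ f g := by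
  unfold kernelForm
  rw [← integral_const_mul]
  refine integral_congr_ae (Eventually.of_forall fun q => ?_)
  simp only [Pi.smul_apply, smul_eq_mul, map_mul]
  ring

lemma le_mul_rpow_of_forall_scaling (hp : 0 < p) {V F G a b : ℝ≥0∞} (hF0 : F ≠ 0) (hF : F ≠ ∞)
    (hG0 : G ≠ 0) (hG : G ≠ ∞) (hD0 : D ≠ 0) (hD : D ≠ ∞)
    (h : ∀ m n : ℝ≥0∞, m ≠ ∞ → n ≠ ∞ →
      m * n * V ≤ (1 + D * (n ^ p * G)) * (a * (m ^ p * F)) + b * (n ^ p * G)) :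
    V ≤ (2 * a + b) * D ^ (2 / p - 1) * F ^ (1 / p) * G ^ (1 / p) := by
  have hp' : 0 ≤ 1 / p := by positivity
  have hnormalize : ∀ {E : ℝ≥0∞}, E ≠ 0 → E ≠ ∞ → ((E * D) ^ (1 / p))⁻¹ ^ p * E = D⁻¹ :=
    fun {E} hE0 hE => by
      rw [ENNReal.inv_rpow, ← ENNReal.rpow_mul, one_div_mul_cancel hp.ne', ENNReal.rpow_one,
        ENNReal.mul_inv (Or.inl hE0) (Or.inl hE), mul_right_comm, ENNReal.inv_mul_cancel hE0 hE,
        one_mul]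
  have hroot0 : ∀ {E : ℝ≥0∞}, E ≠ 0 → E ≠ ∞ → (E * D) ^ (1 / p) ≠ 0 := fun hE0 hE =>
    (ENNReal.rpow_pos (pos_iff_ne_zero.2 (mul_ne_zero hE0 hD0)) (ENNReal.mul_ne_top hE hD)).ne'
  have hroot : ∀ {E : ℝ≥0∞}, E ≠ ∞ → (E * D) ^ (1 / p) ≠ ∞ := fun hE =>
    ENNReal.rpow_ne_top_of_nonneg hp' (ENNReal.mul_ne_top hE hD)
  have hDpow : D ^ (1 / p) * D ^ (1 / p) * D⁻¹ = D ^ (2 / p - 1) := by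
    rw [← ENNReal.rpow_neg_one, ← ENNReal.rpow_add _ _ hD0 hD, ← ENNReal.rpow_add _ _ hD0 hD]
    congr 1
    ring
  have hscaled := h _ _ (ENNReal.inv_ne_top.2 (hroot0 hF0 hF))
    (ENNReal.inv_ne_top.2 (hroot0 hG0 hG))
  rw [hnormalize hF0 hF, hnormalize hG0 hG, ENNReal.mul_inv_cancel hD0 hD] at hscaled
  set m := (F * D) ^ (1 / p) with hm
  set n := (G * D) ^ (1 / p) with hn
  calc V = m * n * (m⁻¹ * n⁻¹ * V) := by
        rw [← mul_assoc, mul_mul_mul_comm, ENNReal.mul_inv_cancel (hroot0 hF0 hF) (hroot hF),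
          ENNReal.mul_inv_cancel (hroot0 hG0 hG) (hroot hG), one_mul, one_mul]
    _ ≤ m * n * ((1 + 1) * (a * D⁻¹) + b * D⁻¹) := by gcongr
    _ = (2 * a + b) * (D ^ (1 / p) * D ^ (1 / p) * D⁻¹) * F ^ (1 / p) * G ^ (1 / p) := by
        rw [hm, hn, ENNReal.mul_rpow_of_nonneg _ _ hp', ENNReal.mul_rpow_of_nonneg _ _ hp']
        ring
    _ = _ := by rw [hDpow]

namespace IsBoundedKernel

lemma integrable [SFinite μ] (hK : IsBoundedKernel K D) (hf : Integrable f μ)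
    (hg : Integrable g μ) :
    Integrable (fun q : X × X => K q.1 q.2 * f q.2 * conj (g q.1)) (μ.prod μ) := by
  have hfg : Integrable (fun q : X × X => conj (g q.1) * f q.2) (μ.prod μ) :=
    (memLp_one_iff_integrable.1 (memLp_one_iff_integrable.2 hg).star).mul_prod hf
  refine (hfg.bdd_mul (c := D.toReal) hK.measurable.aestronglyMeasurable
    (Eventually.of_forall fun q => ?_)).congr (Eventually.of_forall fun q => ?_)
  · exact toReal_enorm (K q.1 q.2) ▸ ENNReal.toReal_mono hK.ne_top (hK.enorm_le _ _)
  · simp only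
    ring

lemma kernelForm_eq_integral [SFinite μ] (hK : IsBoundedKernel K D) (hf : Integrable f μ)
    (hg : Integrable g μ) :
    kernelForm K μ f g = ∫ x, (∫ y, K x y * f y ∂μ) * conj (g x) ∂μ := by
  rw [kernelForm, integral_prod _ (hK.integrable hf hg)]
  simp only [integral_mul_const]

end IsBoundedKernel

namespace IsL2Contraction

lemma enorm_kernelForm_le_one [SFinite μ] (hK : IsL2Contraction K μ D) (hf : MemL1L2 f μ)
    (hg : MemL1L2 g μ) :
    ‖kernelForm K μ f g‖ₑ ≤ D * (∫⁻ y, ‖f y‖ₑ ∂μ) * ∫⁻ x, ‖g x‖ₑ ∂μ := by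
  calc ‖kernelForm K μ f g‖ₑ
      ≤ ∫⁻ q : X × X, D * (‖g q.1‖ₑ * ‖f q.2‖ₑ) ∂μ.prod μ := by
        refine (enorm_integral_le_lintegral_enorm _).trans (lintegral_mono fun q => ?_)
        rw [enorm_mul, enorm_mul, RCLike.enorm_conj, mul_assoc, mul_comm ‖f q.2‖ₑ]
        gcongr
        exact hK.enorm_le _ _
    _ = D * (∫⁻ y, ‖f y‖ₑ ∂μ) * ∫⁻ x, ‖g x‖ₑ ∂μ := by
        rw [lintegral_const_mul' _ _ hK.ne_top,
          lintegral_prod_mul hg.memLp.1.enorm hf.memLp.1.enorm, mul_comm (lintegral _ _), mul_assoc]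

lemma kernelForm_add_right [SFinite μ] (hK : IsL2Contraction K μ D) (hf : MemL1L2 f μ)
    (hg : MemL1L2 g μ) {g' : X → ℂ} (hg' : MemL1L2 g' μ) :
    kernelForm K μ f (g + g') = kernelForm K μ f g + kernelForm K μ f g' := by
  unfold kernelForm
  rw [← integral_add (hK.integrable hf.integrable hg.integrable)
    (hK.integrable hf.integrable hg'.integrable)]
  simp only [Pi.add_apply, map_add, mul_add]

lemma kernelForm_eq_integral_layer [SFinite μ] (hK : IsL2Contraction K μ D) (hf : MemL1L2 f μ)
    (hg : MemL1L2 g μ) :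
    kernelForm K μ f g = ∫ l in Ioi (0 : ℝ), kernelForm K μ (fun x => layer l (f x)) g := by
  unfold kernelForm
  rw [integral_integral_swap]
  · refine integral_congr_ae (Eventually.of_forall fun q => ?_)
    simp only [integral_mul_const, integral_const_mul, integral_layer]
  have hmeas : AEStronglyMeasurable (fun r : ℝ × X × X => K r.2.1 r.2.2 * layer r.1 (f r.2.2) *
      conj (g r.2.1)) ((volume.restrict (Ioi 0)).prod (μ.prod μ)) :=
    ((hK.measurable.comp measurable_snd).aemeasurable.mul (measurable_layer.comp_aemeasurable
      (measurable_fst.aemeasurable.prodMk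
        hf.memLp.1.aemeasurable.comp_snd.comp_snd))).aestronglyMeasurable.mul
      (continuous_star.comp_aestronglyMeasurable hg.memLp.1.comp_fst.comp_snd)
  refine ⟨hmeas, ?_⟩
  refine lt_of_eq_of_lt ((lintegral_prod_symm _ hmeas.enorm).trans (lintegral_congr fun q => ?_))
    (hK.integrable hf.integrable hg.integrable).2
  simp only [enorm_mul]
  rw [lintegral_mul_const' _ _ enorm_ne_top, lintegral_const_mul' _ _ enorm_ne_top,
    lintegral_enorm_layer]

lemma enorm_kernelForm_layer_le [SFinite μ] (hK : IsL2Contraction K μ D) (hf : MemL1L2 f μ)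
    (hg : MemL1L2 g μ) (hp : 1 < p) {l : ℝ} (hl : 0 < l) :
    ‖kernelForm K μ (fun x => layer l (f x)) g‖ₑ ≤
      (1 + D * ∫⁻ x, ‖g x‖ₑ ^ p ∂μ) *
        (ENNReal.ofReal (l ^ (p - 1)) * ∫⁻ y, ‖layer l (f y)‖ₑ ∂μ) +
      ENNReal.ofReal (l ^ (1 - p)) * ∫⁻ x, ‖lowPart l (g x)‖ₑ ^ 2 ∂μ := by
  set fl : X → ℂ := fun x => layer l (f x)
  set gl : X → ℂ := fun x => lowPart l (g x)
  have hfl : MemL1L2 fl μ := memL1L2_layer hf hl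
  have hgl : MemL1L2 gl μ := memL1L2_lowPart hg l
  have hinv : ENNReal.ofReal (l ^ (1 - p)) = (ENNReal.ofReal (l ^ (p - 1)))⁻¹ := by
    rw [← ENNReal.ofReal_inv_of_pos (by positivity), ← Real.rpow_neg hl.le, neg_sub]
  have hsq : ∫⁻ y, ‖fl y‖ₑ ∂μ = eLpNorm fl 2 μ ^ 2 := by
    rw [eLpNorm_two_sq]
    refine lintegral_congr fun y => ?_
    rw [enorm_layer hl]; split_ifs <;> simp
  have hlow : ‖kernelForm K μ fl gl‖ₑ ≤ ENNReal.ofReal (l ^ (p - 1)) * ∫⁻ y, ‖fl y‖ₑ ∂μ +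
      ENNReal.ofReal (l ^ (1 - p)) * ∫⁻ x, ‖gl x‖ₑ ^ 2 ∂μ := by
    rw [hsq, hinv, ← eLpNorm_two_sq]
    exact (hK.enorm_kernelForm_le _ _ hfl hgl).trans (mul_le_mul_sq_add_inv_mul_sq _ _
      (ENNReal.ofReal_pos.2 (Real.rpow_pos_of_pos hl _)).ne' ENNReal.ofReal_ne_top)
  have hhigh : ‖kernelForm K μ fl (g - gl)‖ₑ ≤
      D * (∫⁻ y, ‖fl y‖ₑ ∂μ) * (ENNReal.ofReal (l ^ (p - 1)) * ∫⁻ x, ‖g x‖ₑ ^ p ∂μ) := by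
    refine (hK.enorm_kernelForm_le_one hfl (hg.sub hgl)).trans ?_
    gcongr
    rw [← lintegral_const_mul' _ _ ENNReal.ofReal_ne_top]
    exact lintegral_mono fun x => enorm_sub_lowPart_le hl hp (g x)
  calc ‖kernelForm K μ fl g‖ₑ = ‖kernelForm K μ fl gl + kernelForm K μ fl (g - gl)‖ₑ := by
        rw [← hK.kernelForm_add_right hfl hgl (hg.sub hgl), add_sub_cancel]
    _ ≤ _ := (enorm_add_le _ _).trans (add_le_add hlow hhigh)
    _ = _ := by ring

lemma enorm_kernelForm_le_lintegral_rpow [SFinite μ] (hK : IsL2Contraction K μ D)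
    (hf : MemL1L2 f μ) (hg : MemL1L2 g μ) (hp1 : 1 < p) (hp2 : p < 2) :
    ‖kernelForm K μ f g‖ₑ ≤
      (1 + D * ∫⁻ x, ‖g x‖ₑ ^ p ∂μ) * (ENNReal.ofReal (1 / p) * ∫⁻ y, ‖f y‖ₑ ^ p ∂μ) +
      ENNReal.ofReal (1 / (2 - p)) * ∫⁻ x, ‖g x‖ₑ ^ p ∂μ := by
  have hp0 : 0 < p := one_pos.trans hp1
  have hmeas : AEMeasurable (fun l : ℝ => ENNReal.ofReal (l ^ (p - 1)) *
      ∫⁻ y, ‖layer l (f y)‖ₑ ∂μ) (volume.restrict (Ioi 0)) :=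
    (measurable_id.pow_const _).ennreal_ofReal.aemeasurable.mul
      (measurable_layer.comp_aemeasurable (measurable_fst.aemeasurable.prodMk
        hf.memLp.1.aemeasurable.comp_snd)).enorm.lintegral_prod_right'
  have hne_top : 1 + D * ∫⁻ x, ‖g x‖ₑ ^ p ∂μ ≠ ∞ := ENNReal.add_ne_top.2 ⟨ENNReal.one_ne_top,
    ENNReal.mul_ne_top hK.ne_top (hg.lintegral_rpow_ne_top hp1.le hp2.le)⟩
  rw [hK.kernelForm_eq_integral_layer hf hg, ← lintegral_rpow_layer hf.memLp.1 hp0,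
    ← lintegral_rpow_lowPart hg.memLp.1 hp0 hp2, ← lintegral_const_mul' _ _ hne_top,
    ← lintegral_add_left' (hmeas.const_mul _)]
  exact (enorm_integral_le_lintegral_enorm _).trans (setLIntegral_mono' measurableSet_Ioi
    fun l hl => hK.enorm_kernelForm_layer_le hf hg hp1 hl)

lemma mul_enorm_kernelForm_le [SFinite μ] (hK : IsL2Contraction K μ D) (hf : MemL1L2 f μ)
    (hg : MemL1L2 g μ) (hp1 : 1 < p) (hp2 : p < 2) {m n : ℝ≥0∞} (hm : m ≠ ∞) (hn : n ≠ ∞) :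
    m * n * ‖kernelForm K μ f g‖ₑ ≤
      (1 + D * (n ^ p * ∫⁻ x, ‖g x‖ₑ ^ p ∂μ)) *
        (ENNReal.ofReal (1 / p) * (m ^ p * ∫⁻ y, ‖f y‖ₑ ^ p ∂μ)) +
      ENNReal.ofReal (1 / (2 - p)) * (n ^ p * ∫⁻ x, ‖g x‖ₑ ^ p ∂μ) := by
  have hp0 : 0 ≤ p := by linarith
  have hscale : ∀ {r : ℝ≥0∞}, r ≠ ∞ → ‖(r.toReal : ℂ)‖ₑ = r := fun {r} hr => by
    rw [← ofReal_norm, Complex.norm_real, Real.norm_of_nonneg ENNReal.toReal_nonneg,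
      ENNReal.ofReal_toReal hr]
  have hint : ∀ {r : ℝ≥0∞} {h : X → ℂ}, r ≠ ∞ →
      ∫⁻ x, ‖((r.toReal : ℂ) • h) x‖ₑ ^ p ∂μ = r ^ p * ∫⁻ x, ‖h x‖ₑ ^ p ∂μ := fun {r h} hr => by
    rw [← lintegral_const_mul' _ _ (ENNReal.rpow_ne_top_of_nonneg hp0 hr)]
    refine lintegral_congr fun x => ?_
    rw [Pi.smul_apply, smul_eq_mul, enorm_mul, hscale hr, ENNReal.mul_rpow_of_nonneg _ _ hp0]
  have h := hK.enorm_kernelForm_le_lintegral_rpow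
    (⟨hf.integrable.smul (m.toReal : ℂ), hf.memLp.const_smul _⟩ : MemL1L2 ((m.toReal : ℂ) • f) μ)
    (⟨hg.integrable.smul (n.toReal : ℂ), hg.memLp.const_smul _⟩ : MemL1L2 ((n.toReal : ℂ) • g) μ)
    hp1 hp2
  rwa [kernelForm_smul, enorm_mul, enorm_mul, RCLike.enorm_conj, hscale hm, hscale hn, hint hm,
    hint hn] at h

theorem enorm_kernelForm_le_rpow [SFinite μ] (hK : IsL2Contraction K μ D) (hD : D ≠ 0)
    (hf : MemL1L2 f μ) (hg : MemL1L2 g μ) (hp1 : 1 < p) (hp2 : p < 2) :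
    ‖kernelForm K μ f g‖ₑ ≤ ENNReal.ofReal (2 / p + 1 / (2 - p)) * D ^ (2 / p - 1) *
      (∫⁻ x, ‖f x‖ₑ ^ p ∂μ) ^ (1 / p) * (∫⁻ x, ‖g x‖ₑ ^ p ∂μ) ^ (1 / p) := by
  have hp0 : 0 < p := one_pos.trans hp1
  have hle_one := hK.enorm_kernelForm_le_one hf hg
  rcases eq_or_ne (∫⁻ x, ‖f x‖ₑ ^ p ∂μ) 0 with hF0 | hF0
  · rw [lintegral_enorm_eq_zero_of_rpow hf.memLp.1 hp0 hF0, mul_zero, zero_mul] at hle_one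
    exact hle_one.trans zero_le
  rcases eq_or_ne (∫⁻ x, ‖g x‖ₑ ^ p ∂μ) 0 with hG0 | hG0
  · rw [lintegral_enorm_eq_zero_of_rpow hg.memLp.1 hp0 hG0, mul_zero] at hle_one
    exact hle_one.trans zero_le
  have hconst : ENNReal.ofReal (2 / p + 1 / (2 - p)) =
      2 * ENNReal.ofReal (1 / p) + ENNReal.ofReal (1 / (2 - p)) := by
    rw [← ENNReal.ofReal_ofNat 2, ← ENNReal.ofReal_mul zero_le_two, mul_one_div,
      ← ENNReal.ofReal_add (by positivity) (one_div_nonneg.2 (by linarith))]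
  rw [hconst]
  exact le_mul_rpow_of_forall_scaling hp0 hF0 (hf.lintegral_rpow_ne_top hp1.le hp2.le) hG0
    (hg.lintegral_rpow_ne_top hp1.le hp2.le) hD hK.ne_top
    fun m n hm hn => hK.mul_enorm_kernelForm_le hf hg hp1 hp2 hm hn

end IsL2Contraction

end Interpolation

section HardyLittlewoodSobolev

variable {α : ℝ} {f g : ℝ → ℝ≥0∞}

/-- The Riesz kernel `|t| ^ (-α)` on the line. -/
noncomputable def rieszKernel (α t : ℝ) : ℝ≥0∞ := ENNReal.ofReal (|t| ^ (-α))

@[fun_prop] lemma measurable_rieszKernel (α : ℝ) : Measurable (rieszKernel α) :=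
  (measurable_norm.pow_const (-α)).ennreal_ofReal

lemma rieszKernel_sub_comm (α t s : ℝ) : rieszKernel α (t - s) = rieszKernel α (s - t) := by
  simp only [rieszKernel, abs_sub_comm]

lemma lintegral_comp_abs (h : ℝ → ℝ≥0∞) : ∫⁻ t : ℝ, h |t| = 2 * ∫⁻ t in Ioi (0 : ℝ), h t := by
  have hpos : ∫⁻ t in Ioi (0 : ℝ), h |t| = ∫⁻ t in Ioi (0 : ℝ), h t :=
    setLIntegral_congr_fun measurableSet_Ioi fun t ht => by simp only [abs_of_pos (mem_Ioi.1 ht)]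
  have hneg : ∫⁻ t in Iic (0 : ℝ), h |t| = ∫⁻ t in Ioi (0 : ℝ), h t := by
    have hreflect := (Measure.measurePreserving_neg volume).setLIntegral_comp_preimage_emb
      (MeasurableEquiv.neg ℝ).measurableEmbedding (fun t => h |t|) (Iio 0)
    rw [setLIntegral_congr Iio_ae_eq_Iic.symm, ← hpos, ← hreflect]
    simp
  rw [← lintegral_add_compl _ (measurableSet_Ioi (a := (0 : ℝ))), compl_Ioi, hpos, hneg, two_mul]

lemma lintegral_rieszKernel_near (hα : α < 1) {R : ℝ} (hR : 0 ≤ R) :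
    ∫⁻ t, (if |t| < R then rieszKernel α t else 0) =
      2 * ENNReal.ofReal (R ^ (1 - α) / (1 - α)) := by
  unfold rieszKernel
  rw [lintegral_comp_abs (fun t => if t < R then ENNReal.ofReal (t ^ (-α)) else 0),
    lintegral_Ioi_ite_rpow (by linarith) hR, neg_add_eq_sub]

lemma lintegral_rieszKernel_far (hα : 0 < α) {R : ℝ} (hR : 0 < R) :
    ∫⁻ t, (if |t| < R then 0 else rieszKernel α t) ^ (2 / α) = 2 * ENNReal.ofReal R⁻¹ := by
  have htail : ∀ t ∈ Ioi (0 : ℝ), (if t < R then 0 else ENNReal.ofReal (t ^ (-α))) ^ (2 / α) =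
      (Ici R).indicator (fun t => ENNReal.ofReal (t ^ (-2 : ℝ))) t := fun t ht => by
    have ht : 0 < t := ht
    by_cases h : t < R
    · rw [if_pos h, ENNReal.zero_rpow_of_pos (by positivity),
        indicator_of_notMem (notMem_Ici.2 h)]
    · rw [if_neg h, indicator_of_mem (mem_Ici.2 (not_lt.1 h)),
        ENNReal.ofReal_rpow_of_nonneg (by positivity) (by positivity), ← Real.rpow_mul ht.le]
      congr 2
      field_simp
  unfold rieszKernel
  rw [lintegral_comp_abs (fun t => (if t < R then 0 else ENNReal.ofReal (t ^ (-α))) ^ (2 / α)),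
    setLIntegral_congr_fun measurableSet_Ioi htail, setLIntegral_indicator measurableSet_Ici,
    inter_eq_left.2 (Ici_subset_Ioi.2 hR), setLIntegral_congr Ioi_ae_eq_Ici.symm,
    ← ofReal_integral_eq_lintegral_ofReal (integrableOn_Ioi_rpow_of_lt (by norm_num) hR),
    integral_Ioi_rpow_of_lt (by norm_num) hR]
  · norm_num [Real.rpow_neg_one]
  · filter_upwards [ae_restrict_mem measurableSet_Ioi] with t ht
    exact Real.rpow_nonneg (hR.trans ht).le _

lemma lintegral_rieszKernel_mul_min_le (hα : 0 < α) (hα1 : α < 1) (hg : Measurable g)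
    (hg1 : ∫⁻ t, g t ^ (2 / (2 - α)) ≤ 1) (s : ℝ) (c : ℝ≥0∞) {R : ℝ} (hR : 0 < R) :
    ∫⁻ t, rieszKernel α (t - s) * min (g t) c ≤
      2 * ENNReal.ofReal (R ^ (1 - α) / (1 - α)) * c + (2 * ENNReal.ofReal R⁻¹) ^ (α / 2) := by
  have h2α : 0 < 2 - α := by linarith
  set near : ℝ → ℝ≥0∞ := fun t => if |t| < R then rieszKernel α t else 0 with hnear
  set far : ℝ → ℝ≥0∞ := fun t => if |t| < R then 0 else rieszKernel α t with hfar
  have hset : MeasurableSet {t : ℝ | |t| < R} := measurableSet_lt measurable_norm measurable_const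
  have hnear_meas : Measurable fun t => near (t - s) :=
    (Measurable.ite hset (measurable_rieszKernel α) measurable_const).comp
      (measurable_id.sub_const s)
  have hfar_meas : Measurable fun t => far (t - s) :=
    (Measurable.ite hset measurable_const (measurable_rieszKernel α)).comp
      (measurable_id.sub_const s)
  have hconj : (2 / α).HolderConjugate (2 / (2 - α)) := by
    rw [Real.holderConjugate_iff]
    refine ⟨by rw [lt_div_iff₀ hα]; linarith, ?_⟩
    field_simp
    ring
  calc ∫⁻ t, rieszKernel α (t - s) * min (g t) c
      ≤ ∫⁻ t, (near (t - s) * c + far (t - s) * g t) := by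
        refine lintegral_mono fun t => ?_
        simp only [hnear, hfar]
        split_ifs
        · rw [zero_mul, add_zero]; gcongr; exact min_le_right _ _
        · rw [zero_mul, zero_add]; gcongr; exact min_le_left _ _
    _ = (∫⁻ t, near (t - s)) * c + ∫⁻ t, far (t - s) * g t := by
        rw [lintegral_add_left (hnear_meas.mul_const _), lintegral_mul_const _ hnear_meas]
    _ ≤ (∫⁻ t, near (t - s)) * c + (∫⁻ t, far (t - s) ^ (2 / α)) ^ (1 / (2 / α)) *
          (∫⁻ t, g t ^ (2 / (2 - α))) ^ (1 / (2 / (2 - α))) := by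
        gcongr
        exact ENNReal.lintegral_mul_le_Lp_mul_Lq volume hconj hfar_meas.aemeasurable
          hg.aemeasurable
    _ ≤ (∫⁻ t, near (t - s)) * c + (∫⁻ t, far (t - s) ^ (2 / α)) ^ (1 / (2 / α)) * 1 := by
        gcongr
        exact ENNReal.rpow_le_one hg1 (by positivity)
    _ = _ := by
        rw [lintegral_sub_right_eq_self near s,
          lintegral_sub_right_eq_self (fun t => far t ^ (2 / α)) s,
          lintegral_rieszKernel_near hα1 hR.le, lintegral_rieszKernel_far hα hR, one_div_div,
          mul_one]

/-- The constant in the diagonal Hardy–Littlewood–Sobolev inequality `lintegral_rieszKernel_le`. -/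
noncomputable def hlsConst (α : ℝ) : ℝ≥0∞ := ENNReal.ofReal (2 / (1 - α) + 2 ^ (α / 2))

lemma mul_near_add_far_eq (hα1 : α < 1) {l : ℝ} (hl : 0 < l) :
    l * (2 * ((l ^ (-(2 / (2 - α)))) ^ (1 - α) / (1 - α)) * l +
        (2 * (l ^ (-(2 / (2 - α))))⁻¹) ^ (α / 2)) =
      (2 / (1 - α) + 2 ^ (α / 2)) * l ^ (2 / (2 - α)) := by
  have h2α : 2 - α ≠ 0 := by linarith
  set p := 2 / (2 - α) with hp
  have hnear : l * ((l ^ (-p)) ^ (1 - α) * l) = l ^ p := by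
    rw [← Real.rpow_mul hl.le, ← Real.rpow_add_one hl.ne', mul_comm, ← Real.rpow_add_one hl.ne']
    congr 1
    rw [hp]
    field_simp
    ring
  have hfar : l * ((l ^ (-p))⁻¹) ^ (α / 2) = l ^ p := by
    rw [← Real.rpow_neg hl.le, neg_neg, ← Real.rpow_mul hl.le, mul_comm,
      ← Real.rpow_add_one hl.ne']
    congr 1
    rw [hp]
    field_simp
    ring
  calc _ = 2 / (1 - α) * (l * ((l ^ (-p)) ^ (1 - α) * l)) +
          2 ^ (α / 2) * (l * ((l ^ (-p))⁻¹) ^ (α / 2)) := by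
        rw [Real.mul_rpow zero_le_two (by positivity)]
        ring
    _ = _ := by rw [hnear, hfar, add_mul]

-- The radius `R = c ^ (-2 / (2 - α))` balances the near and the far part of the kernel.
lemma mul_lintegral_rieszKernel_mul_min_le (hα : 0 < α) (hα1 : α < 1) (hg : Measurable g)
    (hg1 : ∫⁻ t, g t ^ (2 / (2 - α)) ≤ 1) (s : ℝ) (c : ℝ≥0∞) :
    c * ∫⁻ t, rieszKernel α (t - s) * min (g t) c ≤ hlsConst α * c ^ (2 / (2 - α)) := by
  have : 0 < 1 - α := by linarith
  have : 0 < 2 - α := by linarith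
  rcases eq_or_ne c 0 with rfl | hc0
  · rw [zero_mul]; exact zero_le
  rcases eq_or_ne c ∞ with rfl | hc
  · rw [hlsConst, ENNReal.top_rpow_of_pos (by positivity),
      ENNReal.mul_top (ENNReal.ofReal_pos.2 (by positivity)).ne']
    exact le_top
  obtain ⟨l, hl, rfl⟩ : ∃ l : ℝ, 0 < l ∧ c = ENNReal.ofReal l :=
    ⟨c.toReal, ENNReal.toReal_pos hc0 hc, (ENNReal.ofReal_toReal hc).symm⟩
  set R := l ^ (-(2 / (2 - α))) with hR
  calc ENNReal.ofReal l * ∫⁻ t, rieszKernel α (t - s) * min (g t) (ENNReal.ofReal l)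
      ≤ ENNReal.ofReal l * (2 * ENNReal.ofReal (R ^ (1 - α) / (1 - α)) *
          ENNReal.ofReal l + (2 * ENNReal.ofReal R⁻¹) ^ (α / 2)) := by
        gcongr
        exact lintegral_rieszKernel_mul_min_le hα hα1 hg hg1 s _ (Real.rpow_pos_of_pos hl _)
    _ = ENNReal.ofReal (l * (2 * (R ^ (1 - α) / (1 - α)) * l + (2 * R⁻¹) ^ (α / 2))) := by
        rw [← ENNReal.ofReal_ofNat 2, ← ENNReal.ofReal_mul zero_le_two,
          ← ENNReal.ofReal_mul zero_le_two, ENNReal.ofReal_rpow_of_nonneg (by positivity)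
          (by positivity), ← ENNReal.ofReal_mul (by positivity),
          ← ENNReal.ofReal_add (by positivity) (by positivity), ← ENNReal.ofReal_mul hl.le]
    _ = hlsConst α * ENNReal.ofReal l ^ (2 / (2 - α)) := by
        rw [hR, mul_near_add_far_eq hα1 hl, ENNReal.ofReal_mul (by positivity),
          ENNReal.ofReal_rpow_of_pos hl, hlsConst]

lemma lintegral_rieszKernel_mul_min_le_hlsConst (hα : 0 < α) (hα1 : α < 1) (hf : Measurable f)
    (hg : Measurable g) (hf1 : ∫⁻ t, f t ^ (2 / (2 - α)) ≤ 1)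
    (hg1 : ∫⁻ t, g t ^ (2 / (2 - α)) ≤ 1) :
    ∫⁻ s, ∫⁻ t, f s * (rieszKernel α (t - s) * min (g t) (f s)) ≤ hlsConst α := by
  calc ∫⁻ s, ∫⁻ t, f s * (rieszKernel α (t - s) * min (g t) (f s))
      ≤ ∫⁻ s, hlsConst α * f s ^ (2 / (2 - α)) := by
        refine lintegral_mono fun s => ?_
        rw [lintegral_const_mul _ (by fun_prop)]
        exact mul_lintegral_rieszKernel_mul_min_le hα hα1 hg hg1 s (f s)
    _ ≤ hlsConst α := by
        rw [lintegral_const_mul _ (hf.pow_const _)]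
        exact mul_le_of_le_one_right' hf1

lemma lintegral_rieszKernel_le_of_normalized (hα : 0 < α) (hα1 : α < 1) (hf : Measurable f)
    (hg : Measurable g) (hf1 : ∫⁻ t, f t ^ (2 / (2 - α)) ≤ 1)
    (hg1 : ∫⁻ t, g t ^ (2 / (2 - α)) ≤ 1) :
    ∫⁻ t, ∫⁻ s, rieszKernel α (t - s) * f s * g t ≤ 2 * hlsConst α := by
  have hmin : ∀ u v : ℝ≥0∞, u * v ≤ u * min v u + v * min u v := fun u v => by
    rcases le_total u v with h | h
    · rw [min_eq_left h, mul_comm u v]; exact le_add_self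
    · rw [min_eq_left h]; exact le_self_add
  have hmeas : Measurable fun q : ℝ × ℝ =>
      f q.2 * (rieszKernel α (q.1 - q.2) * min (g q.1) (f q.2)) := by fun_prop
  have hswap := lintegral_lintegral_swap (μ := volume) (ν := volume)
    (f := fun s t => f s * (rieszKernel α (t - s) * min (g t) (f s)))
    (hmeas.comp measurable_swap).aemeasurable
  calc ∫⁻ t, ∫⁻ s, rieszKernel α (t - s) * f s * g t
      ≤ ∫⁻ t, ∫⁻ s, (f s * (rieszKernel α (t - s) * min (g t) (f s)) +
          g t * (rieszKernel α (s - t) * min (f s) (g t))) := by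
        refine lintegral_mono fun t => lintegral_mono fun s => ?_
        calc _ = rieszKernel α (t - s) * (f s * g t) := mul_assoc _ _ _
          _ ≤ rieszKernel α (t - s) * (f s * min (g t) (f s) + g t * min (f s) (g t)) := by
            gcongr; exact hmin _ _
          _ = _ := by rw [rieszKernel_sub_comm α s t]; ring
    _ = (∫⁻ s, ∫⁻ t, f s * (rieszKernel α (t - s) * min (g t) (f s))) +
        ∫⁻ t, ∫⁻ s, g t * (rieszKernel α (s - t) * min (f s) (g t)) := by
        rw [hswap, ← lintegral_add_left hmeas.lintegral_prod_right']
        refine lintegral_congr fun t => ?_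
        exact lintegral_add_left (hmeas.comp (f := fun s : ℝ => (t, s)) (by fun_prop)) _
    _ ≤ 2 * hlsConst α := by
        rw [two_mul]
        exact add_le_add (lintegral_rieszKernel_mul_min_le_hlsConst hα hα1 hf hg hf1 hg1)
          (lintegral_rieszKernel_mul_min_le_hlsConst hα hα1 hg hf hg1 hf1)

lemma lintegral_inv_mul_rpow_le_one {p : ℝ} (hp : 0 < p) {Z : ℝ≥0∞}
    (hZ : Z = (∫⁻ s, f s ^ p) ^ (1 / p)) (hZ0 : Z ≠ 0) :
    ∫⁻ s, (Z⁻¹ * f s) ^ p ≤ 1 := by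
  have hZp : ∫⁻ s, f s ^ p = Z ^ p := by
    rw [hZ, ← ENNReal.rpow_mul, one_div_mul_cancel hp.ne', ENNReal.rpow_one]
  simp_rw [ENNReal.mul_rpow_of_nonneg _ _ hp.le]
  rw [lintegral_const_mul' _ _ (ENNReal.rpow_ne_top_of_nonneg hp.le (ENNReal.inv_ne_top.2 hZ0)),
    hZp, ENNReal.inv_rpow]
  exact ENNReal.inv_mul_le_one _

lemma ae_eq_zero_of_lintegral_rpow_root {p : ℝ} (hp : 0 < p) (hf : Measurable f)
    (h : (∫⁻ s, f s ^ p) ^ (1 / p) = 0) : f =ᵐ[volume] 0 := by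
  rw [ENNReal.rpow_eq_zero_iff_of_pos (by positivity), lintegral_eq_zero_iff (hf.pow_const p)] at h
  filter_upwards [h] with x hx using (ENNReal.rpow_eq_zero_iff_of_pos hp).1 hx

theorem lintegral_rieszKernel_le (hα : 0 < α) (hα1 : α < 1) (hf : Measurable f)
    (hg : Measurable g) :
    ∫⁻ t, ∫⁻ s, rieszKernel α (t - s) * f s * g t ≤
      2 * hlsConst α * (∫⁻ s, f s ^ (2 / (2 - α))) ^ (1 / (2 / (2 - α))) *
        (∫⁻ t, g t ^ (2 / (2 - α))) ^ (1 / (2 / (2 - α))) := by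
  have : 0 < 1 - α := by linarith
  have : 0 < 2 - α := by linarith
  have hC0 : 2 * hlsConst α ≠ 0 :=
    mul_ne_zero two_ne_zero (ENNReal.ofReal_pos.2 (by positivity)).ne'
  set p := 2 / (2 - α)
  have hp0 : 0 < p := by positivity
  set N := (∫⁻ s, f s ^ p) ^ (1 / p) with hN
  set M := (∫⁻ s, g s ^ p) ^ (1 / p) with hM
  rcases eq_or_ne N 0 with hN0 | hN0
  · have hzero := ae_eq_zero_of_lintegral_rpow_root hp0 hf hN0
    refine (lintegral_eq_zero_of_ae_eq_zero (Eventually.of_forall fun t => ?_)).trans_le zero_le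
    refine lintegral_eq_zero_of_ae_eq_zero ?_
    filter_upwards [hzero] with s hs
    simp [hs]
  rcases eq_or_ne M 0 with hM0 | hM0
  · have hzero := ae_eq_zero_of_lintegral_rpow_root hp0 hg hM0
    refine (lintegral_eq_zero_of_ae_eq_zero ?_).trans_le zero_le
    filter_upwards [hzero] with t ht
    simp [ht]
  rcases eq_or_ne N ∞ with hN_top | hN_top
  · rw [hN_top, ENNReal.mul_top hC0, ENNReal.top_mul hM0]; exact le_top
  rcases eq_or_ne M ∞ with hM_top | hM_top
  · rw [hM_top, ENNReal.mul_top (mul_ne_zero hC0 hN0)]; exact le_top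
  have hNM : N * M ≠ ∞ := ENNReal.mul_ne_top hN_top hM_top
  calc ∫⁻ t, ∫⁻ s, rieszKernel α (t - s) * f s * g t
      = ∫⁻ t, ∫⁻ s, N * M * (rieszKernel α (t - s) * (N⁻¹ * f s) * (M⁻¹ * g t)) := by
        refine lintegral_congr fun t => lintegral_congr fun s => ?_
        calc _ = (N * N⁻¹) * (M * M⁻¹) * (rieszKernel α (t - s) * f s * g t) := by
              rw [ENNReal.mul_inv_cancel hN0 hN_top, ENNReal.mul_inv_cancel hM0 hM_top, one_mul,
                one_mul]
          _ = _ := by ring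
    _ = N * M * ∫⁻ t, ∫⁻ s, rieszKernel α (t - s) * (N⁻¹ * f s) * (M⁻¹ * g t) := by
        simp_rw [lintegral_const_mul' _ _ hNM]
    _ ≤ N * M * (2 * hlsConst α) := by
        gcongr
        exact lintegral_rieszKernel_le_of_normalized hα hα1 (hf.const_mul _) (hg.const_mul _)
          (lintegral_inv_mul_rpow_le_one hp0 hN hN0)
          (lintegral_inv_mul_rpow_le_one hp0 hM hM0)
    _ = _ := by ring

end HardyLittlewoodSobolev

section FlowForm

variable {X : Type*} [MeasurableSpace X] {μ : Measure X} {k : ℝ → X → X → ℂ} {B σ : ℝ}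
  {f g u v : X → ℂ}

lemma lintegral_enorm_mul_conj_le (hu : AEStronglyMeasurable u μ)
    (hv : AEStronglyMeasurable v μ) :
    ∫⁻ x, ‖u x * conj (v x)‖ₑ ∂μ ≤ eLpNorm u 2 μ * eLpNorm v 2 μ := by
  have hstar : eLpNorm (star v) 2 μ = eLpNorm v 2 μ := eLpNorm_star
  rw [← hstar]
  exact (eLpNorm_one_eq_lintegral_enorm (f := u • star v)).symm.trans_le
    (eLpNorm_smul_le_mul_eLpNorm hv.star hu)

/-- The sesquilinear form `⟨U_t f, g⟩` of the flow. -/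
noncomputable def flowForm (k : ℝ → X → X → ℂ) (μ : Measure X) (t : ℝ) (f g : X → ℂ) : ℂ :=
  ∫ x, flow k μ t f x * conj (g x) ∂μ

/-- The constant of the dispersive estimate from `L^p` to its dual, for a kernel of size
`B |t| ^ (-σ)`. -/
noncomputable def decayConst (B p : ℝ) : ℝ≥0∞ :=
  ENNReal.ofReal ((2 / p + 1 / (2 - p)) * max B 1 ^ (2 / p - 1))

namespace IsDispersiveGroup

lemma eLpNorm_flow (hk : IsDispersiveGroup k μ B σ) (t : ℝ) (hf : MemL1L2 f μ) :
    eLpNorm (flow k μ t f) 2 μ = eLpNorm f 2 μ := by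
  refine eLpNorm_two_eq_of_integral_mul_conj_eq (hk.memLp_flow t f hf) hf.memLp ?_
  rw [hk.pairingInvariant f f hf hf t t, sub_self, flow_zero]

lemma conj_flowForm (hk : IsDispersiveGroup k μ B σ) (t : ℝ) (hf : MemL1L2 f μ)
    (hg : MemL1L2 g μ) : conj (flowForm k μ t f g) = flowForm k μ (-t) g f := by
  have h := hk.pairingInvariant g f hg hf 0 t
  rw [flow_zero, zero_sub] at h
  rw [flowForm, flowForm, ← h, ← integral_conj]
  simp only [map_mul, Complex.conj_conj, mul_comm]

lemma lintegral_enorm_flow_mul_conj_flow_le (hk : IsDispersiveGroup k μ B σ) (t s : ℝ)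
    (hf : MemL1L2 f μ) (hg : MemL1L2 g μ) :
    ∫⁻ x, ‖flow k μ t f x * conj (flow k μ s g x)‖ₑ ∂μ ≤ eLpNorm f 2 μ * eLpNorm g 2 μ := by
  rw [← hk.eLpNorm_flow t hf, ← hk.eLpNorm_flow s hg]
  exact lintegral_enorm_mul_conj_le (hk.memLp_flow t f hf).1 (hk.memLp_flow s g hg).1

lemma enorm_flowForm_le (hk : IsDispersiveGroup k μ B σ) (t : ℝ) (hf : MemL1L2 f μ)
    (hg : MemL1L2 g μ) : ‖flowForm k μ t f g‖ₑ ≤ eLpNorm f 2 μ * eLpNorm g 2 μ := by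
  refine (enorm_integral_le_lintegral_enorm _).trans ?_
  simpa only [flow_zero] using hk.lintegral_enorm_flow_mul_conj_flow_le t 0 hf hg

lemma isBoundedKernel (hk : IsDispersiveGroup k μ B σ) (t : ℝ) :
    IsBoundedKernel (k t) (ENNReal.ofReal (max B 1 * |t| ^ (-σ))) where
  measurable := hk.measurable.comp (f := fun q : X × X => (t, q.1, q.2)) (by fun_prop)
  ne_top := ENNReal.ofReal_ne_top
  enorm_le x y := by
    rw [← ofReal_norm]
    refine ENNReal.ofReal_le_ofReal ((hk.norm_le t x y).trans ?_)
    gcongr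
    exact le_max_left _ _

variable [SFinite μ]

lemma kernelForm_eq_flowForm (hk : IsDispersiveGroup k μ B σ) {t : ℝ} (ht : t ≠ 0)
    (hf : Integrable f μ) (hg : Integrable g μ) : kernelForm (k t) μ f g = flowForm k μ t f g := by
  rw [(hk.isBoundedKernel t).kernelForm_eq_integral hf hg, flowForm, flow_of_ne_zero ht]

lemma isL2Contraction (hk : IsDispersiveGroup k μ B σ) {t : ℝ} (ht : t ≠ 0) :
    IsL2Contraction (k t) μ (ENNReal.ofReal (max B 1 * |t| ^ (-σ))) where
  toIsBoundedKernel := hk.isBoundedKernel t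
  enorm_kernelForm_le f g hf hg := by
    rw [hk.kernelForm_eq_flowForm ht hf.integrable hg.integrable]
    exact hk.enorm_flowForm_le t hf hg

lemma enorm_flowForm_le_rieszKernel (hk : IsDispersiveGroup k μ B σ) {t p : ℝ} (ht : t ≠ 0)
    (hp1 : 1 < p) (hp2 : p < 2) (hf : MemL1L2 f μ) (hg : MemL1L2 g μ) :
    ‖flowForm k μ t f g‖ₑ ≤ decayConst B p * rieszKernel (σ * (2 / p - 1)) t *
      (∫⁻ x, ‖f x‖ₑ ^ p ∂μ) ^ (1 / p) * (∫⁻ x, ‖g x‖ₑ ^ p ∂μ) ^ (1 / p) := by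
  have : 0 < 2 - p := by linarith
  have hB : 0 < max B 1 := zero_lt_one.trans_le (le_max_right _ _)
  have hD : 0 < max B 1 * |t| ^ (-σ) := mul_pos hB (Real.rpow_pos_of_pos (abs_pos.2 ht) _)
  have hconst : ENNReal.ofReal (2 / p + 1 / (2 - p)) *
      ENNReal.ofReal (max B 1 * |t| ^ (-σ)) ^ (2 / p - 1) =
        decayConst B p * rieszKernel (σ * (2 / p - 1)) t := by
    rw [decayConst, rieszKernel, ENNReal.ofReal_rpow_of_pos hD,
      Real.mul_rpow hB.le (by positivity), ← Real.rpow_mul (abs_nonneg t), neg_mul,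
      ← ENNReal.ofReal_mul (by positivity), ← ENNReal.ofReal_mul (by positivity), mul_assoc]
  rw [← hk.kernelForm_eq_flowForm ht hf.integrable hg.integrable, ← hconst]
  exact (hk.isL2Contraction ht).enorm_kernelForm_le_rpow (ENNReal.ofReal_pos.2 hD).ne' hf hg
    hp1 hp2

end IsDispersiveGroup

end FlowForm

section SpaceTime

variable {X : Type*} [MeasurableSpace X] {μ : Measure X} {k : ℝ → X → X → ℂ} {B σ q r : ℝ}
  {F G : ℝ → X → ℂ}

/-- The mixed space-time norm of `L^q_t L^r(μ)`, with values in `[0, ∞]`. -/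
noncomputable def mixedENorm (μ : Measure X) (q r : ℝ) (u : ℝ → X → ℂ) : ℝ≥0∞ :=
  (∫⁻ t, (∫⁻ x, ‖u t x‖ₑ ^ r ∂μ) ^ (q / r)) ^ (1 / q)

/-- The pairs of exponents, away from the endpoints, that scale like a dispersive estimate with
decay rate `|t| ^ (-σ)`. -/
structure IsAdmissible (σ q r : ℝ) : Prop where
  two_lt_time : 2 < q
  two_lt_space : 2 < r
  scaling : 2 / q = 2 * σ * (1 / 2 - 1 / r)

/-- Space-time functions dominated by the product of two functions in `L¹ ∩ L²`, one of time and
one of space: the class of forcing terms for which all pairings converge absolutely. -/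
structure IsTestFunction (F : ℝ → X → ℂ) (μ : Measure X) : Prop where
  measurable : Measurable fun p : ℝ × X => F p.1 p.2
  exists_norm_le : ∃ (h : ℝ → ℂ) (ω : X → ℂ), MemL1L2 h volume ∧ MemL1L2 ω μ ∧
    ∀ t x, ‖F t x‖ ≤ ‖h t‖ * ‖ω x‖

/-- The constant of the bilinear space-time estimate with exponents dual to `(q, r)`. -/
noncomputable def strichartzConst (B q r : ℝ) : ℝ≥0∞ :=
  decayConst B (r / (r - 1)) * (2 * hlsConst (2 / q))

lemma strichartzConst_ne_top (B q r : ℝ) : strichartzConst B q r ≠ ∞ := by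
  simp only [strichartzConst, decayConst, hlsConst]
  finiteness

section Measurability

variable [SFinite μ]

lemma measurable_eLpNorm_two (hF : Measurable fun p : ℝ × X => F p.1 p.2) :
    Measurable fun s => eLpNorm (F s) 2 μ := by
  simp_rw [eLpNorm_two_eq_lintegral]
  exact (Measurable.lintegral_prod_right' (hF.enorm.pow_const _)).pow_const _

lemma measurable_lintegral_enorm_rpow (hF : Measurable fun p : ℝ × X => F p.1 p.2) (p : ℝ) :
    Measurable fun s => ∫⁻ x, ‖F s x‖ₑ ^ p ∂μ :=
  Measurable.lintegral_prod_right' (hF.enorm.pow_const p)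

lemma IsDispersiveKernel.measurable_flow (hk : IsDispersiveKernel k B σ)
    (hF : Measurable fun p : ℝ × X => F p.1 p.2) :
    Measurable fun p : ℝ × ℝ × X => flow k μ p.1 (F p.2.1) p.2.2 := by
  have hint : Measurable fun p : (ℝ × ℝ × X) × X => k p.1.1 p.1.2.2 p.2 * F p.1.2.1 p.2 :=
    (hk.measurable.comp (f := fun p : (ℝ × ℝ × X) × X => (p.1.1, p.1.2.2, p.2))
      (by fun_prop)).mul (hF.comp (f := fun p : (ℝ × ℝ × X) × X => (p.1.2.1, p.2)) (by fun_prop))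
  exact Measurable.ite (measurableSet_eq_fun measurable_fst measurable_const)
    (hF.comp measurable_snd) hint.stronglyMeasurable.integral_prod_right.measurable

lemma IsDispersiveKernel.measurable_flowForm (hk : IsDispersiveKernel k B σ)
    (hF : Measurable fun p : ℝ × X => F p.1 p.2) (hG : Measurable fun p : ℝ × X => G p.1 p.2) :
    Measurable fun p : ℝ × ℝ => flowForm k μ (p.1 - p.2) (F p.2) (G p.1) := by
  have hflow := (hk.measurable_flow (μ := μ) hF).comp
    (f := fun p : (ℝ × ℝ) × X => (p.1.1 - p.1.2, p.1.2, p.2)) (by fun_prop)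
  have hconj := Complex.continuous_conj.measurable.comp
    (hG.comp (f := fun p : (ℝ × ℝ) × X => (p.1.1, p.2)) (by fun_prop))
  exact (hflow.mul hconj).stronglyMeasurable.integral_prod_right.measurable

end Measurability

namespace IsTestFunction

lemma memL1L2 (hF : IsTestFunction F μ) (s : ℝ) : MemL1L2 (F s) μ := by
  obtain ⟨h, ω, -, hω, hle⟩ := hF.exists_norm_le
  exact hω.mono (hF.measurable.comp measurable_prodMk_left).aestronglyMeasurable (hle s)

lemma lintegral_eLpNorm_two_ne_top (hF : IsTestFunction F μ) :
    ∫⁻ s, eLpNorm (F s) 2 μ ≠ ∞ := by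
  obtain ⟨h, ω, hh, hω, hle⟩ := hF.exists_norm_le
  have hs : ∀ s, eLpNorm (F s) 2 μ ≤ ‖h s‖ₑ * eLpNorm ω 2 μ := fun s =>
    (eLpNorm_le_mul_eLpNorm_of_ae_le_mul (Eventually.of_forall (hle s)) 2).trans_eq
      (by rw [ofReal_norm])
  refine ne_top_of_le_ne_top ?_ (lintegral_mono hs)
  rw [lintegral_mul_const' _ _ hω.memLp.2.ne]
  exact ENNReal.mul_ne_top hh.integrable.2.ne hω.memLp.2.ne

lemma lintegral_lintegral_rpow_ne_top (hF : IsTestFunction F μ) (hq1 : 1 ≤ q) (hq2 : q ≤ 2)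
    (hr1 : 1 ≤ r) (hr2 : r ≤ 2) : ∫⁻ t, (∫⁻ x, ‖F t x‖ₑ ^ r ∂μ) ^ (q / r) ≠ ∞ := by
  obtain ⟨h, ω, hh, hω, hle⟩ := hF.exists_norm_le
  have hr0 : 0 < r := by linarith
  have : 0 < q := by linarith
  have hω_fin : (∫⁻ x, ‖ω x‖ₑ ^ r ∂μ) ^ (q / r) ≠ ∞ :=
    ENNReal.rpow_ne_top_of_nonneg (by positivity) (hω.lintegral_rpow_ne_top hr1 hr2)
  have hslice : ∀ t, ∫⁻ x, ‖F t x‖ₑ ^ r ∂μ ≤ ‖h t‖ₑ ^ r * ∫⁻ x, ‖ω x‖ₑ ^ r ∂μ := fun t => by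
    rw [← lintegral_const_mul' _ _ (ENNReal.rpow_ne_top_of_nonneg hr0.le enorm_ne_top)]
    refine lintegral_mono fun x => ?_
    rw [← ENNReal.mul_rpow_of_nonneg _ _ hr0.le, ← enorm_norm (h t), ← enorm_norm (ω x),
      ← enorm_mul]
    exact ENNReal.rpow_le_rpow (enorm_le_iff_norm_le.2 ((hle t x).trans (le_abs_self _))) hr0.le
  refine ne_top_of_le_ne_top (ENNReal.mul_ne_top (hh.lintegral_rpow_ne_top hq1 hq2) hω_fin) ?_
  rw [← lintegral_mul_const' _ _ hω_fin]
  refine lintegral_mono fun t => (ENNReal.rpow_le_rpow (hslice t) (by positivity)).trans_eq ?_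
  rw [ENNReal.mul_rpow_of_nonneg _ _ (by positivity), ← ENNReal.rpow_mul, mul_div_cancel₀ _ hr0.ne']

end IsTestFunction

lemma rpow_inv_lintegral_rpow_eq_mixedENorm (μ : Measure X) (q r : ℝ) (F : ℝ → X → ℂ) :
    (∫⁻ s, ((∫⁻ x, ‖F s x‖ₑ ^ r ∂μ) ^ (1 / r)) ^ q) ^ (1 / q) = mixedENorm μ q r F := by
  simp only [mixedENorm, ← ENNReal.rpow_mul, one_div_mul_eq_div]

-- By the scaling relation the dispersive estimate from `L^{r'}` to `L^r` decays like
-- `|t| ^ (-2 / q)`, which is the kernel that Hardy-Littlewood-Sobolev pairs with `L^{q'}`.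
lemma IsDispersiveGroup.lintegral_flowForm_le [SFinite μ] (hk : IsDispersiveGroup k μ B σ)
    (hqr : IsAdmissible σ q r) (hF : IsTestFunction F μ) (hG : IsTestFunction G μ) :
    ∫⁻ t, ∫⁻ s, ‖flowForm k μ (t - s) (F s) (G t)‖ₑ ≤
      strichartzConst B q r * mixedENorm μ (q / (q - 1)) (r / (r - 1)) F *
        mixedENorm μ (q / (q - 1)) (r / (r - 1)) G := by
  have hq := hqr.two_lt_time
  have hr := hqr.two_lt_space
  have hr1 : 0 < r - 1 := by linarith
  have hp1 : 1 < r / (r - 1) := by rw [one_lt_div hr1]; linarith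
  have hp2 : r / (r - 1) < 2 := by rw [div_lt_iff₀ hr1]; linarith
  have hrate : σ * (2 / (r / (r - 1)) - 1) = 2 / q := by
    rw [hqr.scaling]; field_simp; ring
  have hdual : 2 / (2 - 2 / q) = q / (q - 1) := by
    rw [show 2 - 2 / q = 2 * (q - 1) / q by field_simp]; field_simp
  have hls := lintegral_rieszKernel_le (α := 2 / q) (by positivity)
    ((div_lt_one (by linarith)).2 hq)
    ((measurable_lintegral_enorm_rpow (μ := μ) hF.measurable (r / (r - 1))).pow_const
      (1 / (r / (r - 1))))
    ((measurable_lintegral_enorm_rpow (μ := μ) hG.measurable (r / (r - 1))).pow_const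
      (1 / (r / (r - 1))))
  rw [hdual, rpow_inv_lintegral_rpow_eq_mixedENorm, rpow_inv_lintegral_rpow_eq_mixedENorm] at hls
  have hne : ∀ t : ℝ, ∀ᵐ s : ℝ, t - s ≠ 0 := fun t => by
    filter_upwards [Measure.ae_ne volume t] with s hs using sub_ne_zero.2 hs.symm
  calc ∫⁻ t, ∫⁻ s, ‖flowForm k μ (t - s) (F s) (G t)‖ₑ
      ≤ ∫⁻ t, ∫⁻ s, decayConst B (r / (r - 1)) * (rieszKernel (2 / q) (t - s) *
          (∫⁻ x, ‖F s x‖ₑ ^ (r / (r - 1)) ∂μ) ^ (1 / (r / (r - 1))) *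
          (∫⁻ x, ‖G t x‖ₑ ^ (r / (r - 1)) ∂μ) ^ (1 / (r / (r - 1)))) := by
        refine lintegral_mono fun t => lintegral_mono_ae ?_
        filter_upwards [hne t] with s hs
        refine (hk.enorm_flowForm_le_rieszKernel hs hp1 hp2 (hF.memL1L2 s)
          (hG.memL1L2 t)).trans_eq ?_
        rw [hrate]
        ring
    _ ≤ decayConst B (r / (r - 1)) * (2 * hlsConst (2 / q) *
          mixedENorm μ (q / (q - 1)) (r / (r - 1)) F *
          mixedENorm μ (q / (q - 1)) (r / (r - 1)) G) := by
        simp only [lintegral_const_mul' (decayConst B (r / (r - 1))) _ ENNReal.ofReal_ne_top]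
        gcongr
    _ = _ := by rw [strichartzConst]; ring

end SpaceTime

section TTStar

variable {X S : Type*} [MeasurableSpace X] [MeasurableSpace S] {μ : Measure X} {ν : Measure S}

lemma enorm_integral_of_nonneg {f : X → ℝ} (hf : 0 ≤ f) (hint : Integrable f μ) :
    ‖∫ x, f x ∂μ‖ₑ = ∫⁻ x, ‖f x‖ₑ ∂μ := by
  rw [Real.enorm_of_nonneg (integral_nonneg hf), ← ofReal_integral_norm_eq_lintegral_enorm hint]
  simp only [Real.norm_of_nonneg (hf _)]

lemma enorm_integral_ofReal {f : X → ℝ} (hf : 0 ≤ f) (hint : Integrable f μ) :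
    ‖∫ x, (f x : ℂ) ∂μ‖ₑ = ∫⁻ x, ‖f x‖ₑ ∂μ := by
  rw [integral_complex_ofReal, ← ofReal_norm, Complex.norm_real, ofReal_norm,
    enorm_integral_of_nonneg hf hint]

lemma enorm_integral_mul_conj_self {g : X → ℂ} (hg : Integrable (fun x => g x * conj (g x)) μ) :
    ‖∫ x, g x * conj (g x) ∂μ‖ₑ = ∫⁻ x, ‖g x‖ₑ ^ 2 ∂μ := by
  have hreal : ∀ x, g x * conj (g x) = ((‖g x‖ ^ 2 : ℝ) : ℂ) := fun x => by
    rw [Complex.mul_conj']; push_cast; rfl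
  simp only [hreal] at hg ⊢
  rw [enorm_integral_ofReal (fun x => sq_nonneg _) (by
    simpa only [RCLike.re_to_complex, Complex.ofReal_re] using hg.re)]
  simp only [enorm_pow, enorm_norm]

variable [SFinite μ] [SFinite ν] {w : X → S → ℂ}

lemma measurable_mul_conj_uncurry (hw : Measurable fun p : X × S => w p.1 p.2) :
    Measurable fun p : X × S × S => w p.1 p.2.2 * conj (w p.1 p.2.1) :=
  (hw.comp (f := fun p : X × S × S => (p.1, p.2.2)) (by fun_prop)).mul
    (Complex.continuous_conj.measurable.comp
      (hw.comp (f := fun p : X × S × S => (p.1, p.2.1)) (by fun_prop)))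

lemma integrable_mul_conj_uncurry (hw : Measurable fun p : X × S => w p.1 p.2)
    (hint : ∫⁻ s, eLpNorm (w · s) 2 μ ∂ν ≠ ∞) :
    Integrable (fun p : X × S × S => w p.1 p.2.2 * conj (w p.1 p.2.1)) (μ.prod (ν.prod ν)) := by
  have hm := measurable_mul_conj_uncurry hw
  have hsec : ∀ s, AEStronglyMeasurable (w · s) μ := fun s =>
    (hw.comp measurable_prodMk_right).aestronglyMeasurable
  have hnorm : Measurable fun s => eLpNorm (w · s) 2 μ := by
    simp only [eLpNorm_two_eq_lintegral]
    exact (Measurable.lintegral_prod_left' (hw.enorm.pow_const _)).pow_const _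
  refine ⟨hm.aestronglyMeasurable, lt_top_iff_ne_top.2 ?_⟩
  rw [lintegral_prod_symm _ hm.enorm.aemeasurable,
    lintegral_prod _ (Measurable.lintegral_prod_left' hm.enorm).aemeasurable]
  refine ne_top_of_le_ne_top (ENNReal.mul_ne_top hint hint) ?_
  calc ∫⁻ s', ∫⁻ s, ∫⁻ x, ‖w x s * conj (w x s')‖ₑ ∂μ ∂ν ∂ν
      ≤ ∫⁻ s', ∫⁻ s, eLpNorm (w · s) 2 μ * eLpNorm (w · s') 2 μ ∂ν ∂ν :=
        lintegral_mono fun s' => lintegral_mono fun s =>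
          lintegral_enorm_mul_conj_le (hsec s) (hsec s')
    _ = (∫⁻ s, eLpNorm (w · s) 2 μ ∂ν) * ∫⁻ s, eLpNorm (w · s) 2 μ ∂ν := by
        simp only [lintegral_mul_const _ hnorm, lintegral_const_mul _ hnorm]

-- The `T T*` argument: expand `|∫ w|²` as a double integral over the parameters and integrate
-- over `x` first.
lemma lintegral_enorm_integral_sq_le (hw : Measurable fun p : X × S => w p.1 p.2)
    (hint : ∫⁻ s, eLpNorm (w · s) 2 μ ∂ν ≠ ∞) :
    ∫⁻ x, ‖∫ s, w x s ∂ν‖ₑ ^ 2 ∂μ ≤ ∫⁻ s', ∫⁻ s, ‖∫ x, w x s * conj (w x s') ∂μ‖ₑ ∂ν ∂ν := by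
  have hI := integrable_mul_conj_uncurry hw hint
  have hsq : ∀ x, ∫ z, w x z.2 * conj (w x z.1) ∂ν.prod ν =
      (∫ s, w x s ∂ν) * conj (∫ s, w x s ∂ν) := fun x => by
    simp only [mul_comm (w x _), mul_comm (∫ s, w x s ∂ν)]
    rw [integral_prod_mul (fun s => conj (w x s)) (w x), integral_conj]
  have hmeas : Measurable fun z : S × S => ∫ x, w x z.2 * conj (w x z.1) ∂μ :=
    (measurable_mul_conj_uncurry hw).stronglyMeasurable.integral_prod_left.measurable
  have hleft := hI.integral_prod_left
  simp only [hsq] at hleft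
  rw [← enorm_integral_mul_conj_self hleft]
  simp only [← hsq]
  rw [integral_integral_swap hI]
  refine (enorm_integral_le_lintegral_enorm _).trans_eq ?_
  exact lintegral_prod _ hmeas.enorm.aemeasurable

end TTStar

section Duhamel

variable {X : Type*} [MeasurableSpace X] {μ : Measure X} {k : ℝ → X → X → ℂ} {B σ q r : ℝ}
  {χ : ℝ → ℝ → ℝ} {F G : ℝ → X → ℂ} {g : X → ℂ}

/-- Measurable weights `χ t s` with values in `[-1, 1]`, used to restrict the time `s` of a source
in terms of the time `t` of observation. -/
structure IsTimeCutoff (χ : ℝ → ℝ → ℝ) : Prop where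
  measurable : Measurable fun p : ℝ × ℝ => χ p.1 p.2
  abs_le_one : ∀ t s, |χ t s| ≤ 1

namespace IsTimeCutoff

lemma one : IsTimeCutoff fun _ _ => 1 := ⟨measurable_const, fun _ _ => abs_one.le⟩

lemma transpose (hχ : IsTimeCutoff χ) : IsTimeCutoff fun t s => χ s t :=
  ⟨hχ.measurable.comp measurable_swap, fun t s => hχ.abs_le_one s t⟩

lemma enorm_mul_le (hχ : IsTimeCutoff χ) (t s : ℝ) (z : ℂ) : ‖(χ t s : ℂ) * z‖ₑ ≤ ‖z‖ₑ := by
  rw [enorm_mul, ← ofReal_norm, Complex.norm_real]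
  exact mul_le_of_le_one_left' (ENNReal.ofReal_le_one.2 (hχ.abs_le_one t s))

end IsTimeCutoff

/-- The Duhamel integral of a source term `F` with time cutoff `χ`; the indicator of `0 < s < t` in
place of `χ` gives the solution of the inhomogeneous equation for positive times. -/
noncomputable def duhamel (k : ℝ → X → X → ℂ) (μ : Measure X) (χ : ℝ → ℝ → ℝ) (F : ℝ → X → ℂ)
    (t : ℝ) (x : X) : ℂ :=
  ∫ s, (χ t s : ℂ) * flow k μ (t - s) (F s) x

variable [SFinite μ]

lemma IsDispersiveKernel.measurable_cutoff_mul_flow (hk : IsDispersiveKernel k B σ)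
    (hχ : IsTimeCutoff χ) (hF : Measurable fun p : ℝ × X => F p.1 p.2) :
    Measurable fun p : (ℝ × X) × ℝ => (χ p.1.1 p.2 : ℂ) * flow k μ (p.1.1 - p.2) (F p.2) p.1.2 :=
  (Complex.measurable_ofReal.comp
      (hχ.measurable.comp (f := fun p : (ℝ × X) × ℝ => (p.1.1, p.2)) (by fun_prop))).mul
    ((hk.measurable_flow hF).comp (f := fun p : (ℝ × X) × ℝ => (p.1.1 - p.2, p.2, p.1.2))
      (by fun_prop))

lemma IsDispersiveKernel.measurable_duhamel (hk : IsDispersiveKernel k B σ)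
    (hχ : IsTimeCutoff χ) (hF : Measurable fun p : ℝ × X => F p.1 p.2) :
    Measurable fun p : ℝ × X => duhamel k μ χ F p.1 p.2 :=
  (hk.measurable_cutoff_mul_flow hχ hF).stronglyMeasurable.integral_prod_right.measurable

namespace IsDispersiveGroup

lemma integral_duhamel_mul_conj (hk : IsDispersiveGroup k μ B σ) (hχ : IsTimeCutoff χ)
    (hF : IsTestFunction F μ) (t : ℝ) (hg : MemL1L2 g μ) :
    ∫ x, duhamel k μ χ F t x * conj (g x) ∂μ =
      ∫ s, (χ t s : ℂ) * flowForm k μ (t - s) (F s) g := by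
  have hm : AEStronglyMeasurable (fun p : X × ℝ =>
      (χ t p.2 : ℂ) * flow k μ (t - p.2) (F p.2) p.1 * conj (g p.1)) (μ.prod volume) :=
    ((hk.measurable_cutoff_mul_flow hχ hF.measurable).comp
      (f := fun p : X × ℝ => ((t, p.1), p.2)) (by fun_prop)).aestronglyMeasurable.mul
      (Complex.continuous_conj.comp_aestronglyMeasurable hg.integrable.1.comp_fst)
  have hint : Integrable (fun p : X × ℝ =>
      (χ t p.2 : ℂ) * flow k μ (t - p.2) (F p.2) p.1 * conj (g p.1)) (μ.prod volume) := by
    refine ⟨hm, lt_top_iff_ne_top.2 ?_⟩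
    rw [lintegral_prod_symm _ hm.enorm]
    refine ne_top_of_le_ne_top
      (ENNReal.mul_ne_top hF.lintegral_eLpNorm_two_ne_top hg.memLp.2.ne) ?_
    rw [← lintegral_mul_const' _ _ hg.memLp.2.ne]
    refine lintegral_mono fun s => (lintegral_mono fun x => ?_).trans
      (hk.lintegral_enorm_flow_mul_conj_flow_le (t - s) 0 (hF.memL1L2 s) hg)
    rw [flow_zero, mul_assoc]
    exact hχ.enorm_mul_le t s _
  simp only [duhamel, flowForm, ← integral_mul_const, ← integral_const_mul, ← mul_assoc]
  exact integral_integral_swap hint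

lemma lintegral_enorm_duhamel_sq_le (hk : IsDispersiveGroup k μ B σ) (hχ : IsTimeCutoff χ)
    (hF : IsTestFunction F μ) (t : ℝ) :
    ∫⁻ x, ‖duhamel k μ χ F t x‖ₑ ^ 2 ∂μ ≤
      ∫⁻ s', ∫⁻ s, ‖flowForm k μ (s' - s) (F s) (F s')‖ₑ := by
  have hm := (hk.measurable_cutoff_mul_flow (μ := μ) hχ hF.measurable).comp
    (f := fun p : X × ℝ => ((t, p.1), p.2)) (by fun_prop)
  have hle : ∀ s, eLpNorm (fun x => (χ t s : ℂ) * flow k μ (t - s) (F s) x) 2 μ ≤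
      eLpNorm (F s) 2 μ := fun s => by
    rw [← hk.eLpNorm_flow (t - s) (hF.memL1L2 s)]
    exact eLpNorm_mono_enorm fun x => hχ.enorm_mul_le t s _
  refine (lintegral_enorm_integral_sq_le hm
    (ne_top_of_le_ne_top hF.lintegral_eLpNorm_two_ne_top (lintegral_mono hle))).trans ?_
  refine lintegral_mono fun s' => lintegral_mono fun s => ?_
  have hpair := hk.pairingInvariant _ _ (hF.memL1L2 s) (hF.memL1L2 s') (t - s) (t - s')
  rw [sub_sub_sub_cancel_left] at hpair
  have hcut : ∀ x, (χ t s : ℂ) * flow k μ (t - s) (F s) x *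
      conj ((χ t s' : ℂ) * flow k μ (t - s') (F s') x) = (χ t s : ℂ) * ((χ t s' : ℂ) *
        (flow k μ (t - s) (F s) x * conj (flow k μ (t - s') (F s') x))) := fun x => by
    rw [map_mul, Complex.conj_ofReal]
    ring
  simp only [hcut]
  rw [integral_const_mul, integral_const_mul, hpair]
  exact (hχ.enorm_mul_le t s _).trans (hχ.enorm_mul_le t s' _)

end IsDispersiveGroup

end Duhamel

section Duality

variable {X : Type*} [MeasurableSpace X] {μ : Measure X} {q r : ℝ} {u v : ℝ → X → ℂ}

lemma mul_rpow_eq_rpow_one_add {x : ℝ≥0∞} (hx : x ≠ ∞) {c : ℝ} (hc : 0 < 1 + c) :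
    x * x ^ c = x ^ (1 + c) := by
  rcases eq_or_ne x 0 with rfl | hx0
  · rw [zero_mul, ENNReal.zero_rpow_of_pos hc]
  · rw [ENNReal.rpow_add _ _ hx0 hx, ENNReal.rpow_one]

lemma rpow_le_max_rpow {x y z : ℝ≥0∞} (hxy : x ≤ y) (hyz : y ≤ z) (c : ℝ) :
    y ^ c ≤ max (x ^ c) (z ^ c) := by
  rcases le_total 0 c with hc | hc
  · exact (ENNReal.rpow_le_rpow hyz hc).trans (le_max_right _ _)
  · refine le_trans ?_ (le_max_left _ _)
    rw [← neg_neg c, ENNReal.rpow_neg, ENNReal.rpow_neg x]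
    exact ENNReal.inv_le_inv.2 (ENNReal.rpow_le_rpow hxy (neg_nonneg.2 hc))

lemma rpow_one_div_le_of_le_mul_rpow {I K : ℝ≥0∞} (hq : 1 < q) (hI : I ≠ ∞)
    (h : I ≤ K * I ^ (1 / (q / (q - 1)))) : I ^ (1 / q) ≤ K := by
  have hq0 : 0 < q := by linarith
  rcases eq_or_ne I 0 with rfl | h0
  · simp [hq0]
  have hsplit : I ^ (1 / q) * I ^ (1 / (q / (q - 1))) = I := by
    have hexp : 1 / q + 1 / (q / (q - 1)) = 1 := by
      field_simp
      ring
    rw [← ENNReal.rpow_add _ _ h0 hI, hexp, ENNReal.rpow_one]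
  rw [← ENNReal.mul_le_mul_iff_left (c := I ^ (1 / (q / (q - 1)))), hsplit]
  · exact h
  · simp [ENNReal.rpow_eq_zero_iff, h0, hI]
  · simp [ENNReal.rpow_eq_top_iff, h0, hI]

/-- The `r`-th power of the `L^r` norm of a time slice. -/
noncomputable def sliceIntegral (μ : Measure X) (r : ℝ) (v : ℝ → X → ℂ) (t : ℝ) : ℝ≥0∞ :=
  ∫⁻ x, ‖v t x‖ₑ ^ r ∂μ

/-- Bounded functions supported in a product of sets of finite measure whose nonzero time slices
have `L^r` norm bounded below, so that all real powers of those norms stay bounded. -/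
structure IsTame (v : ℝ → X → ℂ) (μ : Measure X) (r : ℝ) : Prop where
  measurable : Measurable fun p : ℝ × X => v p.1 p.2
  exists_bounds : ∃ (T : Set ℝ) (S : Set X) (M ε : ℝ≥0∞), MeasurableSet T ∧ MeasurableSet S ∧
    volume T ≠ ∞ ∧ μ S ≠ ∞ ∧ M ≠ ∞ ∧ ε ≠ 0 ∧
    ∀ t x, v t x ≠ 0 → t ∈ T ∧ x ∈ S ∧ ‖v t x‖ₑ ≤ M ∧ ε ≤ sliceIntegral μ r v t

/-- The extremiser of the pairing with `v` among functions of given mixed norm with exponents dual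
to `(q, r)`. -/
noncomputable def dualTest (μ : Measure X) (q r : ℝ) (v : ℝ → X → ℂ) (t : ℝ) (x : X) : ℂ :=
  ((‖v t x‖ ^ (r - 2) * (sliceIntegral μ r v t).toReal ^ (q / r - 1) : ℝ) : ℂ) * v t x

lemma measurable_dualTest [SFinite μ] (hv : Measurable fun p : ℝ × X => v p.1 p.2) :
    Measurable fun p : ℝ × X => dualTest μ q r v p.1 p.2 :=
  (Complex.measurable_ofReal.comp ((hv.norm.pow_const _).mul
    (((measurable_lintegral_enorm_rpow hv r).ennreal_toReal.pow_const _).comp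
      measurable_fst))).mul hv

lemma mul_conj_dualTest (hr : 0 < r) (t : ℝ) (x : X) :
    v t x * conj (dualTest μ q r v t x) =
      ((‖v t x‖ ^ r * (sliceIntegral μ r v t).toReal ^ (q / r - 1) : ℝ) : ℂ) := by
  have hpow : ‖v t x‖ ^ r = ‖v t x‖ ^ (r - 2) * ‖v t x‖ ^ 2 := by
    rw [← Real.rpow_natCast, ← Real.rpow_add' (norm_nonneg _) (by push_cast; linarith)]
    push_cast
    rw [sub_add_cancel]
  rw [dualTest, map_mul, Complex.conj_ofReal, mul_left_comm, Complex.mul_conj', hpow]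
  push_cast
  ring

namespace IsTame

lemma eq_zero_of_sliceIntegral_eq_zero (hv : IsTame v μ r) {t : ℝ}
    (ht : sliceIntegral μ r v t = 0) (x : X) : v t x = 0 := by
  obtain ⟨T, S, M, ε, -, -, -, -, -, hε, hb⟩ := hv.exists_bounds
  by_contra hx
  exact hε (le_antisymm ((hb t x hx).2.2.2.trans_eq ht) (zero_le))

lemma exists_sliceIntegral_le (hv : IsTame v μ r) (hr : 0 < r) :
    ∃ (T : Set ℝ) (L : ℝ≥0∞), MeasurableSet T ∧ volume T ≠ ∞ ∧ L ≠ ∞ ∧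
      ∀ t, sliceIntegral μ r v t ≤ T.indicator (fun _ => L) t := by
  obtain ⟨T, S, M, ε, hT, hS, hTfin, hSfin, hM, -, hb⟩ := hv.exists_bounds
  refine ⟨T, M ^ r * μ S, hT, hTfin,
    ENNReal.mul_ne_top (ENNReal.rpow_ne_top_of_nonneg hr.le hM) hSfin, fun t => ?_⟩
  have hle : ∀ x, ‖v t x‖ₑ ^ r ≤ T.indicator (fun _ => S.indicator (fun _ => M ^ r) x) t := by
    intro x
    by_cases hx : v t x = 0
    · rw [hx, enorm_zero, ENNReal.zero_rpow_of_pos hr]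
      exact zero_le
    · obtain ⟨ht, hxS, hxM, -⟩ := hb t x hx
      rw [indicator_of_mem ht, indicator_of_mem hxS]
      exact ENNReal.rpow_le_rpow hxM hr.le
  refine (lintegral_mono hle).trans ?_
  by_cases ht : t ∈ T
  · simp only [indicator_of_mem ht]
    rw [lintegral_indicator_const hS]
  · simp only [indicator_of_notMem ht, lintegral_zero, le_refl]

lemma sliceIntegral_ne_top (hv : IsTame v μ r) (hr : 0 < r) (t : ℝ) :
    sliceIntegral μ r v t ≠ ∞ := by
  obtain ⟨T, L, -, -, hL, hle⟩ := hv.exists_sliceIntegral_le hr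
  exact ne_top_of_le_ne_top hL ((hle t).trans (indicator_le_self T (fun _ => L) t))

lemma lintegral_sliceIntegral_rpow_ne_top (hv : IsTame v μ r) (hr : 0 < r) {c : ℝ} (hc : 0 < c) :
    ∫⁻ t, sliceIntegral μ r v t ^ c ≠ ∞ := by
  obtain ⟨T, L, hT, hTfin, hL, hle⟩ := hv.exists_sliceIntegral_le hr
  have hpow : ∀ t, sliceIntegral μ r v t ^ c ≤ T.indicator (fun _ => L ^ c) t := fun t => by
    refine (ENNReal.rpow_le_rpow (hle t) hc.le).trans_eq ?_
    by_cases ht : t ∈ T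
    · simp only [indicator_of_mem ht]
    · simp only [indicator_of_notMem ht, ENNReal.zero_rpow_of_pos hc]
  refine ne_top_of_le_ne_top ?_ (lintegral_mono hpow)
  rw [lintegral_indicator_const hT]
  exact ENNReal.mul_ne_top (ENNReal.rpow_ne_top_of_nonneg hc.le hL) hTfin

lemma enorm_dualTest (hv : IsTame v μ r) (hr : 2 < r) (t : ℝ) (x : X) :
    ‖dualTest μ q r v t x‖ₑ = ‖v t x‖ₑ ^ (r - 1) * sliceIntegral μ r v t ^ (q / r - 1) := by
  by_cases hx : v t x = 0
  · rw [dualTest, hx, mul_zero, enorm_zero, ENNReal.zero_rpow_of_pos (by linarith), zero_mul]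
  have hs : sliceIntegral μ r v t ^ (q / r - 1) ≠ ∞ :=
    ENNReal.rpow_ne_top_of_ne_zero (fun h => hx (hv.eq_zero_of_sliceIntegral_eq_zero h x))
      (hv.sliceIntegral_ne_top (by linarith) t)
  have hpow : ‖v t x‖ₑ ^ (r - 2) ≠ ∞ := ENNReal.rpow_ne_top_of_nonneg (by linarith) enorm_ne_top
  rw [dualTest, enorm_mul, ← toReal_enorm (v t x), ENNReal.toReal_rpow, ENNReal.toReal_rpow,
    ← ENNReal.toReal_mul, ← ofReal_norm, Complex.norm_real, ofReal_norm,
    Real.enorm_of_nonneg ENNReal.toReal_nonneg, ENNReal.ofReal_toReal (ENNReal.mul_ne_top hpow hs),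
    mul_comm, ← mul_assoc, mul_rpow_eq_rpow_one_add enorm_ne_top (by linarith)]
  ring_nf

lemma lintegral_enorm_dualTest (hv : IsTame v μ r) (hq : 1 < q) (hr : 2 < r) (t : ℝ) :
    ∫⁻ x, ‖dualTest μ q r v t x‖ₑ ^ (r / (r - 1)) ∂μ =
      sliceIntegral μ r v t ^ ((q - 1) / (r - 1)) := by
  have hr1 : r - 1 ≠ 0 := by linarith
  have hexp : 1 + (q / r - 1) * (r / (r - 1)) = (q - 1) / (r - 1) := by
    field_simp
    ring
  have hpow : ∀ x, ‖dualTest μ q r v t x‖ₑ ^ (r / (r - 1)) =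
      ‖v t x‖ₑ ^ r * sliceIntegral μ r v t ^ ((q / r - 1) * (r / (r - 1))) := fun x => by
    rw [hv.enorm_dualTest hr, ENNReal.mul_rpow_of_nonneg _ _ (by bound), ← ENNReal.rpow_mul,
      ← ENNReal.rpow_mul, mul_div_cancel₀ _ hr1]
  simp only [hpow]
  rcases eq_or_ne (sliceIntegral μ r v t) 0 with hs | hs
  · have hqr : 0 < (q - 1) / (r - 1) := div_pos (by linarith) (by linarith)
    simp only [hv.eq_zero_of_sliceIntegral_eq_zero hs, enorm_zero, hs,
      ENNReal.zero_rpow_of_pos hqr, ENNReal.zero_rpow_of_pos (by linarith : 0 < r), zero_mul,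
      lintegral_zero]
  · have hfin := hv.sliceIntegral_ne_top (by linarith) t
    rw [lintegral_mul_const' _ _ (ENNReal.rpow_ne_top_of_ne_zero hs hfin), ← hexp]
    refine mul_rpow_eq_rpow_one_add hfin ?_
    rw [hexp]
    exact div_pos (by linarith) (by linarith)

lemma mixedENorm_dualTest (hv : IsTame v μ r) (hq : 1 < q) (hr : 2 < r) :
    mixedENorm μ (q / (q - 1)) (r / (r - 1)) (dualTest μ q r v) =
      (∫⁻ t, sliceIntegral μ r v t ^ (q / r)) ^ (1 / (q / (q - 1))) := by
  have hexp : (q - 1) / (r - 1) * (q / (q - 1) / (r / (r - 1))) = q / r := by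
    have hq1 : q - 1 ≠ 0 := by linarith
    have hr1 : r - 1 ≠ 0 := by linarith
    field_simp
  simp only [mixedENorm, hv.lintegral_enorm_dualTest hq hr, ← ENNReal.rpow_mul, hexp]

lemma isTestFunction_dualTest [SFinite μ] (hv : IsTame v μ r) (hr : 2 < r) :
    IsTestFunction (dualTest μ q r v) μ := by
  obtain ⟨_, L, -, -, hL, hslice⟩ := hv.exists_sliceIntegral_le (by linarith)
  obtain ⟨T, S, M, ε, hT, hS, hTfin, hSfin, hM, hε, hb⟩ := hv.exists_bounds
  set C := M ^ (r - 1) * max (min ε 1 ^ (q / r - 1)) (L ^ (q / r - 1))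
  refine ⟨measurable_dualTest hv.measurable, T.indicator fun _ => (C.toReal : ℂ),
    S.indicator fun _ => 1, memL1L2_indicator_const hT hTfin _, memL1L2_indicator_const hS hSfin _,
    fun t x => ?_⟩
  by_cases hx : v t x = 0
  · rw [dualTest, hx, mul_zero, norm_zero]
    positivity
  obtain ⟨ht, hxS, hxM, hεs⟩ := hb t x hx
  have hsL := (hslice t).trans (indicator_le_self _ _ t)
  have hL0 : L ≠ 0 := fun h => hε (le_antisymm ((hεs.trans hsL).trans_eq h) zero_le)
  have hC : C ≠ ∞ := ENNReal.mul_ne_top (ENNReal.rpow_ne_top_of_nonneg (by linarith) hM)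
    (max_lt (ENNReal.rpow_ne_top_of_ne_zero (by simp [hε]) (by simp)).lt_top
      (ENNReal.rpow_ne_top_of_ne_zero hL0 hL).lt_top).ne
  have hle : ‖dualTest μ q r v t x‖ₑ ≤ C := by
    rw [hv.enorm_dualTest hr]
    exact mul_le_mul' (ENNReal.rpow_le_rpow hxM (by linarith))
      (rpow_le_max_rpow ((min_le_left _ _).trans hεs) hsL _)
  rw [indicator_of_mem ht, indicator_of_mem hxS, norm_one, mul_one, Complex.norm_real,
    Real.norm_of_nonneg ENNReal.toReal_nonneg, ← toReal_enorm]
  exact ENNReal.toReal_mono hC hle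

lemma integral_mul_conj_dualTest [SFinite μ] (hv : IsTame v μ r) (hq : 1 < q) (hr : 2 < r)
    (t : ℝ) : ∫ x, v t x * conj (dualTest μ q r v t x) ∂μ =
      ((sliceIntegral μ r v t ^ (q / r)).toReal : ℂ) := by
  have hr0 : 0 < r := by linarith
  have hexp : 1 + (q / r - 1) = q / r := by ring
  have hint : ∫ x, ‖v t x‖ ^ r ∂μ = (sliceIntegral μ r v t).toReal := by
    have hm : Measurable (v t) := hv.measurable.comp measurable_prodMk_left
    have hpow : ∀ x, ‖v t x‖ ^ r = (‖v t x‖ₑ ^ r).toReal := fun x => by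
      rw [← ENNReal.toReal_rpow, toReal_enorm]
    simp only [hpow]
    exact integral_toReal (hm.enorm.pow_const r).aemeasurable
      (Eventually.of_forall fun x => ENNReal.rpow_lt_top_of_nonneg hr0.le enorm_ne_top)
  simp only [mul_conj_dualTest hr0]
  rw [integral_complex_ofReal, integral_mul_const, hint, ENNReal.toReal_rpow, ← ENNReal.toReal_mul,
    mul_rpow_eq_rpow_one_add (hv.sliceIntegral_ne_top hr0 t) (by rw [hexp]; positivity), hexp]

lemma enorm_integral_mul_conj_dualTest [SFinite μ] (hv : IsTame v μ r) (hq : 1 < q) (hr : 2 < r) :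
    ‖∫ t, ∫ x, v t x * conj (dualTest μ q r v t x) ∂μ‖ₑ =
      ∫⁻ t, sliceIntegral μ r v t ^ (q / r) := by
  have hr0 : 0 < r := by linarith
  have hqr : 0 < q / r := by positivity
  have hm : Measurable fun t => sliceIntegral μ r v t ^ (q / r) :=
    (measurable_lintegral_enorm_rpow hv.measurable r).pow_const _
  simp only [hv.integral_mul_conj_dualTest hq hr]
  rw [enorm_integral_ofReal (fun t => ENNReal.toReal_nonneg)
    (integrable_toReal_of_lintegral_ne_top hm.aemeasurable
      (hv.lintegral_sliceIntegral_rpow_ne_top hr0 hqr))]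
  refine lintegral_congr fun t => ?_
  rw [Real.enorm_of_nonneg ENNReal.toReal_nonneg, ENNReal.ofReal_toReal
    (ENNReal.rpow_ne_top_of_nonneg hqr.le (hv.sliceIntegral_ne_top hr0 t))]

lemma mixedENorm_le [SFinite μ] (hv : IsTame v μ r) (hq : 1 < q) (hr : 2 < r)
    (hvu : ∀ t x, v t x = 0 ∨ v t x = u t x) {K : ℝ≥0∞}
    (hK : ∀ G, IsTestFunction G μ → ‖∫ t, ∫ x, u t x * conj (G t x) ∂μ‖ₑ ≤
      K * mixedENorm μ (q / (q - 1)) (r / (r - 1)) G) :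
    mixedENorm μ q r v ≤ K := by
  have hpair := hK (dualTest μ q r v) (hv.isTestFunction_dualTest hr)
  have huv : ∀ t x, u t x * conj (dualTest μ q r v t x) = v t x * conj (dualTest μ q r v t x) :=
    fun t x => by
      rcases hvu t x with h | h
      · simp only [dualTest, h, mul_zero, map_zero]
      · rw [h]
  simp only [huv] at hpair
  rw [hv.enorm_integral_mul_conj_dualTest hq hr, hv.mixedENorm_dualTest hq hr] at hpair
  exact rpow_one_div_le_of_le_mul_rpow hq
    (hv.lintegral_sliceIntegral_rpow_ne_top (by linarith) (div_pos (by linarith) (by linarith)))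
    hpair

end IsTame

lemma lintegral_rpow_le_liminf {Y : Type*} [MeasurableSpace Y] {ν : Measure Y}
    {f : ℕ → Y → ℝ≥0∞} {g : Y → ℝ≥0∞} {c : ℝ} (hc : 0 < c) (hf : ∀ n, Measurable (f n))
    (hg : ∀ᵐ y ∂ν, g y ≤ liminf (fun n => f n y) atTop) :
    ∫⁻ y, g y ^ c ∂ν ≤ liminf (fun n => ∫⁻ y, f n y ^ c ∂ν) atTop := by
  refine le_trans (lintegral_mono_ae ?_) (lintegral_liminf_le fun n => (hf n).pow_const c)
  filter_upwards [hg] with y hy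
  exact (ENNReal.rpow_le_rpow hy hc.le).trans_eq ((ENNReal.orderIsoRpow c hc).liminf_apply)

lemma mixedENorm_le_of_tendsto [SFinite μ] {v : ℕ → ℝ → X → ℂ} (hq : 0 < q) (hr : 0 < r)
    (hm : ∀ n, Measurable fun p : ℝ × X => v n p.1 p.2)
    (hlim : ∀ t, ∀ᵐ x ∂μ, Tendsto (fun n => v n t x) atTop (nhds (u t x))) {K : ℝ≥0∞}
    (hK : ∀ n, mixedENorm μ q r (v n) ≤ K) : mixedENorm μ q r u ≤ K := by
  have hslice : ∀ t, ∫⁻ x, ‖u t x‖ₑ ^ r ∂μ ≤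
      liminf (fun n => ∫⁻ x, ‖v n t x‖ₑ ^ r ∂μ) atTop := fun t => by
    refine lintegral_rpow_le_liminf hr (fun n => ((hm n).comp measurable_prodMk_left).enorm) ?_
    filter_upwards [hlim t] with x hx
    exact hx.enorm.liminf_eq.ge
  have hpow := lintegral_rpow_le_liminf (ν := volume) (div_pos hq hr)
    (fun n => measurable_lintegral_enorm_rpow (hm n) r) (Eventually.of_forall hslice)
  refine (ENNReal.rpow_le_rpow hpow (by positivity)).trans ?_
  refine ((ENNReal.orderIsoRpow (1 / q) (by positivity)).liminf_apply).trans_le ?_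
  exact (liminf_le_liminf (Eventually.of_forall hK)).trans_eq (liminf_const K)

section Truncation

variable [SigmaFinite μ]

open scoped Classical in
/-- The restriction of `u` to the `n`-th member of an exhaustion by boxes of finite measure, where
moreover `‖u‖ ≤ n`. -/
noncomputable def boxTrunc (μ : Measure X) [SigmaFinite μ] (u : ℝ → X → ℂ) (n : ℕ) (t : ℝ)
    (x : X) : ℂ :=
  if t ∈ spanningSets volume n ∧ x ∈ spanningSets μ n ∧ ‖u t x‖ ≤ n then u t x else 0

/-- The restriction of `boxTrunc` to the time slices that are not too small. -/
noncomputable def tameTrunc (μ : Measure X) [SigmaFinite μ] (r : ℝ) (u : ℝ → X → ℂ) (n : ℕ)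
    (t : ℝ) (x : X) : ℂ :=
  if (n : ℝ≥0∞)⁻¹ ≤ sliceIntegral μ r (boxTrunc μ u n) t then boxTrunc μ u n t x else 0

lemma measurable_boxTrunc (hu : Measurable fun p : ℝ × X => u p.1 p.2) (n : ℕ) :
    Measurable fun p : ℝ × X => boxTrunc μ u n p.1 p.2 :=
  Measurable.ite ((measurable_fst (measurableSet_spanningSets volume n)).inter
    ((measurable_snd (measurableSet_spanningSets μ n)).inter
      (measurableSet_le hu.norm measurable_const))) hu measurable_const

lemma measurable_tameTrunc (hu : Measurable fun p : ℝ × X => u p.1 p.2) (n : ℕ) :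
    Measurable fun p : ℝ × X => tameTrunc μ r u n p.1 p.2 :=
  Measurable.ite (measurableSet_le measurable_const
    ((measurable_lintegral_enorm_rpow (measurable_boxTrunc hu n) r).comp measurable_fst))
    (measurable_boxTrunc hu n) measurable_const

lemma boxTrunc_eq_zero_or_eq (n : ℕ) (t : ℝ) (x : X) :
    boxTrunc μ u n t x = 0 ∨ boxTrunc μ u n t x = u t x := by
  rw [boxTrunc]
  split_ifs
  · exact Or.inr rfl
  · exact Or.inl rfl

lemma tameTrunc_eq_zero_or_eq (n : ℕ) (t : ℝ) (x : X) :
    tameTrunc μ r u n t x = 0 ∨ tameTrunc μ r u n t x = u t x := by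
  rw [tameTrunc]
  split_ifs
  · exact boxTrunc_eq_zero_or_eq n t x
  · exact Or.inl rfl

lemma isTame_tameTrunc (hu : Measurable fun p : ℝ × X => u p.1 p.2) (n : ℕ) :
    IsTame (tameTrunc μ r u n) μ r := by
  refine ⟨measurable_tameTrunc hu n, spanningSets volume n, spanningSets μ n, n, (n : ℝ≥0∞)⁻¹,
    measurableSet_spanningSets _ n, measurableSet_spanningSets _ n,
    (measure_spanningSets_lt_top _ n).ne, (measure_spanningSets_lt_top _ n).ne,
    ENNReal.natCast_ne_top n, ENNReal.inv_ne_zero.2 (ENNReal.natCast_ne_top n), fun t x hx => ?_⟩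
  have hslice : (n : ℝ≥0∞)⁻¹ ≤ sliceIntegral μ r (boxTrunc μ u n) t := by
    by_contra h
    exact hx (if_neg h)
  have hbox : ∀ y, tameTrunc μ r u n t y = boxTrunc μ u n t y := fun y => if_pos hslice
  rw [hbox] at hx
  obtain ⟨ht, hxS, hle⟩ : t ∈ spanningSets volume n ∧ x ∈ spanningSets μ n ∧ ‖u t x‖ ≤ n := by
    by_contra h
    exact hx (if_neg h)
  refine ⟨ht, hxS, ?_, ?_⟩
  · rw [hbox, boxTrunc, if_pos ⟨ht, hxS, hle⟩, ← ofReal_norm, ← ENNReal.ofReal_natCast]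
    exact ENNReal.ofReal_le_ofReal hle
  · simpa only [sliceIntegral, hbox] using hslice

lemma eventually_boxTrunc_eq (t : ℝ) (x : X) : ∀ᶠ n in atTop, boxTrunc μ u n t x = u t x := by
  filter_upwards [eventually_ge_atTop (spanningSetsIndex volume t),
    eventually_ge_atTop (spanningSetsIndex μ x), eventually_ge_atTop ⌈‖u t x‖⌉₊] with n ht hx hn
  exact if_pos ⟨monotone_spanningSets _ ht (mem_spanningSetsIndex _ t),
    monotone_spanningSets _ hx (mem_spanningSetsIndex _ x), Nat.ceil_le.1 hn⟩

lemma tendsto_tameTrunc (hr : 0 < r) (hu : Measurable fun p : ℝ × X => u p.1 p.2) (t : ℝ) :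
    ∀ᵐ x ∂μ, Tendsto (fun n => tameTrunc μ r u n t x) atTop (nhds (u t x)) := by
  rcases eq_or_ne (sliceIntegral μ r u t) 0 with h0 | h0
  · have hm : Measurable fun x => ‖u t x‖ₑ ^ r :=
      (hu.comp measurable_prodMk_left).enorm.pow_const r
    filter_upwards [(lintegral_eq_zero_iff hm).1 h0] with x hx
    have hux : u t x = 0 := by
      simpa [hr, hr.not_gt] using hx
    have hzero : ∀ n, tameTrunc μ r u n t x = 0 := fun n => by
      simpa only [hux, or_self] using tameTrunc_eq_zero_or_eq (μ := μ) (r := r) (u := u) n t x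
    simp only [hzero, hux, tendsto_const_nhds]
  · have hlim : sliceIntegral μ r u t ≤
        liminf (fun n => sliceIntegral μ r (boxTrunc μ u n) t) atTop :=
      lintegral_rpow_le_liminf hr
        (fun n => ((measurable_boxTrunc hu n).comp measurable_prodMk_left).enorm)
        (Eventually.of_forall fun x => (tendsto_const_nhds.congr' (EventuallyEq.symm <|
          (eventually_boxTrunc_eq t x).mono fun n hn => by rw [hn])).liminf_eq.ge)
    obtain ⟨ε, hε0, hε⟩ := exists_between (pos_iff_ne_zero.2 h0)
    have hevent : ∀ᶠ n : ℕ in atTop, (n : ℝ≥0∞)⁻¹ ≤ sliceIntegral μ r (boxTrunc μ u n) t := by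
      filter_upwards [eventually_lt_of_lt_liminf (hε.trans_le hlim),
        (tendsto_order.1 ENNReal.tendsto_inv_nat_nhds_zero).2 ε hε0] with n hn hn'
      exact hn'.le.trans hn.le
    refine Eventually.of_forall fun x => tendsto_const_nhds.congr' ?_
    filter_upwards [hevent, eventually_boxTrunc_eq (μ := μ) (u := u) t x] with n hn hbox
    rw [tameTrunc, if_pos hn, hbox]

lemma mixedENorm_le_of_duality (hq : 1 < q) (hr : 2 < r)
    (hu : Measurable fun p : ℝ × X => u p.1 p.2) {K : ℝ≥0∞}
    (hK : ∀ G, IsTestFunction G μ → ‖∫ t, ∫ x, u t x * conj (G t x) ∂μ‖ₑ ≤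
      K * mixedENorm μ (q / (q - 1)) (r / (r - 1)) G) :
    mixedENorm μ q r u ≤ K :=
  mixedENorm_le_of_tendsto (by linarith) (by linarith) (measurable_tameTrunc hu)
    (tendsto_tameTrunc (by linarith) hu) fun n =>
      (isTame_tameTrunc hu n).mixedENorm_le hq hr (tameTrunc_eq_zero_or_eq n) hK

end Truncation

end Duality

section MixedNorm

variable {X : Type*} [MeasurableSpace X] {μ : Measure X} {q r : ℝ} {u v : ℝ → X → ℂ}

lemma enorm_integral_mul_conj_le_mixedENorm [SFinite μ] (hq : 1 < q) (hr : 1 < r)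
    (hu : Measurable fun p : ℝ × X => u p.1 p.2) (hv : Measurable fun p : ℝ × X => v p.1 p.2) :
    ‖∫ t, ∫ x, u t x * conj (v t x) ∂μ‖ₑ ≤
      mixedENorm μ q r u * mixedENorm μ (q / (q - 1)) (r / (r - 1)) v := by
  rw [← rpow_inv_lintegral_rpow_eq_mixedENorm μ q r,
    ← rpow_inv_lintegral_rpow_eq_mixedENorm μ (q / (q - 1))]
  refine le_trans ?_ (ENNReal.lintegral_mul_le_Lp_mul_Lq volume
    (Real.HolderConjugate.conjExponent hq)
    ((measurable_lintegral_enorm_rpow hu r).pow_const _).aemeasurable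
    ((measurable_lintegral_enorm_rpow hv (r / (r - 1))).pow_const _).aemeasurable)
  refine (enorm_integral_le_lintegral_enorm _).trans (lintegral_mono fun t => ?_)
  refine (enorm_integral_le_lintegral_enorm _).trans ?_
  simp only [enorm_mul, RCLike.enorm_conj]
  exact ENNReal.lintegral_mul_le_Lp_mul_Lq μ (Real.HolderConjugate.conjExponent hr)
    (hu.comp measurable_prodMk_left).enorm.aemeasurable
    (hv.comp measurable_prodMk_left).enorm.aemeasurable

lemma mixedENorm_add_le [SFinite μ] (hq : 1 ≤ q) (hr : 1 ≤ r)
    (hu : Measurable fun p : ℝ × X => u p.1 p.2) (hv : Measurable fun p : ℝ × X => v p.1 p.2) :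
    mixedENorm μ q r (u + v) ≤ mixedENorm μ q r u + mixedENorm μ q r v := by
  simp only [← rpow_inv_lintegral_rpow_eq_mixedENorm μ q r]
  refine le_trans ?_ (ENNReal.lintegral_Lp_add_le
    ((measurable_lintegral_enorm_rpow hu r).pow_const _).aemeasurable
    ((measurable_lintegral_enorm_rpow hv r).pow_const _).aemeasurable hq)
  gcongr with t
  refine le_trans ?_ (ENNReal.lintegral_Lp_add_le
    (hu.comp measurable_prodMk_left).enorm.aemeasurable
    (hv.comp measurable_prodMk_left).enorm.aemeasurable hr)
  gcongr with x
  exact enorm_add_le _ _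

lemma lintegral_enorm_rpow_le_interpolation {f : X → ℂ} (hf : AEStronglyMeasurable f μ)
    {s : ℝ} (hr : 2 < r) (hrs : r ≤ s) :
    ∫⁻ x, ‖f x‖ₑ ^ r ∂μ ≤ (∫⁻ x, ‖f x‖ₑ ^ 2 ∂μ) ^ ((s - r) / (s - 2)) *
      (∫⁻ x, ‖f x‖ₑ ^ s ∂μ) ^ ((r - 2) / (s - 2)) := by
  have hs : 0 < s - 2 := by linarith
  have hsum : (s - r) / (s - 2) + (r - 2) / (s - 2) = 1 := by field_simp; ring
  have hexp : 2 * ((s - r) / (s - 2)) + s * ((r - 2) / (s - 2)) = r := by field_simp; ring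
  have hθ : 0 ≤ (s - r) / (s - 2) := div_nonneg (by linarith) hs.le
  have hθ' : 0 ≤ (r - 2) / (s - 2) := div_nonneg (by linarith) hs.le
  refine le_of_eq_of_le (lintegral_congr fun x => ?_) (ENNReal.lintegral_mul_norm_pow_le
    (hf.enorm.pow_const 2) (hf.enorm.pow_const s) hθ hθ' hsum)
  rw [← ENNReal.rpow_natCast, ← ENNReal.rpow_mul, ← ENNReal.rpow_mul,
    ← ENNReal.rpow_add_of_nonneg _ _ (by positivity) (mul_nonneg (by linarith) hθ')]
  push_cast
  rw [hexp]

lemma IsAdmissible.time_mul_eq {σ q' r' : ℝ} (h : IsAdmissible σ q r) (h' : IsAdmissible σ q' r') :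
    (r - 2) * (q / r) = (r' - 2) * (q' / r') := by
  have hmul : ∀ {a b : ℝ}, IsAdmissible σ a b → σ * ((b - 2) * (a / b)) = 2 := fun {a b} hab => by
    have ha := hab.two_lt_time
    have hb := hab.two_lt_space
    have hscale := hab.scaling
    field_simp at hscale ⊢
    linarith
  have hσ : σ ≠ 0 := fun h0 => by simpa [h0] using hmul h
  exact mul_left_cancel₀ hσ ((hmul h).trans (hmul h').symm)

-- Points on an admissible line interpolate with the energy norm `L^∞ L²`, its endpoint.
lemma mixedENorm_le_of_energy [SFinite μ] {σ q' r' : ℝ} (h : IsAdmissible σ q r)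
    (h' : IsAdmissible σ q' r') (hrr' : r ≤ r')
    (hu : Measurable fun p : ℝ × X => u p.1 p.2) {E : ℝ≥0∞}
    (hE : ∀ t, ∫⁻ x, ‖u t x‖ₑ ^ 2 ∂μ ≤ E) {K : ℝ≥0∞} (hK : mixedENorm μ q' r' u ≤ K) :
    mixedENorm μ q r u ≤ E ^ ((r' - r) / (r' - 2) / r) * K ^ (q' / q) := by
  have hq := h.two_lt_time
  have hq' := h'.two_lt_time
  have hr := h.two_lt_space
  have hr' := h'.two_lt_space
  have hqr : 0 ≤ q / r := by positivity
  have hexp : (r - 2) / (r' - 2) * (q / r) = q' / r' := by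
    rw [div_mul_eq_mul_div, h.time_mul_eq h', mul_div_cancel_left₀ _ (by linarith)]
  have hslice : ∀ t, (∫⁻ x, ‖u t x‖ₑ ^ r ∂μ) ^ (q / r) ≤
      E ^ ((r' - r) / (r' - 2) * (q / r)) * (∫⁻ x, ‖u t x‖ₑ ^ r' ∂μ) ^ (q' / r') := fun t => by
    have hut : Measurable (u t) := hu.comp measurable_prodMk_left
    rw [← hexp, ENNReal.rpow_mul, ENNReal.rpow_mul, ← ENNReal.mul_rpow_of_nonneg _ _ hqr]
    refine ENNReal.rpow_le_rpow ((lintegral_enorm_rpow_le_interpolation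
      hut.aestronglyMeasurable hr hrr').trans ?_) hqr
    gcongr
    exact hE t
  have hpow : (∫⁻ t, (∫⁻ x, ‖u t x‖ₑ ^ r' ∂μ) ^ (q' / r')) ^ (1 / q) =
      mixedENorm μ q' r' u ^ (q' / q) := by
    rw [mixedENorm, ← ENNReal.rpow_mul]
    congr 1
    field_simp
  calc mixedENorm μ q r u
      ≤ (∫⁻ t, E ^ ((r' - r) / (r' - 2) * (q / r)) *
          (∫⁻ x, ‖u t x‖ₑ ^ r' ∂μ) ^ (q' / r')) ^ (1 / q) :=
        ENNReal.rpow_le_rpow (lintegral_mono hslice) (by positivity)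
    _ = E ^ ((r' - r) / (r' - 2) / r) * mixedENorm μ q' r' u ^ (q' / q) := by
        rw [lintegral_const_mul _ ((measurable_lintegral_enorm_rpow hu r').pow_const _),
          ENNReal.mul_rpow_of_nonneg _ _ (by positivity), hpow, ← ENNReal.rpow_mul]
        congr 2
        field_simp
    _ ≤ _ := by gcongr

end MixedNorm

section Estimates

variable {X : Type*} [MeasurableSpace X] {μ : Measure X} {k : ℝ → X → X → ℂ}
  {B σ q r q' r' : ℝ} {χ : ℝ → ℝ → ℝ} {f : X → ℂ} {F G : ℝ → X → ℂ}

namespace IsDispersiveGroup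

section SFinite

variable [SFinite μ]

lemma lintegral_enorm_duhamel_sq_le_mixedENorm (hk : IsDispersiveGroup k μ B σ)
    (hqr : IsAdmissible σ q r) (hχ : IsTimeCutoff χ) (hF : IsTestFunction F μ) (t : ℝ) :
    ∫⁻ x, ‖duhamel k μ χ F t x‖ₑ ^ 2 ∂μ ≤
      strichartzConst B q r * mixedENorm μ (q / (q - 1)) (r / (r - 1)) F ^ 2 := by
  rw [sq, ← mul_assoc]
  exact (hk.lintegral_enorm_duhamel_sq_le hχ hF t).trans (hk.lintegral_flowForm_le hqr hF hF)

lemma eLpNorm_duhamel_le (hk : IsDispersiveGroup k μ B σ) (hqr : IsAdmissible σ q r)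
    (hχ : IsTimeCutoff χ) (hF : IsTestFunction F μ) (t : ℝ) :
    eLpNorm (duhamel k μ χ F t) 2 μ ≤
      strichartzConst B q r ^ (1 / 2 : ℝ) * mixedENorm μ (q / (q - 1)) (r / (r - 1)) F := by
  rw [← ENNReal.pow_le_pow_left_iff two_ne_zero, eLpNorm_two_sq, mul_pow, ← ENNReal.rpow_natCast,
    ← ENNReal.rpow_mul, Nat.cast_ofNat, one_div_mul_cancel two_ne_zero, ENNReal.rpow_one]
  exact hk.lintegral_enorm_duhamel_sq_le_mixedENorm hqr hχ hF t

lemma enorm_integral_integral_duhamel_le (hk : IsDispersiveGroup k μ B σ) (hχ : IsTimeCutoff χ)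
    (hF : IsTestFunction F μ) (hG : IsTestFunction G μ) :
    ‖∫ t, ∫ x, duhamel k μ χ F t x * conj (G t x) ∂μ‖ₑ ≤
      ∫⁻ t, ∫⁻ s, ‖flowForm k μ (t - s) (F s) (G t)‖ₑ := by
  simp only [fun t => hk.integral_duhamel_mul_conj hχ hF t (hG.memL1L2 t)]
  refine (enorm_integral_le_lintegral_enorm _).trans (lintegral_mono fun t => ?_)
  refine (enorm_integral_le_lintegral_enorm _).trans (lintegral_mono fun s => ?_)
  exact hχ.enorm_mul_le t s _

lemma integral_integral_duhamel_transpose (hk : IsDispersiveGroup k μ B σ) (hχ : IsTimeCutoff χ)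
    (hF : IsTestFunction F μ) (hG : IsTestFunction G μ) :
    ∫ t, ∫ x, duhamel k μ χ F t x * conj (G t x) ∂μ =
      conj (∫ s, ∫ x, duhamel k μ (fun s t => χ t s) G s x * conj (F s x) ∂μ) := by
  have hint : Integrable (fun p : ℝ × ℝ =>
      (χ p.1 p.2 : ℂ) * flowForm k μ (p.1 - p.2) (F p.2) (G p.1)) (volume.prod volume) := by
    have hm : Measurable fun p : ℝ × ℝ =>
        (χ p.1 p.2 : ℂ) * flowForm k μ (p.1 - p.2) (F p.2) (G p.1) :=
      (Complex.measurable_ofReal.comp hχ.measurable).mul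
        (hk.measurable_flowForm hF.measurable hG.measurable)
    refine ⟨hm.aestronglyMeasurable, lt_top_iff_ne_top.2 ?_⟩
    rw [lintegral_prod _ hm.enorm.aemeasurable]
    refine ne_top_of_le_ne_top (ENNReal.mul_ne_top hF.lintegral_eLpNorm_two_ne_top
      hG.lintegral_eLpNorm_two_ne_top) ?_
    rw [← lintegral_const_mul _ (measurable_eLpNorm_two hG.measurable)]
    simp only [← lintegral_mul_const _ (measurable_eLpNorm_two (μ := μ) hF.measurable)]
    exact lintegral_mono fun t => lintegral_mono fun s => (hχ.enorm_mul_le t s _).trans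
      (hk.enorm_flowForm_le (t - s) (hF.memL1L2 s) (hG.memL1L2 t))
  simp only [fun t => hk.integral_duhamel_mul_conj hχ hF t (hG.memL1L2 t),
    fun s => hk.integral_duhamel_mul_conj hχ.transpose hG s (hF.memL1L2 s)]
  rw [integral_integral_swap hint]
  simp only [← integral_conj, map_mul, Complex.conj_ofReal,
    fun s t => hk.conj_flowForm (s - t) (hG.memL1L2 t) (hF.memL1L2 s), neg_sub]

lemma measurable_flow_const (hk : IsDispersiveGroup k μ B σ) (hf : Measurable f) :
    Measurable fun p : ℝ × X => flow k μ p.1 f p.2 :=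
  (hk.measurable_flow (μ := μ) (F := fun _ => f) (hf.comp measurable_snd)).comp
    (f := fun p : ℝ × X => (p.1, 0, p.2)) (by fun_prop)

-- The adjoint of the homogeneous flow is the Duhamel integral without cutoff, evaluated at time 0.
lemma enorm_integral_integral_flow_mul_conj (hk : IsDispersiveGroup k μ B σ) (hf : MemL1L2 f μ)
    (hG : IsTestFunction G μ) :
    ‖∫ t, ∫ x, flow k μ t f x * conj (G t x) ∂μ‖ₑ =
      ‖∫ x, duhamel k μ (fun _ _ => 1) G 0 x * conj (f x) ∂μ‖ₑ := by
  rw [hk.integral_duhamel_mul_conj .one hG 0 hf, ← RCLike.enorm_conj, ← integral_conj]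
  simp only [Complex.ofReal_one, one_mul, zero_sub,
    fun t => (hk.conj_flowForm t hf (hG.memL1L2 t)).symm]
  rfl

end SFinite

variable [SigmaFinite μ]

theorem mixedENorm_flow_le (hk : IsDispersiveGroup k μ B σ) (hqr : IsAdmissible σ q r)
    (hfm : Measurable f) (hf : MemL1L2 f μ) :
    mixedENorm μ q r (fun t => flow k μ t f) ≤
      strichartzConst B q r ^ (1 / 2 : ℝ) * eLpNorm f 2 μ := by
  have hq := hqr.two_lt_time
  refine mixedENorm_le_of_duality (by linarith) hqr.two_lt_space (hk.measurable_flow_const hfm)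
    fun G hG => ?_
  have hm : Measurable (duhamel k μ (fun _ _ => 1) G 0) :=
    (hk.measurable_duhamel .one hG.measurable).comp measurable_prodMk_left
  rw [hk.enorm_integral_integral_flow_mul_conj hf hG]
  calc ‖∫ x, duhamel k μ (fun _ _ => 1) G 0 x * conj (f x) ∂μ‖ₑ
      ≤ eLpNorm (duhamel k μ (fun _ _ => 1) G 0) 2 μ * eLpNorm f 2 μ :=
        (enorm_integral_le_lintegral_enorm _).trans
          (lintegral_enorm_mul_conj_le hm.aestronglyMeasurable hf.memLp.1)
    _ ≤ strichartzConst B q r ^ (1 / 2 : ℝ) * mixedENorm μ (q / (q - 1)) (r / (r - 1)) G *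
          eLpNorm f 2 μ := by
        gcongr
        exact hk.eLpNorm_duhamel_le hqr .one hG 0
    _ = _ := mul_right_comm _ _ _

lemma mixedENorm_duhamel_le (hk : IsDispersiveGroup k μ B σ) (hqr : IsAdmissible σ q r)
    (hχ : IsTimeCutoff χ) (hF : IsTestFunction F μ) :
    mixedENorm μ q r (duhamel k μ χ F) ≤
      strichartzConst B q r * mixedENorm μ (q / (q - 1)) (r / (r - 1)) F := by
  have hq := hqr.two_lt_time
  exact mixedENorm_le_of_duality (by linarith) hqr.two_lt_space
    (hk.measurable_duhamel hχ hF.measurable) fun G hG =>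
      (hk.enorm_integral_integral_duhamel_le hχ hF hG).trans (hk.lintegral_flowForm_le hqr hF hG)

lemma mixedENorm_duhamel_le_of_le (hk : IsDispersiveGroup k μ B σ) (h : IsAdmissible σ q r)
    (h' : IsAdmissible σ q' r') (hrr' : r ≤ r') (hχ : IsTimeCutoff χ) (hF : IsTestFunction F μ) :
    mixedENorm μ q r (duhamel k μ χ F) ≤
      strichartzConst B q' r' ^ ((r' - r) / (r' - 2) / r + q' / q) *
        mixedENorm μ (q' / (q' - 1)) (r' / (r' - 1)) F := by
  have hq := h.two_lt_time
  have hq' := h'.two_lt_time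
  have hr := h.two_lt_space
  have hr' : 0 < r' - 2 := by linarith
  have hp : 0 ≤ (r' - r) / (r' - 2) / r :=
    div_nonneg (div_nonneg (by linarith) hr'.le) (by linarith)
  have hqq' : 0 ≤ q' / q := by positivity
  have hexp : 2 * ((r' - r) / (r' - 2) / r) + q' / q = 1 := by
    have hline := h.time_mul_eq h'
    have hr'0 : r' ≠ 0 := by linarith
    field_simp at hline ⊢
    linarith
  refine (mixedENorm_le_of_energy h h' hrr' (hk.measurable_duhamel hχ hF.measurable)
    (hk.lintegral_enorm_duhamel_sq_le_mixedENorm h' hχ hF)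
    (hk.mixedENorm_duhamel_le h' hχ hF)).trans_eq ?_
  rw [ENNReal.mul_rpow_of_nonneg _ _ hp, ENNReal.mul_rpow_of_nonneg _ _ hqq', mul_mul_mul_comm,
    ← ENNReal.rpow_add_of_nonneg _ _ hp hqq', ← ENNReal.rpow_natCast, ← ENNReal.rpow_mul,
    ← ENNReal.rpow_add_of_nonneg _ _ (by positivity) hqq', Nat.cast_ofNat, hexp, ENNReal.rpow_one]

lemma mixedENorm_duhamel_le_of_ge (hk : IsDispersiveGroup k μ B σ) (h : IsAdmissible σ q r)
    (h' : IsAdmissible σ q' r') (hrr' : r' ≤ r) (hχ : IsTimeCutoff χ) (hF : IsTestFunction F μ) :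
    mixedENorm μ q r (duhamel k μ χ F) ≤
      strichartzConst B q r ^ ((r - r') / (r - 2) / r' + q / q') *
        mixedENorm μ (q' / (q' - 1)) (r' / (r' - 1)) F := by
  have hq := h.two_lt_time
  have hq' := h'.two_lt_time
  have hr' := h'.two_lt_space
  refine mixedENorm_le_of_duality (by linarith) h.two_lt_space
    (hk.measurable_duhamel hχ hF.measurable) fun G hG => ?_
  rw [hk.integral_integral_duhamel_transpose hχ hF hG, RCLike.enorm_conj]
  refine (enorm_integral_mul_conj_le_mixedENorm (q := q') (r := r') (by linarith) (by linarith)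
    (hk.measurable_duhamel hχ.transpose hG.measurable) hF.measurable).trans ?_
  rw [mul_right_comm]
  gcongr
  exact hk.mixedENorm_duhamel_le_of_le h' h hrr' hχ.transpose hG

theorem exists_mixedENorm_duhamel_le (hk : IsDispersiveGroup k μ B σ) (h : IsAdmissible σ q r)
    (h' : IsAdmissible σ q' r') :
    ∃ C : ℝ≥0∞, C ≠ ∞ ∧ ∀ χ F, IsTimeCutoff χ → IsTestFunction F μ →
      mixedENorm μ q r (duhamel k μ χ F) ≤
        C * mixedENorm μ (q' / (q' - 1)) (r' / (r' - 1)) F := by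
  have hexp : ∀ {a b a' b' : ℝ}, IsAdmissible σ a b → IsAdmissible σ a' b' → b ≤ b' →
      0 ≤ (b' - b) / (b' - 2) / b + a' / a := fun {a b a' b'} hab hab' hle => by
    have ha := hab.two_lt_time
    have ha' := hab'.two_lt_time
    have hb := hab.two_lt_space
    have : 0 ≤ (b' - b) / (b' - 2) := div_nonneg (by linarith) (by linarith)
    positivity
  rcases le_total r r' with hle | hle
  · exact ⟨_, ENNReal.rpow_ne_top_of_nonneg (hexp h h' hle) (strichartzConst_ne_top B q' r'),
      fun χ F hχ hF => hk.mixedENorm_duhamel_le_of_le h h' hle hχ hF⟩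
  · exact ⟨_, ENNReal.rpow_ne_top_of_nonneg (hexp h' h hle) (strichartzConst_ne_top B q r),
      fun χ F hχ hF => hk.mixedENorm_duhamel_le_of_ge h h' hle hχ hF⟩

theorem exists_mixedENorm_flow_add_duhamel_le (hk : IsDispersiveGroup k μ B σ)
    (h : IsAdmissible σ q r) (h' : IsAdmissible σ q' r') :
    ∃ C : ℝ≥0∞, C ≠ ∞ ∧ ∀ f χ F, Measurable f → MemL1L2 f μ → IsTimeCutoff χ →
      IsTestFunction F μ →
        mixedENorm μ q r (fun t x => flow k μ t f x + duhamel k μ χ F t x) ≤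
          C * (eLpNorm f 2 μ + mixedENorm μ (q' / (q' - 1)) (r' / (r' - 1)) F) := by
  obtain ⟨C, hC, hCF⟩ := hk.exists_mixedENorm_duhamel_le h h'
  refine ⟨max (strichartzConst B q r ^ (1 / 2 : ℝ)) C,
    max_ne_top (ENNReal.rpow_ne_top_of_nonneg (by norm_num) (strichartzConst_ne_top B q r)) hC,
    fun f χ F hfm hf hχ hF => ?_⟩
  rw [mul_add]
  calc mixedENorm μ q r (fun t x => flow k μ t f x + duhamel k μ χ F t x)
      ≤ mixedENorm μ q r (fun t => flow k μ t f) + mixedENorm μ q r (duhamel k μ χ F) :=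
        mixedENorm_add_le (by linarith [h.two_lt_time]) (by linarith [h.two_lt_space])
          (hk.measurable_flow_const hfm) (hk.measurable_duhamel hχ hF.measurable)
    _ ≤ _ := by
        gcongr
        · exact (hk.mixedENorm_flow_le h hfm hf).trans (by gcongr; exact le_max_left _ _)
        · exact (hCF χ F hχ hF).trans (by gcongr; exact le_max_right _ _)

end IsDispersiveGroup

end Estimates

section BesselSeries

/-- The coefficients of the power series of `w ↦ z ^ (-ν) * J_ν(z)` in the variable `w = z ^ 2`. -/
noncomputable def besselCoeff (ν : ℝ) (k : ℕ) : ℝ :=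
  (-1 / 4) ^ k * 2 ^ (-ν) / (k.factorial * Real.Gamma (ν + 1 + k))

/-- The entire function `w ↦ z ^ (-ν) * J_ν(z)` of `w = z ^ 2`, which, unlike `J_ν`, involves no
non-integral power. -/
noncomputable def besselSeries (ν w : ℝ) : ℝ := ∑' k, besselCoeff ν k * w ^ k

lemma min_one_mul_Gamma_le {s : ℝ} (hs : 0 < s) (k : ℕ) :
    min 1 s * Real.Gamma s ≤ Real.Gamma (s + k) := by
  have hΓ : 0 < Real.Gamma s := Real.Gamma_pos_of_pos hs
  induction k with
  | zero => simpa using mul_le_of_le_one_left hΓ.le (min_le_left 1 s)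
  | succ k ih =>
    rw [Nat.cast_succ, ← add_assoc, Real.Gamma_add_one (by positivity)]
    rcases k.eq_zero_or_pos with rfl | hk
    · simpa using mul_le_mul_of_nonneg_right (min_le_right 1 s) hΓ.le
    · have hk' : (1 : ℝ) ≤ s + k := by
        have : (1 : ℝ) ≤ k := by exact_mod_cast hk
        linarith
      exact ih.trans (le_mul_of_one_le_left (Real.Gamma_nonneg_of_nonneg (by positivity)) hk')

variable {ν : ℝ}

lemma abs_besselCoeff (hν : -1 < ν) (k : ℕ) :
    |besselCoeff ν k| = (1 / 4) ^ k * 2 ^ (-ν) / (k.factorial * Real.Gamma (ν + 1 + k)) := by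
  have hΓ : 0 < Real.Gamma (ν + 1 + k) :=
    Real.Gamma_pos_of_pos (by linarith [k.cast_nonneg (α := ℝ)])
  rw [besselCoeff, abs_div, abs_mul, abs_pow, abs_of_pos (by positivity : (0 : ℝ) < 2 ^ (-ν)),
    abs_of_pos (by positivity : (0 : ℝ) < k.factorial * Real.Gamma (ν + 1 + k))]
  norm_num

lemma exists_abs_besselCoeff_le (hν : -1 < ν) :
    ∃ C, 0 ≤ C ∧ ∀ k : ℕ, |besselCoeff ν k| ≤ C / k.factorial := by
  have hν' : 0 < ν + 1 := by linarith
  have : 0 < min 1 (ν + 1) * Real.Gamma (ν + 1) :=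
    mul_pos (lt_min one_pos hν') (Real.Gamma_pos_of_pos hν')
  refine ⟨2 ^ (-ν) / (min 1 (ν + 1) * Real.Gamma (ν + 1)), by positivity, fun k => ?_⟩
  rw [abs_besselCoeff hν, div_div, mul_comm _ (k.factorial : ℝ)]
  gcongr
  · exact mul_le_of_le_one_left (by positivity) (pow_le_one₀ (by norm_num) (by norm_num))
  · exact min_one_mul_Gamma_le hν' k

lemma summable_besselSeries (hν : -1 < ν) (w : ℝ) : Summable fun k => besselCoeff ν k * w ^ k := by
  obtain ⟨C, -, hC⟩ := exists_abs_besselCoeff_le hν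
  refine Summable.of_norm_bounded ((Real.summable_pow_div_factorial |w|).mul_left C) fun k => ?_
  calc ‖besselCoeff ν k * w ^ k‖ = |besselCoeff ν k| * |w| ^ k := by
        rw [norm_mul, norm_pow, Real.norm_eq_abs, Real.norm_eq_abs]
    _ ≤ C / k.factorial * |w| ^ k := by gcongr; exact hC k
    _ = C * (|w| ^ k / k.factorial) := by ring

lemma two_rpow_neg (ν : ℝ) : (2 : ℝ) ^ (-ν) = 2 * 2 ^ (-(ν + 1)) := by
  rw [show -ν = -(ν + 1) + 1 by ring, Real.rpow_add_one two_ne_zero, mul_comm]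

lemma besselCoeff_succ (ν : ℝ) (k : ℕ) :
    besselCoeff ν (k + 1) * (k + 1) = -(1 / 2) * besselCoeff (ν + 1) k := by
  have hk : (k : ℝ) + 1 ≠ 0 := by positivity
  rw [besselCoeff, besselCoeff, two_rpow_neg, Nat.factorial_succ, pow_succ]
  push_cast
  rw [show ν + 1 + (k + 1 : ℝ) = ν + 1 + 1 + k by ring]
  field_simp
  ring

lemma besselCoeff_eq (hν : -1 < ν) (k : ℕ) :
    besselCoeff ν k = 2 * (ν + 1 + k) * besselCoeff (ν + 1) k := by
  have hk : 0 < ν + 1 + k := by linarith [k.cast_nonneg (α := ℝ)]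
  have hΓ := (Real.Gamma_pos_of_pos hk).ne'
  rw [besselCoeff, besselCoeff, two_rpow_neg, add_right_comm (ν + 1) 1 (k : ℝ),
    Real.Gamma_add_one hk.ne']
  field_simp

lemma hasSum_deriv_besselSeries (hν : -1 < ν) (w : ℝ) :
    HasSum (fun k : ℕ => besselCoeff ν k * (k * w ^ (k - 1)))
      (-(1 / 2) * besselSeries (ν + 1) w) := by
  rw [← hasSum_nat_add_iff' 1, Finset.sum_range_one, Nat.cast_zero, zero_mul, mul_zero, sub_zero]
  refine ((summable_besselSeries (ν := ν + 1) (by linarith) w).hasSum.mul_left (-(1 / 2))).congr_fun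
    fun k => ?_
  rw [Nat.add_sub_cancel, Nat.cast_succ, ← mul_assoc, besselCoeff_succ, mul_assoc]

lemma hasDerivAt_besselSeries (hν : -1 < ν) (w : ℝ) :
    HasDerivAt (besselSeries ν) (-(1 / 2) * besselSeries (ν + 1) w) w := by
  obtain ⟨C, hC0, hC⟩ := exists_abs_besselCoeff_le hν
  set R := |w| + 1
  have hR : 0 < R := by positivity
  have hu : Summable fun k : ℕ => C / k.factorial * (k * R ^ (k - 1)) := by
    rw [← summable_nat_add_iff 1]
    refine ((Real.summable_pow_div_factorial R).mul_left C).congr fun k => ?_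
    rw [Nat.factorial_succ, Nat.add_sub_cancel]
    push_cast
    field_simp
  rw [← (hasSum_deriv_besselSeries hν w).tsum_eq]
  refine hasDerivAt_tsum_of_isPreconnected (g := fun k x => besselCoeff ν k * x ^ k)
    (g' := fun k x => besselCoeff ν k * (k * x ^ (k - 1))) hu Metric.isOpen_ball
    (convex_ball 0 R).isPreconnected (fun k x _ => (hasDerivAt_pow k x).const_mul _)
    (fun k x hx => ?_) (Metric.mem_ball_self hR) (summable_besselSeries hν 0) (by simp [R])
  have hx' : |x| ≤ R := by simpa using (mem_ball_zero_iff.mp hx).le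
  rw [norm_mul, norm_mul, norm_pow, Real.norm_eq_abs, Real.norm_eq_abs x, RCLike.norm_natCast]
  gcongr
  exact hC k

lemma continuous_besselSeries (hν : -1 < ν) : Continuous (besselSeries ν) :=
  continuous_iff_continuousAt.2 fun w => (hasDerivAt_besselSeries hν w).continuousAt

lemma besselSeries_recurrence (hν : -1 < ν) (w : ℝ) :
    besselSeries ν w = 2 * (ν + 1) * besselSeries (ν + 1) w - w * besselSeries (ν + 2) w := by
  have hν' : -1 < ν + 1 := by linarith
  have h0 := (summable_besselSeries hν' w).hasSum.mul_left (2 * (ν + 1))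
  have h1 := (hasSum_deriv_besselSeries hν' w).mul_left (2 * w)
  rw [show ν + 1 + 1 = ν + 2 by ring] at h1
  have h : HasSum (fun k => besselCoeff ν k * w ^ k) _ := (h0.add h1).congr_fun fun k => ?_
  · rw [besselSeries, h.tsum_eq, ← besselSeries]
    ring
  · rw [besselCoeff_eq hν]
    cases k with
    | zero => simp
    | succ k =>
      rw [Nat.add_sub_cancel]
      ring

-- In the variable `z` with `w = z ^ 2` this is the energy `j(z) ^ 2 + j'(z) ^ 2` of the solution
-- `j(z) = z ^ (-ν) * J_ν(z)` of the damped oscillator `j'' + (2 ν + 1) / z * j' + j = 0`.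
lemma antitoneOn_besselEnergy (hν : -1 / 2 ≤ ν) :
    AntitoneOn (fun w => besselSeries ν w ^ 2 + w * besselSeries (ν + 1) w ^ 2) (Ici 0) := by
  have hE : ∀ w, HasDerivAt (fun w => besselSeries ν w ^ 2 + w * besselSeries (ν + 1) w ^ 2)
      (-(2 * ν + 1) * besselSeries (ν + 1) w ^ 2) w := fun w => by
    have h0 := hasDerivAt_besselSeries (ν := ν) (by linarith) w
    have h1 := hasDerivAt_besselSeries (ν := ν + 1) (by linarith) w
    refine ((h0.pow 2).add ((hasDerivAt_id w).mul (h1.pow 2))).congr_deriv ?_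
    have hrec := besselSeries_recurrence (ν := ν) (by linarith) w
    simp only [id, Pi.pow_apply, show ν + 1 + 1 = ν + 2 by ring]
    push_cast
    linear_combination -besselSeries (ν + 1) w * hrec
  refine antitoneOn_of_deriv_nonpos (convex_Ici 0)
    (fun w _ => (hE w).continuousAt.continuousWithinAt)
    (fun w _ => (hE w).differentiableAt.differentiableWithinAt) fun w _ => ?_
  rw [(hE w).deriv]
  exact mul_nonpos_of_nonpos_of_nonneg (by linarith) (sq_nonneg _)

lemma abs_besselSeries_le (hν : -1 / 2 ≤ ν) {w : ℝ} (hw : 0 ≤ w) :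
    |besselSeries ν w| ≤ |besselSeries ν 0| := by
  have h := antitoneOn_besselEnergy hν (mem_Ici.2 le_rfl) (mem_Ici.2 hw) hw
  rw [← sq_le_sq]
  simp only [zero_mul, add_zero] at h
  exact (le_add_of_nonneg_right (mul_nonneg hw (sq_nonneg _))).trans h

lemma rpow_mul_besselJ (ν : ℝ) {z : ℝ} (hz : 0 < z) :
    ((z ^ (-ν) : ℝ) : ℂ) * besselJ ν z = besselSeries ν (z ^ 2) := by
  rw [besselJ, besselSeries, ← tsum_mul_left, Complex.ofReal_tsum]
  refine tsum_congr fun k => ?_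
  have hpow : ((z : ℂ) / 2) ^ (2 * (k : ℂ) + ν) = (((z / 2) ^ (2 * (k : ℝ) + ν) : ℝ) : ℂ) := by
    rw [Complex.ofReal_cpow (by positivity)]
    push_cast
    rfl
  have hΓ : Complex.Gamma (ν + k + 1) = Real.Gamma (ν + 1 + k) := by
    rw [← Complex.Gamma_ofReal]
    push_cast
    ring_nf
  have hz' : z ^ (-ν) * (z / 2) ^ (2 * (k : ℝ) + ν) = (1 / 4) ^ k * 2 ^ (-ν) * (z ^ 2) ^ k := by
    have hzν : z ^ ν ≠ 0 := by positivity
    rw [Real.rpow_add (by positivity), Real.rpow_mul (by positivity), Real.rpow_natCast,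
      Real.rpow_two, Real.div_rpow hz.le two_pos.le ν, Real.rpow_neg hz.le,
      Real.rpow_neg two_pos.le, div_pow, div_eq_mul_one_div (z ^ 2), mul_pow]
    field_simp
    norm_num
  rw [hpow, hΓ, Complex.Gamma_nat_eq_factorial, mul_left_comm, ← Complex.ofReal_mul, hz',
    besselCoeff]
  push_cast
  rw [show (-1 / 4 : ℂ) = -1 * (1 / 4) by ring, mul_pow]
  ring

end BesselSeries

section GaussianIntegrals

/-- The measure `x ^ a dx` on `(0, ∞)`, so that `L^r_a` is the `L^r` space of `besselMeasure a`. -/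
noncomputable def besselMeasure (a : ℝ) : Measure ℝ :=
  (volume.restrict (Ioi 0)).withDensity fun x => ENNReal.ofReal (x ^ a)

instance (a : ℝ) : SigmaFinite (besselMeasure a) := SigmaFinite.withDensity_ofReal _

lemma ae_besselMeasure_pos (a : ℝ) : ∀ᵐ x ∂besselMeasure a, 0 < x :=
  (withDensity_absolutelyContinuous _ _).ae_le (ae_restrict_mem measurableSet_Ioi)

lemma integral_besselMeasure {E : Type*} [NormedAddCommGroup E] [NormedSpace ℝ E] (a : ℝ)
    (f : ℝ → E) : ∫ x, f x ∂besselMeasure a = ∫ x in Ioi 0, x ^ a • f x := by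
  rw [besselMeasure, integral_withDensity_eq_integral_toReal_smul (by fun_prop) (by simp)]
  refine setIntegral_congr_fun measurableSet_Ioi fun x hx => ?_
  rw [ENNReal.toReal_ofReal (Real.rpow_nonneg (le_of_lt hx) a)]

lemma integrable_besselMeasure {E : Type*} [NormedAddCommGroup E] [NormedSpace ℝ E] {a : ℝ}
    {f : ℝ → E} :
    Integrable f (besselMeasure a) ↔ IntegrableOn (fun x => x ^ a • f x) (Ioi 0) := by
  rw [besselMeasure, integrable_withDensity_iff_integrable_smul' (by fun_prop) (by simp)]
  refine integrableOn_congr_fun (fun x hx => ?_) measurableSet_Ioi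
  rw [ENNReal.toReal_ofReal (Real.rpow_nonneg (le_of_lt hx) a)]

lemma rpow_smul_pow_smul {E : Type*} [NormedAddCommGroup E] [NormedSpace ℝ E] (a : ℝ) (k : ℕ)
    {x : ℝ} (hx : 0 < x) (v : E) : x ^ a • (x ^ (2 * k)) • v = x ^ (a + 2 * k) • v := by
  rw [smul_smul, Real.rpow_add hx, ← Real.rpow_natCast x (2 * k)]
  push_cast
  rfl

lemma integral_pow_smul_besselMeasure {E : Type*} [NormedAddCommGroup E] [NormedSpace ℝ E]
    (a : ℝ) (k : ℕ) (f : ℝ → E) :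
    ∫ x, x ^ (2 * k) • f x ∂besselMeasure a = ∫ x, f x ∂besselMeasure (a + 2 * k) := by
  rw [integral_besselMeasure, integral_besselMeasure]
  exact setIntegral_congr_fun measurableSet_Ioi fun x hx => rpow_smul_pow_smul a k hx _

lemma integrable_pow_smul_besselMeasure {E : Type*} [NormedAddCommGroup E] [NormedSpace ℝ E]
    {a : ℝ} {k : ℕ} {f : ℝ → E} :
    Integrable (fun x => x ^ (2 * k) • f x) (besselMeasure a) ↔
      Integrable f (besselMeasure (a + 2 * k)) := by
  rw [integrable_besselMeasure, integrable_besselMeasure]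
  exact integrableOn_congr_fun (fun x hx => rpow_smul_pow_smul a k hx _) measurableSet_Ioi

/-- The Gaussian with complex parameter `c`. -/
noncomputable def gauss (c : ℂ) (x : ℝ) : ℂ := Complex.exp (-c * (x : ℂ) ^ 2)

@[fun_prop]
lemma continuous_gauss (c : ℂ) : Continuous (gauss c) := by unfold gauss; fun_prop

lemma norm_gauss (c : ℂ) (x : ℝ) : ‖gauss c x‖ = Real.exp (-c.re * x ^ 2) := by
  rw [gauss, Complex.norm_exp, ← Complex.ofReal_pow, Complex.re_mul_ofReal, Complex.neg_re]

lemma gauss_ofReal (c x : ℝ) : gauss c x = (Real.exp (-c * x ^ 2) : ℂ) := by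
  rw [gauss]
  push_cast
  rfl

lemma gauss_add (c d : ℂ) (x : ℝ) : gauss (c + d) x = gauss c x * gauss d x := by
  rw [gauss, gauss, gauss, ← Complex.exp_add]
  congr 1
  ring

lemma conj_gauss (c : ℂ) (x : ℝ) : conj (gauss c x) = gauss (conj c) x := by
  rw [gauss, gauss, ← Complex.exp_conj]
  simp

variable {a : ℝ}

lemma integrable_exp_neg_mul_sq_besselMeasure (ha : -1 < a) {c : ℝ} (hc : 0 < c) :
    Integrable (fun x => Real.exp (-c * x ^ 2)) (besselMeasure a) :=
  integrable_besselMeasure.2 (integrableOn_rpow_mul_exp_neg_mul_sq hc ha)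

lemma integral_exp_neg_mul_sq_besselMeasure (ha : -1 < a) {c : ℝ} (hc : 0 < c) :
    ∫ x, Real.exp (-c * x ^ 2) ∂besselMeasure a =
      1 / 2 * Real.Gamma ((a + 1) / 2) * c ^ (-((a + 1) / 2)) := by
  have h := integral_rpow_mul_exp_neg_mul_rpow (p := 2) two_pos ha hc
  simp only [Real.rpow_two] at h
  simp only [integral_besselMeasure, smul_eq_mul, h]
  ring_nf

lemma integrable_gauss (ha : -1 < a) {c : ℂ} (hc : 0 < c.re) :
    Integrable (gauss c) (besselMeasure a) :=
  (integrable_exp_neg_mul_sq_besselMeasure ha hc).mono' (by fun_prop)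
    (Eventually.of_forall fun x => (norm_gauss c x).le)

lemma memLp_gauss (ha : -1 < a) {c : ℂ} (hc : 0 < c.re) :
    MemLp (gauss c) 2 (besselMeasure a) := by
  rw [memLp_two_iff_integrable_sq_norm (by fun_prop)]
  refine (integrable_exp_neg_mul_sq_besselMeasure ha (mul_pos two_pos hc)).congr
    (Eventually.of_forall fun x => ?_)
  simp only [norm_gauss, ← Real.exp_nat_mul]
  push_cast
  ring_nf

lemma analyticOnNhd_integral_gauss (ha : -1 < a) :
    AnalyticOnNhd ℂ (fun c => ∫ x, gauss c x ∂besselMeasure a) {c | 0 < c.re} := by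
  have hsub : Iio 0 ⊆ interior
      (ProbabilityTheory.integrableExpSet (fun x : ℝ => x ^ 2) (besselMeasure a)) :=
    interior_maximal (fun s hs => by
      simpa [ProbabilityTheory.integrableExpSet] using
        integrable_exp_neg_mul_sq_besselMeasure ha (neg_pos.2 hs)) isOpen_Iio
  have hmgf : (fun c => ∫ x, gauss c x ∂besselMeasure a) =
      fun c => ProbabilityTheory.complexMGF (fun x : ℝ => x ^ 2) (besselMeasure a) (-c) := by
    funext c
    simp [ProbabilityTheory.complexMGF, gauss]
  rw [hmgf]
  refine ProbabilityTheory.analyticOnNhd_complexMGF.comp (fun c _ => analyticAt_id.neg)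
    fun c (hc : 0 < c.re) => ?_
  exact hsub (a := (-c).re) (by simpa using hc)

lemma frequently_ofReal_nhdsNE {p : ℂ → Prop} {s : ℝ} (h : ∀ᶠ x : ℝ in nhds s, p x) :
    ∃ᶠ z in nhdsWithin (s : ℂ) {(s : ℂ)}ᶜ, p z := by
  have ht : Tendsto (fun x : ℝ => (x : ℂ)) (nhdsWithin s {s}ᶜ) (nhdsWithin (s : ℂ) {(s : ℂ)}ᶜ) :=
    (Complex.continuous_ofReal.tendsto s).inf (by simp)
  exact ht.frequently (h.filter_mono nhdsWithin_le_nhds).frequently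

lemma integral_gauss (ha : -1 < a) {c : ℂ} (hc : 0 < c.re) :
    ∫ x, gauss c x ∂besselMeasure a =
      1 / 2 * Real.Gamma ((a + 1) / 2) * c ^ (-((a + 1) / 2 : ℝ) : ℂ) := by
  have hopen : IsOpen {z : ℂ | 0 < z.re} := isOpen_lt continuous_const Complex.continuous_re
  have hR : AnalyticOnNhd ℂ (fun c : ℂ => 1 / 2 * Real.Gamma ((a + 1) / 2) *
      c ^ (-((a + 1) / 2 : ℝ) : ℂ)) {z | 0 < z.re} :=
    DifferentiableOn.analyticOnNhd (fun z hz =>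
      ((differentiableAt_id.cpow_const (Or.inl hz)).const_mul _).differentiableWithinAt) hopen
  refine (analyticOnNhd_integral_gauss ha).eqOn_of_preconnected_of_frequently_eq hR
    (convex_halfSpace_re_gt 0).isPreconnected (z₀ := ((1 : ℝ) : ℂ)) (by simp)
    (frequently_ofReal_nhdsNE ?_) hc
  filter_upwards [lt_mem_nhds one_pos] with r hr
  simp only [gauss_ofReal]
  rw [integral_complex_ofReal, integral_exp_neg_mul_sq_besselMeasure ha hr, ← Complex.ofReal_neg,
    ← Complex.ofReal_cpow hr.le]
  push_cast
  rfl

end GaussianIntegrals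

section GaussianBesselIntegral

variable {a : ℝ}

lemma mul_cpow_of_re_nonneg_of_re_pos {u v : ℂ} (hu : 0 ≤ u.re) (hu0 : u ≠ 0) (hv : 0 < v.re)
    (w : ℂ) : (u * v) ^ w = u ^ w * v ^ w := by
  have hv0 : v ≠ 0 := by rintro rfl; simp at hv
  have hu_arg := abs_le.1 (Complex.abs_arg_le_pi_div_two_iff.2 hu)
  have hv_arg := abs_lt.1 (Complex.abs_arg_lt_pi_div_two_iff.2 (Or.inl hv))
  rw [Complex.cpow_def_of_ne_zero (mul_ne_zero hu0 hv0), Complex.cpow_def_of_ne_zero hu0,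
    Complex.cpow_def_of_ne_zero hv0, ← Complex.exp_add, ← add_mul,
    (Complex.log_mul_eq_add_log_iff hu0 hv0).2
      ⟨by linarith [hu_arg.1, hv_arg.1], by linarith [hu_arg.2, hv_arg.2]⟩]

lemma ofReal_mul_cpow {r : ℝ} (hr : 0 < r) {z : ℂ} (hz : z ≠ 0) (s : ℝ) :
    ((r : ℂ) * z) ^ (s : ℂ) = ((r ^ s : ℝ) : ℂ) * z ^ (s : ℂ) := by
  have hr0 : (r : ℂ) ≠ 0 := by exact_mod_cast hr.ne'
  rw [Complex.cpow_def_of_ne_zero (mul_ne_zero hr0 hz), Complex.cpow_def_of_ne_zero hz,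
    Complex.log_ofReal_mul hr hz, add_mul, Complex.exp_add, Real.rpow_def_of_pos hr]
  push_cast
  rfl

lemma besselCoeff_mul_integral_gauss (ha : -1 < a) (b : ℝ) (k : ℕ) {c : ℂ} (hc : 0 < c.re) :
    ((besselCoeff ((a - 1) / 2) k * b ^ (2 * k) : ℝ) : ℂ) *
        ∫ y, gauss c y ∂besselMeasure (a + 2 * k) =
      (2 * c) ^ ((-(a + 1) / 2 : ℝ) : ℂ) * ((-b ^ 2 / (4 * c)) ^ k / k.factorial) := by
  have hc0 : c ≠ 0 := by rintro rfl; simp at hc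
  have : (0 : ℝ) ≤ k := k.cast_nonneg
  have hΓ : Real.Gamma ((a + 1) / 2 + k) ≠ 0 := (Real.Gamma_pos_of_pos (by linarith)).ne'
  have hc_pow : c ^ (-((a + 1) / 2 + k : ℝ) : ℂ) = c ^ ((-(a + 1) / 2 : ℝ) : ℂ) * (c ^ k)⁻¹ := by
    rw [← Complex.cpow_natCast, ← Complex.cpow_neg, ← Complex.cpow_add _ _ hc0]
    push_cast
    ring_nf
  have hb_pow : (-(b : ℂ) ^ 2 / (4 * c)) ^ k = (-1 / 4) ^ k * b ^ (2 * k) / c ^ k := by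
    rw [show -(b : ℂ) ^ 2 / (4 * c) = -1 / 4 * b ^ 2 / c by ring, div_pow, mul_pow, ← pow_mul]
  have h2 : (2 : ℝ) ^ (-((a - 1) / 2)) = 2 * 2 ^ (-(a + 1) / 2) := by
    rw [two_rpow_neg]
    ring_nf
  rw [integral_gauss (by linarith) hc, show (a + 2 * k + 1) / 2 = (a + 1) / 2 + (k : ℝ) by ring,
    hc_pow, ← Complex.ofReal_ofNat 2, ofReal_mul_cpow two_pos hc0, besselCoeff, h2,
    show (a - 1) / 2 + 1 + (k : ℝ) = (a + 1) / 2 + k by ring, hb_pow]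
  generalize (2 : ℝ) ^ (-(a + 1) / 2) = p
  generalize Real.Gamma ((a + 1) / 2 + k) = Γ at hΓ ⊢
  have : (Γ : ℂ) ≠ 0 := by exact_mod_cast hΓ
  push_cast
  field_simp

lemma integral_besselSeries_mul_gauss (ha : -1 < a) (b : ℝ) {c : ℂ} (hc : 0 < c.re) :
    ∫ y, (besselSeries ((a - 1) / 2) ((b * y) ^ 2) : ℂ) * gauss c y ∂besselMeasure a =
      (2 * c) ^ ((-(a + 1) / 2 : ℝ) : ℂ) * Complex.exp (-b ^ 2 / (4 * c)) := by
  let f : ℕ → ℝ → ℂ := fun k y =>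
    ((besselCoeff ((a - 1) / 2) k * b ^ (2 * k) : ℝ) : ℂ) * (y ^ (2 * k) • gauss c y)
  have hak : ∀ k : ℕ, -1 < a + 2 * k := fun k => by linarith [k.cast_nonneg (α := ℝ)]
  have hf_int : ∀ k, Integrable (f k) (besselMeasure a) := fun k =>
    (integrable_pow_smul_besselMeasure.2 (integrable_gauss (hak k) hc)).const_mul _
  have hf_integral : ∀ k, ∫ y, f k y ∂besselMeasure a =
      (2 * c) ^ ((-(a + 1) / 2 : ℝ) : ℂ) * ((-b ^ 2 / (4 * c)) ^ k / k.factorial) := fun k => by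
    rw [integral_const_mul, integral_pow_smul_besselMeasure,
      besselCoeff_mul_integral_gauss ha b k hc]
  have hf_norm : ∀ k, ∫ y, ‖f k y‖ ∂besselMeasure a =
      ‖(2 * (c.re : ℂ)) ^ ((-(a + 1) / 2 : ℝ) : ℂ)‖ *
        ‖(-b ^ 2 / (4 * (c.re : ℂ))) ^ k / k.factorial‖ := fun k => by
    have hpow : ∀ y : ℝ, ‖y ^ (2 * k)‖ = y ^ (2 * k) := fun y => by
      rw [Real.norm_of_nonneg (by rw [pow_mul]; positivity)]
    rw [← norm_mul, ← besselCoeff_mul_integral_gauss ha b k (by simpa using hc), norm_mul]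
    simp only [f, norm_mul, norm_smul, hpow, norm_gauss, gauss_ofReal]
    rw [integral_const_mul, integral_complex_ofReal, Complex.norm_real (∫ _, _ ∂_),
      Real.norm_of_nonneg (integral_nonneg fun y => (Real.exp_pos _).le),
      ← integral_pow_smul_besselMeasure]
    simp only [smul_eq_mul]
  have hf_summable : Summable fun k => ∫ y, ‖f k y‖ ∂besselMeasure a := by
    simp_rw [hf_norm]
    exact (NormedSpace.norm_expSeries_div_summable _).mul_left _
  have hexp := (NormedSpace.expSeries_div_hasSum_exp (-b ^ 2 / (4 * c))).mul_left
    ((2 * c) ^ ((-(a + 1) / 2 : ℝ) : ℂ))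
  have hsum := hasSum_integral_of_summable_integral_norm hf_int hf_summable
  simp_rw [hf_integral] at hsum
  rw [Complex.exp_eq_exp_ℂ, hexp.unique hsum]
  refine integral_congr_ae (Eventually.of_forall fun y => ?_)
  simp only [f]
  rw [besselSeries, Complex.ofReal_tsum, ← tsum_mul_right]
  refine tsum_congr fun k => ?_
  rw [Complex.real_smul]
  push_cast
  ring

end GaussianBesselIntegral

section SchrodingerKernel

variable {a : ℝ}

/-- The Schrödinger kernel `S_a(x, y, t)` in a form that treats both signs of `t` alike and is
defined for all real `x` and `y`. -/
noncomputable def schrodingerKernel (a t x y : ℝ) : ℂ :=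
  (2 * t * Complex.I) ^ ((-(a + 1) / 2 : ℝ) : ℂ) *
    besselSeries ((a - 1) / 2) ((x * y / (2 * t)) ^ 2) *
    (gauss (4 * t * Complex.I)⁻¹ x * gauss (4 * t * Complex.I)⁻¹ y)

lemma schrodingerKernel_zero (ha : -1 < a) (x y : ℝ) : schrodingerKernel a 0 x y = 0 := by
  have hexp : ((-(a + 1) / 2 : ℝ) : ℂ) ≠ 0 := by
    rw [Ne, Complex.ofReal_eq_zero]
    linarith
  simp only [schrodingerKernel, Complex.ofReal_zero, mul_zero, zero_mul, Complex.zero_cpow hexp]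

lemma gauss_inv_mul_gauss_inv (t x y : ℝ) :
    gauss (4 * t * Complex.I)⁻¹ x * gauss (4 * t * Complex.I)⁻¹ y =
      Complex.exp (Complex.I * ((x ^ 2 + y ^ 2) / (4 * t))) := by
  rw [gauss, gauss, ← Complex.exp_add, mul_inv, Complex.inv_I]
  ring_nf

lemma Skernel_eq_schrodingerKernel (ha : -1 < a) {x y : ℝ} (hx : 0 < x) (hy : 0 < y) (t : ℝ) :
    Skernel a x y t = schrodingerKernel a t x y := by
  rcases eq_or_ne t 0 with rfl | ht
  · have hexp : -(a + 1) / 2 ≠ 0 := by linarith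
    simp only [schrodingerKernel_zero ha, Skernel, lt_irrefl, if_false, abs_zero, mul_zero,
      Real.zero_rpow hexp, Complex.ofReal_zero, zero_mul]
  have hJ := rpow_mul_besselJ ((a - 1) / 2) (z := x * y / (2 * |t|)) (by positivity)
  rw [show -((a - 1) / 2) = (1 - a) / 2 by ring,
    show (x * y / (2 * |t|)) ^ 2 = (x * y / (2 * t)) ^ 2 by rw [div_pow, mul_pow 2, sq_abs]; ring]
    at hJ
  have hroot : ∀ {z : ℂ} (θ : ℝ), z ≠ 0 → Complex.log z = θ * Complex.I →
      ((2 * |t| : ℝ) * z) ^ ((-(a + 1) / 2 : ℝ) : ℂ) =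
        ((2 * |t|) ^ (-(a + 1) / 2) : ℝ) * Complex.exp (-(a + 1) / 2 * (θ * Complex.I)) := by
    intro z θ hz hlog
    rw [ofReal_mul_cpow (by positivity) hz, Complex.cpow_def_of_ne_zero hz, hlog]
    push_cast
    ring_nf
  rw [schrodingerKernel, gauss_inv_mul_gauss_inv, ← hJ, Skernel]
  rcases lt_or_gt_of_ne ht with h | h
  · rw [if_neg h.not_gt, show 2 * (t : ℂ) * Complex.I = (2 * |t| : ℝ) * -Complex.I by
      rw [abs_of_neg h]; push_cast; ring, hroot (-(Real.pi / 2)) (by simp)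
      (by rw [Complex.log_neg_I]; push_cast; ring), abs_of_neg h]
    push_cast
    ring_nf
  · rw [if_pos h, show 2 * (t : ℂ) * Complex.I = (2 * |t| : ℝ) * Complex.I by
      rw [abs_of_pos h]; push_cast; ring, hroot (Real.pi / 2) (by simp)
      (by rw [Complex.log_I]; push_cast; ring), abs_of_pos h]
    push_cast
    ring_nf

lemma isDispersiveKernel_schrodingerKernel (ha : 0 ≤ a) :
    IsDispersiveKernel (schrodingerKernel a)
      (2 ^ (-(a + 1) / 2) * |besselSeries ((a - 1) / 2) 0|) ((a + 1) / 2) where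
  measurable := by
    have hB := (continuous_besselSeries (ν := (a - 1) / 2) (by linarith)).measurable.comp
      (f := fun p : ℝ × ℝ × ℝ => (p.2.1 * p.2.2 / (2 * p.1)) ^ 2) (by fun_prop)
    simp only [Function.comp_def] at hB
    unfold schrodingerKernel gauss
    fun_prop
  norm_le t x y := by
    rcases eq_or_ne t 0 with rfl | ht
    · rw [schrodingerKernel_zero (by linarith), norm_zero]
      positivity
    have hphase : ∀ x, ‖gauss (4 * t * Complex.I)⁻¹ x‖ = 1 := fun x => by simp [norm_gauss]
    have hroot : ‖(2 * t * Complex.I) ^ ((-(a + 1) / 2 : ℝ) : ℂ)‖ =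
        2 ^ (-(a + 1) / 2) * |t| ^ (-((a + 1) / 2)) := by
      rw [Complex.norm_cpow_real, norm_mul, norm_mul, Complex.norm_I, Complex.norm_real,
        Complex.norm_ofNat, mul_one, Real.mul_rpow two_pos.le (norm_nonneg t), Real.norm_eq_abs,
        neg_div]
    rw [schrodingerKernel, norm_mul, norm_mul, norm_mul, hphase, hphase, hroot, Complex.norm_real,
      Real.norm_eq_abs, mul_one, mul_one, mul_right_comm]
    have hν : -1 / 2 ≤ (a - 1) / 2 := by linarith
    exact mul_le_mul_of_nonneg_right (mul_le_mul_of_nonneg_left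
      (abs_besselSeries_le hν (sq_nonneg _)) (by positivity)) (by positivity)

/-- A Gaussian normalised so that the Schrödinger flow translates its parameter:
`U_t` maps the packet of parameter `ζ` to the one of parameter `ζ + 4 i t`. -/
noncomputable def gaussianPacket (a : ℝ) (ζ : ℂ) (x : ℝ) : ℂ :=
  ζ ^ ((-(a + 1) / 2 : ℝ) : ℂ) * gauss ζ⁻¹ x

lemma re_inv_pos {ζ : ℂ} (hζ : 0 < ζ.re) : 0 < ζ⁻¹.re := by
  have hζ0 : ζ ≠ 0 := by rintro rfl; simp at hζ
  rw [Complex.inv_re]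
  exact div_pos hζ (Complex.normSq_pos.2 hζ0)

lemma cpow_mul_cpow_mul_cpow {u v ζ : ℂ} (hu : 0 ≤ u.re) (hu0 : u ≠ 0) (hv : 0 < v.re)
    (hζ : 0 < ζ.re) (h : 0 < (ζ * (u * v)).re) (w : ℂ) :
    ζ ^ w * (u ^ w * v ^ w) = (ζ * (u * v)) ^ w := by
  have hζ0 : ζ ≠ 0 := by rintro rfl; simp at hζ
  have hm0 : ζ * (u * v) ≠ 0 := by intro h0; simp [h0] at h
  have hζw : ζ ^ w ≠ 0 := by simp [Complex.cpow_eq_zero_iff, hζ0]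
  have harg : ζ.arg ≠ Real.pi := fun harg => (Complex.arg_eq_pi_iff.1 harg).1.not_gt hζ
  rw [← mul_cpow_of_re_nonneg_of_re_pos hu hu0 hv,
    show u * v = ζ * (u * v) * ζ⁻¹ by field_simp,
    mul_cpow_of_re_nonneg_of_re_pos h.le hm0 (re_inv_pos hζ), Complex.inv_cpow _ _ harg,
    show ζ * (ζ * (u * v) * ζ⁻¹) = ζ * (u * v) by field_simp]
  field_simp

lemma flow_gaussianPacket (ha : -1 < a) (t : ℝ) {ζ : ℂ} (hζ : 0 < ζ.re) :
    flow (schrodingerKernel a) (besselMeasure a) t (gaussianPacket a ζ) =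
      gaussianPacket a (ζ + 4 * t * Complex.I) := by
  rcases eq_or_ne t 0 with rfl | ht
  · rw [flow_zero, Complex.ofReal_zero, mul_zero, zero_mul, add_zero]
  set e : ℂ := (4 * t * Complex.I)⁻¹ with he
  have htC : (t : ℂ) ≠ 0 := by exact_mod_cast ht
  have hζ0 : ζ ≠ 0 := by rintro rfl; simp at hζ
  have hd : 0 < (e + ζ⁻¹).re := by simpa [he] using re_inv_pos hζ
  have hm : ζ * (2 * t * Complex.I * (2 * (e + ζ⁻¹))) = ζ + 4 * t * Complex.I := by
    rw [he]
    field_simp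
    ring
  have hm_re : 0 < (ζ + 4 * t * Complex.I).re := by simpa using hζ
  have hm0 : ζ + 4 * t * Complex.I ≠ 0 := by intro h0; simp [h0] at hm_re
  ext x
  have hkernel : ∀ y, schrodingerKernel a t x y * gaussianPacket a ζ y =
      (ζ ^ ((-(a + 1) / 2 : ℝ) : ℂ) * (2 * t * Complex.I) ^ ((-(a + 1) / 2 : ℝ) : ℂ) *
        gauss e x) * (besselSeries ((a - 1) / 2) ((x / (2 * t) * y) ^ 2) *
          gauss (e + ζ⁻¹) y) := fun y => by
    rw [schrodingerKernel, gaussianPacket, gauss_add, div_mul_eq_mul_div]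
    ring
  have hexponent : gauss e x * Complex.exp (-((x / (2 * t) : ℝ) : ℂ) ^ 2 / (4 * (e + ζ⁻¹))) =
      gauss (ζ + 4 * t * Complex.I)⁻¹ x := by
    have : e + ζ⁻¹ = (ζ + 4 * t * Complex.I) / (4 * t * Complex.I * ζ) := by
      rw [he]
      field_simp
    rw [gauss, gauss, ← Complex.exp_add, this, he]
    congr 1
    push_cast
    field_simp
    linear_combination -4 * (x : ℂ) ^ 2 * ζ * Complex.I_sq
  rw [flow_of_ne_zero ht, gaussianPacket, ← hm,
    ← cpow_mul_cpow_mul_cpow (by simp) (by simp [ht]) (by simpa using hd) hζ (hm ▸ hm_re), hm,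
    ← hexponent]
  simp only [hkernel]
  rw [integral_const_mul, integral_besselSeries_mul_gauss ha _ hd]
  ring

lemma integral_gaussianPacket_mul_conj (ha : -1 < a) {ζ η : ℂ} (hζ : 0 < ζ.re) (hη : 0 < η.re) :
    ∫ x, gaussianPacket a ζ x * conj (gaussianPacket a η x) ∂besselMeasure a =
      1 / 2 * Real.Gamma ((a + 1) / 2) * (ζ + conj η) ^ ((-(a + 1) / 2 : ℝ) : ℂ) := by
  have hη' : 0 < (conj η).re := hη
  have hζ0 : ζ ≠ 0 := by rintro rfl; simp at hζ
  have hη0 : conj η ≠ 0 := by intro h0; simp [h0] at hη'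
  have hm : ζ * (conj η * (ζ⁻¹ + (conj η)⁻¹)) = ζ + conj η := by
    field_simp
    ring
  have hsum : 0 < (ζ⁻¹ + (conj η)⁻¹).re := add_pos (re_inv_pos hζ) (re_inv_pos hη')
  have hconj : conj (η ^ ((-(a + 1) / 2 : ℝ) : ℂ)) = (conj η) ^ ((-(a + 1) / 2 : ℝ) : ℂ) := by
    simpa only [Complex.conj_ofReal] using (Complex.conj_cpow η ((-(a + 1) / 2 : ℝ) : ℂ)
      fun harg => (Complex.arg_eq_pi_iff.1 harg).1.not_gt hη).symm
  have hprod : ∀ x, gaussianPacket a ζ x * conj (gaussianPacket a η x) =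
      ζ ^ ((-(a + 1) / 2 : ℝ) : ℂ) * conj η ^ ((-(a + 1) / 2 : ℝ) : ℂ) *
        gauss (ζ⁻¹ + (conj η)⁻¹) x := fun x => by
    rw [gaussianPacket, gaussianPacket, map_mul, hconj, conj_gauss, gauss_add, map_inv₀]
    ring
  simp only [hprod]
  rw [integral_const_mul, integral_gauss ha hsum, ← hm,
    ← cpow_mul_cpow_mul_cpow hη'.le hη0 hsum hζ (hm ▸ add_pos hζ hη'), ← Complex.ofReal_neg,
    ← neg_div]
  ring

lemma pairingInvariant_gaussianPacket (ha : -1 < a) {ζ η : ℂ} (hζ : 0 < ζ.re) (hη : 0 < η.re) :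
    PairingInvariant (schrodingerKernel a) (besselMeasure a) (gaussianPacket a ζ)
      (gaussianPacket a η) := by
  have hre : ∀ (ξ : ℂ) (t : ℝ), (ξ + 4 * t * Complex.I).re = ξ.re := fun ξ t => by simp
  intro t s
  rw [flow_gaussianPacket ha t hζ, flow_gaussianPacket ha s hη, flow_gaussianPacket ha _ hζ,
    integral_gaussianPacket_mul_conj ha (by rwa [hre]) (by rwa [hre]),
    integral_gaussianPacket_mul_conj ha (by rwa [hre]) hη]
  congr 2
  simp only [map_add, map_mul, Complex.conj_I, Complex.conj_ofReal, map_ofNat,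
    Complex.ofReal_sub]
  ring

lemma memL1L2_gaussianPacket (ha : -1 < a) {ζ : ℂ} (hζ : 0 < ζ.re) :
    MemL1L2 (gaussianPacket a ζ) (besselMeasure a) :=
  ⟨(integrable_gauss ha (re_inv_pos hζ)).const_mul _, (memLp_gauss ha (re_inv_pos hζ)).const_mul _⟩

end SchrodingerKernel

section GaussianDensity

variable {a : ℝ}

/-- The Gaussian packets whose span is a core for the Schrödinger flow. -/
def gaussianPackets (a : ℝ) : Set (ℝ → ℂ) := gaussianPacket a '' {ζ | 0 < ζ.re}

lemma gauss_mem_span_gaussianPackets {c : ℂ} (hc : 0 < c.re) :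
    gauss c ∈ Submodule.span ℂ (gaussianPackets a) := by
  have hc0 : c⁻¹ ≠ 0 := by
    refine inv_ne_zero ?_
    rintro rfl
    simp at hc
  have hroot : c⁻¹ ^ ((-(a + 1) / 2 : ℝ) : ℂ) ≠ 0 := by simp [Complex.cpow_eq_zero_iff, hc0]
  have heq : gauss c = (c⁻¹ ^ ((-(a + 1) / 2 : ℝ) : ℂ))⁻¹ • gaussianPacket a c⁻¹ := by
    ext x
    rw [Pi.smul_apply, smul_eq_mul, gaussianPacket, inv_mul_cancel_left₀ hroot, inv_inv]
  rw [heq]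
  exact Submodule.smul_mem _ _ (Submodule.subset_span ⟨c⁻¹, re_inv_pos hc, rfl⟩)

lemma gauss_one_mul_eval (p : Polynomial ℂ) :
    (fun x => gauss 1 x * p.eval (gauss 1 x)) =
      ∑ k ∈ Finset.range (p.natDegree + 1), p.coeff k • gauss (k + 1) := by
  ext x
  rw [p.eval_eq_sum_range, Finset.sum_apply, Finset.mul_sum]
  refine Finset.sum_congr rfl fun k _ => ?_
  have hpow : gauss 1 x ^ k = gauss k x := by
    rw [gauss, gauss, ← Complex.exp_nat_mul]
    ring_nf
  rw [Pi.smul_apply, smul_eq_mul, gauss_add, hpow]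
  ring

/-- The function `G` on `[0, 1]` with `g x = exp (-x²) * G (exp (-x²))` for `x > 0`. It vanishes at
the endpoint `0` by the convention `1 / 0 = 0`, and near it when `g` has compact support. -/
noncomputable def gaussSubst (g : ℝ → ℝ) (s : ℝ) : ℝ := g (√(-Real.log s)) / s

lemma gaussSubst_exp (g : ℝ → ℝ) {x : ℝ} (hx : 0 < x) :
    gaussSubst g (Real.exp (-x ^ 2)) = g x / Real.exp (-x ^ 2) := by
  rw [gaussSubst, Real.log_exp, neg_neg, Real.sqrt_sq hx.le]

lemma continuousOn_gaussSubst {g : ℝ → ℝ} (hg : Continuous g) (hs : HasCompactSupport g) :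
    ContinuousOn (gaussSubst g) (Icc 0 1) := by
  intro s hs01
  rcases hs01.1.eq_or_lt' with rfl | hs0
  · obtain ⟨R, hR⟩ := hs.isCompact.isBounded.subset_closedBall 0
    refine (continuousWithinAt_const (b := (0 : ℝ))).congr_of_eventuallyEq ?_
      (by simp [gaussSubst])
    have hnear : Iio (Real.exp (-(|R| + 1) ^ 2)) ∈ nhdsWithin (0 : ℝ) (Icc 0 1) :=
      mem_nhdsWithin_of_mem_nhds (Iio_mem_nhds (Real.exp_pos _))
    filter_upwards [hnear, self_mem_nhdsWithin] with s hs_lt hs01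
    rcases hs01.1.eq_or_lt' with rfl | hs0
    · simp [gaussSubst]
    have hlog : Real.log s < -(|R| + 1) ^ 2 := (Real.log_lt_iff_lt_exp hs0).2 hs_lt
    have hsqrt : |R| + 1 ≤ √(-Real.log s) := Real.le_sqrt_of_sq_le (by linarith)
    have hzero : g (√(-Real.log s)) = 0 := by
      by_contra hne
      have hball := hR (subset_tsupport g hne)
      rw [mem_closedBall_zero_iff, Real.norm_of_nonneg (Real.sqrt_nonneg _)] at hball
      linarith [le_abs_self R]
    rw [gaussSubst, hzero, zero_div]
  · have hlog : ContinuousAt Real.log s := Real.continuousAt_log hs0.ne'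
    exact ((hg.continuousAt.comp (Real.continuous_sqrt.continuousAt.comp hlog.neg)).div
      continuousAt_id hs0.ne').continuousWithinAt

lemma exists_polynomial_near {g : ℝ → ℝ} (hg : Continuous g) (hs : HasCompactSupport g) {ε : ℝ}
    (hε : 0 < ε) : ∃ p : Polynomial ℝ, ∀ x : ℝ, 0 < x →
      |g x - Real.exp (-x ^ 2) * p.eval (Real.exp (-x ^ 2))| ≤ ε * Real.exp (-x ^ 2) := by
  obtain ⟨p, hp⟩ := exists_polynomial_near_of_continuousOn 0 1 _ (continuousOn_gaussSubst hg hs)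
    ε hε
  refine ⟨p, fun x hx => ?_⟩
  have hpos := Real.exp_pos (-x ^ 2)
  have hpx := (hp (Real.exp (-x ^ 2)) ⟨hpos.le, Real.exp_le_one_iff.2 (by nlinarith)⟩).le
  rw [gaussSubst_exp g hx, abs_sub_comm] at hpx
  calc |g x - Real.exp (-x ^ 2) * p.eval (Real.exp (-x ^ 2))|
      = |g x / Real.exp (-x ^ 2) - p.eval (Real.exp (-x ^ 2))| * Real.exp (-x ^ 2) := by
        rw [← abs_of_pos hpos, ← abs_mul, abs_of_pos hpos]
        field_simp
    _ ≤ ε * Real.exp (-x ^ 2) := by gcongr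

lemma exists_mem_span_gaussianPackets_near {g : ℝ → ℂ} (hg : Continuous g)
    (hs : HasCompactSupport g) {ε : ℝ} (hε : 0 < ε) :
    ∃ G ∈ Submodule.span ℂ (gaussianPackets a), Continuous G ∧
      ∀ x : ℝ, 0 < x → ‖g x - G x‖ ≤ ε * ‖gauss 1 x‖ := by
  obtain ⟨p, hp⟩ := exists_polynomial_near (g := fun x => (g x).re) (by fun_prop)
    (hs.comp_left (g := Complex.re) rfl) (half_pos hε)
  obtain ⟨q, hq⟩ := exists_polynomial_near (g := fun x => (g x).im) (by fun_prop)
    (hs.comp_left (g := Complex.im) rfl) (half_pos hε)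
  let P : Polynomial ℂ := p.map Complex.ofRealHom + .C Complex.I * q.map Complex.ofRealHom
  have hgauss : ∀ x : ℝ, gauss 1 x = (Real.exp (-x ^ 2) : ℝ) := fun x => by
    simpa using gauss_ofReal 1 x
  have hP : ∀ s : ℝ, P.eval (s : ℂ) = p.eval s + q.eval s * Complex.I := fun s => by
    have hmap : ∀ r : Polynomial ℝ, (r.map Complex.ofRealHom).eval (s : ℂ) = r.eval s := fun r => by
      rw [Polynomial.eval_map]
      exact Polynomial.eval₂_at_apply Complex.ofRealHom s
    rw [Polynomial.eval_add, Polynomial.eval_mul, Polynomial.eval_C, hmap, hmap, mul_comm]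
  refine ⟨fun x => gauss 1 x * P.eval (gauss 1 x), ?_, ?_, fun x hx => ?_⟩
  · rw [gauss_one_mul_eval]
    exact Submodule.sum_mem _ fun k _ => Submodule.smul_mem _ _
      (gauss_mem_span_gaussianPackets (by simpa using Nat.cast_add_one_pos k))
  · fun_prop
  · simp only [hgauss x, hP]
    rw [Complex.norm_real, Real.norm_of_nonneg (Real.exp_pos _).le]
    refine (Complex.norm_le_abs_re_add_abs_im _).trans ?_
    have hpx := hp x hx
    have hqx := hq x hx
    simp only [Complex.sub_re, Complex.sub_im, Complex.add_re, Complex.add_im, Complex.ofReal_re,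
      Complex.ofReal_im, Complex.re_ofReal_mul, Complex.im_ofReal_mul, Complex.I_re, Complex.I_im,
      mul_zero, mul_one, add_zero, zero_add]
    linarith

lemma exists_mem_span_gaussianPackets_eLpNorm_le {ν : Measure ℝ} (hpos : ∀ᵐ x ∂ν, 0 < x)
    (hν : MemLp (gauss 1) 2 ν) {f : ℝ → ℂ} (hf : MemLp f 2 ν) {ε : ℝ≥0∞} (hε : ε ≠ 0) :
    ∃ G ∈ Submodule.span ℂ (gaussianPackets a), Continuous G ∧ eLpNorm (G - f) 2 ν ≤ ε := by
  have := isLocallyFiniteMeasure_of_memLp two_ne_zero ENNReal.ofNat_ne_top (continuous_gauss 1)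
    (fun x => Complex.exp_ne_zero _) hν
  obtain ⟨g, hg_supp, hgf, hg, hg_memLp⟩ := hf.exists_hasCompactSupport_eLpNorm_sub_le
    ENNReal.ofNat_ne_top (ENNReal.half_pos hε).ne'
  obtain ⟨δ, hδ, hδε⟩ := ENNReal.exists_nnreal_pos_mul_lt hν.2.ne (ENNReal.half_pos hε).ne'
  obtain ⟨G, hG_mem, hG, hgG⟩ := exists_mem_span_gaussianPackets_near (a := a) hg hg_supp
    (NNReal.coe_pos.2 hδ)
  refine ⟨G, hG_mem, hG, ?_⟩
  have hgG_norm : eLpNorm (g - G) 2 ν ≤ δ * eLpNorm (gauss 1) 2 ν := by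
    simpa [Pi.sub_def] using eLpNorm_le_mul_eLpNorm_of_ae_le_mul (hpos.mono hgG) 2
  calc eLpNorm (G - f) 2 ν
      = eLpNorm ((f - g) + (g - G)) 2 ν := by rw [sub_add_sub_cancel, eLpNorm_sub_comm]
    _ ≤ eLpNorm (f - g) 2 ν + eLpNorm (g - G) 2 ν :=
        eLpNorm_add_le (hf.1.sub hg_memLp.1) (hg_memLp.1.sub hG.aestronglyMeasurable) one_le_two
    _ ≤ ε / 2 + ε / 2 := add_le_add hgf (hgG_norm.trans hδε.le)
    _ = ε := ENNReal.add_halves ε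

lemma exists_mem_span_gaussianPackets_near_memL1L2 (ha : -1 < a) {f : ℝ → ℂ}
    (hf : MemL1L2 f (besselMeasure a)) {ε : ℝ≥0∞} (hε : ε ≠ 0) :
    ∃ G ∈ Submodule.span ℂ (gaussianPackets a),
      eLpNorm (G - f) 1 (besselMeasure a) ≤ ε ∧ eLpNorm (G - f) 2 (besselMeasure a) ≤ ε := by
  have hgauss : MemL1L2 (gauss 1) (besselMeasure a) :=
    ⟨integrable_gauss ha (by simp), memLp_gauss ha (by simp)⟩
  let w : ℝ → ℝ≥0∞ := fun x => ‖f x‖ₑ + ‖gauss 1 x‖ₑ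
  have hw : AEMeasurable w (besselMeasure a) :=
    hf.integrable.1.enorm.add hgauss.integrable.1.enorm
  have hw0 : ∀ x, w x ≠ 0 := fun x => by simp [w, gauss]
  have hw_int : (∫⁻ x, w x ∂besselMeasure a) ^ (1 / 2 : ℝ) ≠ ∞ := by
    rw [lintegral_add_left' hf.integrable.1.enorm]
    exact ENNReal.rpow_ne_top_of_nonneg (by norm_num)
      (ENNReal.add_ne_top.2 ⟨hf.integrable.2.ne, hgauss.integrable.2.ne⟩)
  obtain ⟨δ, hδ, hδε⟩ := ENNReal.exists_nnreal_pos_mul_lt hw_int hε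
  obtain ⟨G, hG_mem, hG, hGf⟩ := exists_mem_span_gaussianPackets_eLpNorm_le (a := a)
    ((withDensity_absolutelyContinuous _ _).ae_le (ae_besselMeasure_pos a))
    (memLp_invWeighted hw hw0 hgauss fun x => le_add_self)
    (memLp_invWeighted hw hw0 hf fun x => le_self_add)
    (lt_min hε.bot_lt (ENNReal.coe_pos.2 hδ)).ne'
  refine ⟨G, hG_mem, ?_, (eLpNorm_mono_measure _ (le_invWeighted _ w)).trans
    (hGf.trans (min_le_left _ _))⟩
  calc eLpNorm (G - f) 1 (besselMeasure a)
      ≤ eLpNorm (G - f) 2 (invWeighted (besselMeasure a) w) * _ :=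
        eLpNorm_one_le_eLpNorm_two_invWeighted hw hw0 (fun x => by simp [w])
          (hG.aestronglyMeasurable.sub hf.integrable.1)
    _ ≤ δ * _ := mul_le_mul_left (hGf.trans (min_le_right _ _)) _
    _ ≤ ε := hδε.le

theorem isDispersiveGroup_schrodingerKernel (ha : 0 ≤ a) :
    IsDispersiveGroup (schrodingerKernel a) (besselMeasure a)
      (2 ^ (-(a + 1) / 2) * |besselSeries ((a - 1) / 2) 0|) ((a + 1) / 2) := by
  have ha' : -1 < a := by linarith
  have hcore : GeneratesUnitaryCore (gaussianPackets a) (schrodingerKernel a) (besselMeasure a) :=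
    { memL1L2 := by
        rintro _ ⟨ζ, hζ, rfl⟩
        exact memL1L2_gaussianPacket ha' hζ
      memLp_flow := by
        rintro t _ ⟨ζ, hζ : 0 < ζ.re, rfl⟩
        rw [flow_gaussianPacket ha' t hζ]
        exact (memL1L2_gaussianPacket ha' (by simpa using hζ)).memLp
      pairingInvariant := by
        rintro _ ⟨ζ, hζ, rfl⟩ _ ⟨η, hη, rfl⟩
        exact pairingInvariant_gaussianPacket ha' hζ hη
      dense := fun f hf ε hε => exists_mem_span_gaussianPackets_near_memL1L2 ha' hf hε }
  exact hcore.isDispersiveGroup (isDispersiveKernel_schrodingerKernel ha)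

end GaussianDensity

section WeightedNorms

variable {a q r : ℝ} {F : ℝ → ℝ → ℂ}

lemma LrA_eq_integral_besselMeasure (a r : ℝ) (f : ℝ → ℂ) :
    LrA a r f = (∫ x, ‖f x‖ ^ r ∂besselMeasure a) ^ (1 / r) := by
  simp only [LrA, integral_besselMeasure, smul_eq_mul, mul_comm]

lemma LrA_nonneg (a r : ℝ) (f : ℝ → ℂ) : 0 ≤ LrA a r f := by
  rw [LrA_eq_integral_besselMeasure]
  positivity

lemma mixedNorm_nonneg (a q r : ℝ) (u : ℝ → ℝ → ℂ) : 0 ≤ mixedNorm a q r u :=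
  Real.rpow_nonneg (integral_nonneg fun _ => Real.rpow_nonneg (LrA_nonneg a r _) _) _

lemma LrA_congr {f g : ℝ → ℂ} (h : EqOn f g (Ioi 0)) : LrA a r f = LrA a r g := by
  unfold LrA
  rw [setIntegral_congr_fun measurableSet_Ioi fun x hx => by rw [h hx]]

lemma mixedNorm_congr {u v : ℝ → ℝ → ℂ} (h : ∀ᵐ t, EqOn (u · t) (v · t) (Ioi 0)) :
    mixedNorm a q r u = mixedNorm a q r v := by
  unfold mixedNorm
  congr 1
  refine integral_congr_ae ?_
  filter_upwards [h] with t ht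
  rw [LrA_congr ht]

lemma enorm_LrA_le (hr : 0 < r) (f : ℝ → ℂ) :
    ‖LrA a r f‖ₑ ≤ (∫⁻ x, ‖f x‖ₑ ^ r ∂besselMeasure a) ^ (1 / r) := by
  rw [LrA_eq_integral_besselMeasure, Real.enorm_rpow_of_nonneg (by positivity) (by positivity)]
  refine ENNReal.rpow_le_rpow ((enorm_integral_le_lintegral_enorm _).trans_eq ?_) (by positivity)
  simp only [Real.enorm_rpow_of_nonneg (norm_nonneg _) hr.le, enorm_norm]

lemma enorm_LrA {f : ℝ → ℂ} (hf : MemL1L2 f (besselMeasure a)) (hr1 : 1 ≤ r) (hr2 : r ≤ 2) :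
    ‖LrA a r f‖ₑ = (∫⁻ x, ‖f x‖ₑ ^ r ∂besselMeasure a) ^ (1 / r) := by
  have hr : 0 < r := by linarith
  have hpow : ∀ x, ‖‖f x‖ ^ r‖ₑ = ‖f x‖ₑ ^ r := fun x => by
    rw [Real.enorm_rpow_of_nonneg (norm_nonneg _) hr.le, enorm_norm]
  have hint : Integrable (fun x => ‖f x‖ ^ r) (besselMeasure a) := by
    refine ⟨(hf.integrable.1.norm.aemeasurable.pow_const r).aestronglyMeasurable, ?_⟩
    simpa only [HasFiniteIntegral, hpow] using (hf.lintegral_rpow_ne_top hr1 hr2).lt_top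
  rw [LrA_eq_integral_besselMeasure, Real.enorm_rpow_of_nonneg (by positivity) (by positivity),
    enorm_integral_of_nonneg (fun x => by positivity) hint]
  simp only [hpow]

lemma enorm_LrA_two {f : ℝ → ℂ} (hf : MemL1L2 f (besselMeasure a)) :
    ‖LrA a 2 f‖ₑ = eLpNorm f 2 (besselMeasure a) := by
  rw [enorm_LrA hf one_le_two le_rfl, eLpNorm_two_eq_lintegral]
  simp only [ENNReal.rpow_two]

lemma enorm_mixedNorm_le (hq : 0 < q) (hr : 0 < r) (u : ℝ → ℝ → ℂ) :
    ‖mixedNorm a q r u‖ₑ ≤ mixedENorm (besselMeasure a) q r fun t x => u x t := by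
  have hnonneg : ∀ t, 0 ≤ LrA a r (u · t) ^ q := fun t => Real.rpow_nonneg (LrA_nonneg a r _) _
  rw [mixedNorm, Real.enorm_rpow_of_nonneg (integral_nonneg hnonneg) (by positivity),
    ← rpow_inv_lintegral_rpow_eq_mixedENorm]
  refine ENNReal.rpow_le_rpow ((enorm_integral_le_lintegral_enorm _).trans
    (lintegral_mono fun t => ?_)) (by positivity)
  rw [Real.enorm_rpow_of_nonneg (LrA_nonneg a r _) hq.le]
  exact ENNReal.rpow_le_rpow (enorm_LrA_le hr _) hq.le

lemma measurable_LrA (a r : ℝ) (hF : Measurable fun p : ℝ × ℝ => F p.1 p.2) :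
    Measurable fun t => LrA a r (F t) := by
  simp only [LrA_eq_integral_besselMeasure]
  exact (hF.norm.pow_const r).stronglyMeasurable.integral_prod_right.measurable.pow_const _

lemma enorm_mixedNorm (hF : IsTestFunction F (besselMeasure a)) (hq1 : 1 ≤ q) (hq2 : q ≤ 2)
    (hr1 : 1 ≤ r) (hr2 : r ≤ 2) :
    ‖mixedNorm a q r fun x t => F t x‖ₑ = mixedENorm (besselMeasure a) q r F := by
  have hq : 0 < q := by linarith
  have hnonneg : ∀ t, 0 ≤ LrA a r (F t) ^ q := fun t => Real.rpow_nonneg (LrA_nonneg a r _) _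
  have hpow : ∀ t, ‖LrA a r (F t) ^ q‖ₑ = (∫⁻ x, ‖F t x‖ₑ ^ r ∂besselMeasure a) ^ (q / r) :=
    fun t => by
      rw [Real.enorm_rpow_of_nonneg (LrA_nonneg a r _) hq.le,
        enorm_LrA (hF.memL1L2 t) hr1 hr2, ← ENNReal.rpow_mul, one_div_mul_eq_div]
  have hint : Integrable fun t => LrA a r (F t) ^ q := by
    refine ⟨((measurable_LrA a r hF.measurable).pow_const q).aestronglyMeasurable, ?_⟩
    simpa only [HasFiniteIntegral, hpow] using
      (hF.lintegral_lintegral_rpow_ne_top hq1 hq2 hr1 hr2).lt_top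
  rw [mixedNorm, Real.enorm_rpow_of_nonneg (integral_nonneg hnonneg) (by positivity),
    enorm_integral_of_nonneg hnonneg hint]
  simp only [hpow, mixedENorm]

end WeightedNorms

section Decay

variable {X : Type*} [MeasurableSpace X] {μ : Measure X} {a : ℝ}

lemma memL1L2_of_norm_le_one {f : X → ℂ} (hf : Integrable f μ) (h : ∀ x, ‖f x‖ ≤ 1) :
    MemL1L2 f μ := by
  refine ⟨hf, (memLp_two_iff_integrable_sq_norm hf.1).2 ?_⟩
  refine hf.norm.mono (hf.1.norm.pow 2) (Eventually.of_forall fun x => ?_)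
  rw [norm_pow, norm_norm]
  exact pow_le_of_le_one (norm_nonneg _) (h x) two_ne_zero

/-- The weight `(1 + x ^ 2) ^ (-(a / 2 + 1))`, which decays fast enough to be integrable against
`x ^ a dx`. -/
noncomputable def decayWeight (a x : ℝ) : ℂ := ((1 + x ^ 2) ^ (-(a / 2 + 1)) : ℝ)

@[fun_prop]
lemma measurable_decayWeight (a : ℝ) : Measurable (decayWeight a) := by
  unfold decayWeight
  fun_prop

lemma norm_decayWeight (a x : ℝ) : ‖decayWeight a x‖ = (1 + x ^ 2) ^ (-(a / 2 + 1)) := by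
  rw [decayWeight, Complex.norm_real, Real.norm_of_nonneg (by positivity)]

lemma norm_decayWeight_le_one (ha : 0 ≤ a) (x : ℝ) : ‖decayWeight a x‖ ≤ 1 := by
  rw [norm_decayWeight]
  exact Real.rpow_le_one_of_one_le_of_nonpos (by nlinarith [sq_nonneg x]) (by linarith)

lemma rpow_mul_norm_decayWeight_le (ha : 0 ≤ a) {x : ℝ} (hx : 0 < x) :
    x ^ a * ‖decayWeight a x‖ ≤ (1 + x ^ 2)⁻¹ := by
  have hxa : x ^ a ≤ (1 + x ^ 2) ^ (a / 2) := by
    calc x ^ a = (x ^ 2) ^ (a / 2) := by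
          rw [← Real.rpow_natCast, ← Real.rpow_mul hx.le, Nat.cast_ofNat,
            mul_div_cancel₀ a two_ne_zero]
      _ ≤ (1 + x ^ 2) ^ (a / 2) := by gcongr; linarith
  calc x ^ a * ‖decayWeight a x‖ ≤ (1 + x ^ 2) ^ (a / 2) * (1 + x ^ 2) ^ (-(a / 2 + 1)) := by
        rw [norm_decayWeight]
        gcongr
    _ = (1 + x ^ 2)⁻¹ := by
        rw [← Real.rpow_add (by positivity), ← Real.rpow_neg_one]
        ring_nf

lemma memL1L2_decayWeight (ha : 0 ≤ a) : MemL1L2 (decayWeight a) (besselMeasure a) := by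
  refine memL1L2_of_norm_le_one (integrable_besselMeasure.2 ?_) (norm_decayWeight_le_one ha)
  refine integrable_inv_one_add_sq.integrableOn.mono' (by fun_prop) ?_
  filter_upwards [ae_restrict_mem measurableSet_Ioi] with x hx
  rw [norm_smul, Real.norm_of_nonneg (Real.rpow_nonneg (le_of_lt hx) a)]
  exact rpow_mul_norm_decayWeight_le ha hx

lemma memL1L2_inv_one_add_sq : MemL1L2 (fun t : ℝ => (((1 + t ^ 2)⁻¹ : ℝ) : ℂ)) volume := by
  refine memL1L2_of_norm_le_one integrable_inv_one_add_sq.ofReal fun t => ?_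
  rw [Complex.norm_real, Real.norm_of_nonneg (by positivity)]
  exact inv_le_one_of_one_le₀ (by nlinarith [sq_nonneg t])

lemma measurable_indicator_of_continuousOn [TopologicalSpace X] [OpensMeasurableSpace X]
    {s : Set X} (hs : MeasurableSet s) {f : X → ℂ} (hf : ContinuousOn f s) :
    Measurable (s.indicator f) := by
  classical
  rw [← piecewise_eq_indicator]
  exact hf.measurable_piecewise continuousOn_const hs

lemma norm_indicator_Ioi_le {f : ℝ → ℂ} {g : ℝ → ℝ} (hg : 0 ≤ g) (h : ∀ x > 0, ‖f x‖ ≤ g x)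
    (x : ℝ) : ‖(Ioi 0).indicator f x‖ ≤ g x := by
  by_cases hx : x ∈ Ioi (0 : ℝ)
  · rw [indicator_of_mem hx]
    exact h x hx
  · rw [indicator_of_notMem hx, norm_zero]
    exact hg x

lemma measurable_indicator_of_sPlus {φ : ℝ → ℂ} (hφ : SPlus φ) :
    Measurable ((Ioi 0).indicator φ) :=
  measurable_indicator_of_continuousOn measurableSet_Ioi hφ.1.continuousOn

lemma exists_norm_le_decayWeight_of_sPlus {φ : ℝ → ℂ} (hφ : SPlus φ) (a : ℝ) :
    ∃ C : ℝ, ∀ x > 0, ‖φ x‖ ≤ C * ‖decayWeight a x‖ := by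
  set N := ⌈a / 2 + 1⌉₊
  obtain ⟨C₀, h₀⟩ := hφ.2 0 0
  obtain ⟨C₁, h₁⟩ := hφ.2 (2 * N) 0
  refine ⟨2 ^ (N - 1) * (C₀ + C₁), fun x hx => ?_⟩
  have hC₀ : ‖φ x‖ ≤ C₀ := by simpa [DIter] using h₀ x hx
  have hC₁ : (x ^ 2) ^ N * ‖φ x‖ ≤ C₁ := by
    simpa [DIter, pow_mul, abs_of_pos hx] using h₁ x hx
  have hpow : (1 + x ^ 2) ^ (a / 2 + 1) ≤ 2 ^ (N - 1) * (1 + (x ^ 2) ^ N) := by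
    calc (1 + x ^ 2) ^ (a / 2 + 1) ≤ (1 + x ^ 2) ^ (N : ℝ) :=
          Real.rpow_le_rpow_of_exponent_le (by nlinarith [sq_nonneg x]) (Nat.le_ceil _)
      _ ≤ 2 ^ (N - 1) * (1 + (x ^ 2) ^ N) := by
          simpa only [Real.rpow_natCast, one_pow] using add_pow_le zero_le_one (sq_nonneg x) N
  rw [norm_decayWeight, Real.rpow_neg (by positivity), ← div_eq_mul_inv,
    le_div_iff₀ (by positivity)]
  calc ‖φ x‖ * (1 + x ^ 2) ^ (a / 2 + 1) ≤ ‖φ x‖ * (2 ^ (N - 1) * (1 + (x ^ 2) ^ N)) := by gcongr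
    _ = 2 ^ (N - 1) * (‖φ x‖ + (x ^ 2) ^ N * ‖φ x‖) := by ring
    _ ≤ 2 ^ (N - 1) * (C₀ + C₁) := by gcongr

lemma memL1L2_indicator_of_sPlus {φ : ℝ → ℂ} (hφ : SPlus φ) (ha : 0 ≤ a) :
    MemL1L2 ((Ioi 0).indicator φ) (besselMeasure a) := by
  obtain ⟨C, hC⟩ := exists_norm_le_decayWeight_of_sPlus hφ a
  refine (memL1L2_decayWeight ha).mono (measurable_indicator_of_sPlus hφ).aestronglyMeasurable
    (c := |C|) (norm_indicator_Ioi_le (fun x => by positivity) fun x hx => (hC x hx).trans ?_)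
  gcongr
  exact le_abs_self C

lemma exists_norm_le_decayWeight_of_sPlusT {F : ℝ → ℝ → ℂ} (hF : SPlusT F) (ha : 0 ≤ a) :
    ∃ C : ℝ, ∀ t, ∀ x > 0, ‖F x t‖ ≤ C * (1 + t ^ 2)⁻¹ * ‖decayWeight a x‖ := by
  set N := ⌈a / 2 + 2⌉₊
  obtain ⟨C, hC⟩ := hF.2 (2 * N)
  refine ⟨C, fun t x hx => ?_⟩
  have hdecay : (1 + x ^ 2 + t ^ 2) ^ N * ‖F x t‖ ≤ C := by
    simpa [DxIter, DtIter] using hC 0 0 (by simp) x hx t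
  have hx2 := sq_nonneg x
  have ht2 := sq_nonneg t
  have hpow : (1 + t ^ 2) * (1 + x ^ 2) ^ (a / 2 + 1) ≤ (1 + x ^ 2 + t ^ 2) ^ N := by
    calc (1 + t ^ 2) * (1 + x ^ 2) ^ (a / 2 + 1)
        ≤ (1 + x ^ 2 + t ^ 2) * (1 + x ^ 2 + t ^ 2) ^ (a / 2 + 1) :=
          mul_le_mul (by linarith) (Real.rpow_le_rpow (by positivity) (by linarith) (by positivity))
            (by positivity) (by positivity)
      _ = (1 + x ^ 2 + t ^ 2) ^ (a / 2 + 2) := by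
          rw [← Real.rpow_one_add' (by positivity) (by positivity)]
          ring_nf
      _ ≤ (1 + x ^ 2 + t ^ 2) ^ (N : ℝ) :=
          Real.rpow_le_rpow_of_exponent_le (by linarith) (Nat.le_ceil _)
      _ = (1 + x ^ 2 + t ^ 2) ^ N := Real.rpow_natCast _ _
  rw [norm_decayWeight, Real.rpow_neg (by positivity), mul_assoc, ← mul_inv, ← div_eq_mul_inv,
    le_div_iff₀ (by positivity), mul_comm]
  exact (mul_le_mul_of_nonneg_right hpow (norm_nonneg _)).trans hdecay

lemma isTestFunction_indicator_of_sPlusT {F : ℝ → ℝ → ℂ} (hF : SPlusT F) (ha : 0 ≤ a) :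
    IsTestFunction (fun t => (Ioi 0).indicator fun x => F x t) (besselMeasure a) := by
  obtain ⟨C, hC⟩ := exists_norm_le_decayWeight_of_sPlusT hF ha
  have hind : (fun p : ℝ × ℝ => (Ioi 0).indicator (fun x => F x p.1) p.2) =
      (Ioi 0 ×ˢ univ).indicator (fun p : ℝ × ℝ => F p.1 p.2) ∘ Prod.swap := by
    ext p
    by_cases hp : 0 < p.2 <;> simp [indicator, hp]
  refine ⟨?_, _, fun x => (C : ℂ) * decayWeight a x, memL1L2_inv_one_add_sq,
    (memL1L2_decayWeight ha).mono (by fun_prop) fun x => (norm_mul _ _).le, fun t =>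
      norm_indicator_Ioi_le (fun x => by positivity) fun x hx => (hC t x hx).trans ?_⟩
  · rw [hind]
    exact (measurable_indicator_of_continuousOn (measurableSet_Ioi.prod MeasurableSet.univ)
      hF.1.continuousOn).comp measurable_swap
  · rw [norm_mul, Complex.norm_real, Complex.norm_real,
      Real.norm_of_nonneg (by positivity : 0 ≤ (1 + t ^ 2)⁻¹), ← mul_assoc, mul_comm _ ‖C‖]
    gcongr
    exact le_abs_self C

end Decay

section BesselSchrodinger

variable {a q r qt rt : ℝ}

lemma two_lt_of_admissible (ha : 0 ≤ a) (h : Admissible a q r) : 2 < q := by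
  obtain ⟨hr, hra, hscale⟩ := h
  have hr0 : 0 < r - 2 := by linarith
  have hscale' : 2 / q = (a + 1) * (r - 2) / (2 * r) := by
    rw [hscale]
    field_simp
  have hq : 0 < q := by
    have hpos : 0 < 2 / q := by rw [hscale']; positivity
    simpa using hpos
  have hnum : (a + 1) * (r - 2) < 2 * r := by
    rcases le_or_gt a 1 with ha1 | ha1
    · nlinarith
    · have hlt := hra ha1
      rw [lt_div_iff₀ (by linarith)] at hlt
      linarith
  rwa [← div_lt_one hq, hscale', div_lt_one (by positivity)]

lemma isAdmissible_of_admissible (ha : 0 ≤ a) (h : Admissible a q r) :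
    IsAdmissible ((a + 1) / 2) q r :=
  ⟨two_lt_of_admissible ha h, h.1, by rw [h.2.2]; ring⟩

lemma setIntegral_Skernel_eq_flow {t x : ℝ} (ha : -1 < a) (ht : t ≠ 0) (hx : 0 < x) (f : ℝ → ℂ) :
    ∫ y in Ioi 0, Skernel a x y t * f y * ((y ^ a : ℝ) : ℂ) =
      flow (schrodingerKernel a) (besselMeasure a) t ((Ioi 0).indicator f) x := by
  rw [flow_of_ne_zero ht]
  beta_reduce
  rw [integral_besselMeasure]
  refine setIntegral_congr_fun measurableSet_Ioi fun y hy => ?_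
  rw [indicator_of_mem hy, Skernel_eq_schrodingerKernel ha hx hy, Complex.real_smul, mul_comm]

/-- The signed indicator of the interval between `0` and `t`, which turns `∫ s in 0..t` into an
integral over the whole line. -/
noncomputable def orientedCutoff (t s : ℝ) : ℝ :=
  (Ioc 0 t).indicator 1 s - (Ioc t 0).indicator 1 s

lemma isTimeCutoff_orientedCutoff : IsTimeCutoff orientedCutoff where
  measurable := by
    have h₁ : MeasurableSet {p : ℝ × ℝ | 0 < p.2 ∧ p.2 ≤ p.1} := by measurability
    have h₂ : MeasurableSet {p : ℝ × ℝ | p.1 < p.2 ∧ p.2 ≤ 0} := by measurability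
    exact (measurable_one.indicator h₁).sub (measurable_one.indicator h₂)
  abs_le_one t s := by
    simp only [orientedCutoff, indicator, Pi.one_apply]
    split_ifs <;> norm_num

lemma intervalIntegral_eq_integral_orientedCutoff_mul (t : ℝ) (f : ℝ → ℂ) :
    ∫ s in 0..t, f s = ∫ s, (orientedCutoff t s : ℂ) * f s := by
  rcases le_total 0 t with ht | ht
  · rw [intervalIntegral.integral_of_le ht, ← integral_indicator measurableSet_Ioc]
    congr 1 with s
    by_cases hs : s ∈ Ioc 0 t <;> simp [orientedCutoff, Ioc_eq_empty_of_le ht, hs]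
  · rw [intervalIntegral.integral_of_ge ht, ← integral_indicator measurableSet_Ioc,
      ← integral_neg]
    congr 1 with s
    by_cases hs : s ∈ Ioc t 0 <;> simp [orientedCutoff, Ioc_eq_empty_of_le ht, hs]

lemma intervalIntegral_Skernel_eq_duhamel {x : ℝ} (ha : -1 < a) (hx : 0 < x) (t : ℝ)
    (F : ℝ → ℝ → ℂ) :
    ∫ s in 0..t, ∫ y in Ioi 0, Skernel a x y (t - s) * F y s * ((y ^ a : ℝ) : ℂ) =
      duhamel (schrodingerKernel a) (besselMeasure a) orientedCutoff
        (fun s => (Ioi 0).indicator fun y => F y s) t x := by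
  rw [intervalIntegral_eq_integral_orientedCutoff_mul, duhamel]
  refine integral_congr_ae ?_
  filter_upwards [Measure.ae_ne volume t] with s hs
  rw [setIntegral_Skernel_eq_flow ha (sub_ne_zero.2 hs.symm) hx fun y => F y s]

lemma mixedNorm_solution_eq (ha : -1 < a) (q r : ℝ) (φ : ℝ → ℂ) (F : ℝ → ℝ → ℂ) :
    mixedNorm a q r (fun x t => Sop a t φ x + ∫ s in (0 : ℝ)..t, ∫ y in Ioi (0 : ℝ),
        Skernel a x y (t - s) * F y s * ((y ^ a : ℝ) : ℂ)) =
      mixedNorm a q r fun x t =>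
        flow (schrodingerKernel a) (besselMeasure a) t ((Ioi 0).indicator φ) x +
          duhamel (schrodingerKernel a) (besselMeasure a) orientedCutoff
            (fun s => (Ioi 0).indicator fun y => F y s) t x := by
  refine mixedNorm_congr ?_
  filter_upwards [Measure.ae_ne volume 0] with t ht x hx
  beta_reduce
  rw [Sop, setIntegral_Skernel_eq_flow ha ht hx, intervalIntegral_Skernel_eq_duhamel ha hx]

lemma le_toReal_mul_of_enorm_le {C : ℝ≥0∞} (hC : C ≠ ∞) {x y : ℝ} (hy : 0 ≤ y)
    (h : ‖x‖ₑ ≤ C * ‖y‖ₑ) : x ≤ C.toReal * y := by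
  have hxy := ENNReal.toReal_mono (by finiteness) h
  rw [ENNReal.toReal_mul, toReal_enorm, toReal_enorm, Real.norm_of_nonneg hy] at hxy
  exact (le_abs_self x).trans hxy

lemma exists_mixedNorm_flow_add_duhamel_le (ha : 0 ≤ a) (hadm : Admissible a q r)
    (hadmt : Admissible a qt rt) :
    ∃ C > 0, ∀ f χ F, Measurable f → MemL1L2 f (besselMeasure a) → IsTimeCutoff χ →
      IsTestFunction F (besselMeasure a) →
        mixedNorm a q r (fun x t => flow (schrodingerKernel a) (besselMeasure a) t f x +
            duhamel (schrodingerKernel a) (besselMeasure a) χ F t x) ≤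
          C * (LrA a 2 f + mixedNorm a (qt / (qt - 1)) (rt / (rt - 1)) fun x t => F t x) := by
  have hq := two_lt_of_admissible ha hadm
  obtain ⟨C, hC, hCF⟩ :=
    (isDispersiveGroup_schrodingerKernel ha).exists_mixedENorm_flow_add_duhamel_le
      (isAdmissible_of_admissible ha hadm) (isAdmissible_of_admissible ha hadmt)
  refine ⟨C.toReal + 1, by positivity, fun f χ F hfm hf hχ hF => ?_⟩
  have hconj : ∀ {p : ℝ}, 2 < p → 1 ≤ p / (p - 1) ∧ p / (p - 1) ≤ 2 := fun {p} hp => by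
    constructor
    · rw [le_div_iff₀ (by linarith)]
      linarith
    · rw [div_le_iff₀ (by linarith)]
      linarith
  have hqt := hconj (two_lt_of_admissible ha hadmt)
  have hrt := hconj hadmt.1
  have hL := LrA_nonneg a 2 f
  have hM := mixedNorm_nonneg a (qt / (qt - 1)) (rt / (rt - 1)) fun x t => F t x
  have hle := le_toReal_mul_of_enorm_le hC (add_nonneg hL hM) <|
    (enorm_mixedNorm_le (by linarith) (by linarith [hadm.1]) _).trans <|
      (hCF f χ F hfm hf hχ hF).trans_eq <| by
        rw [Real.enorm_of_nonneg (add_nonneg hL hM), ENNReal.ofReal_add hL hM,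
          ← Real.enorm_of_nonneg hL, ← Real.enorm_of_nonneg hM, enorm_LrA_two hf,
          enorm_mixedNorm hF hqt.1 hqt.2 hrt.1 hrt.2]
  refine hle.trans ?_
  gcongr
  linarith

end BesselSchrodinger

end Strichartz

open Strichartz

theorem strichartz_estimate_two_pairs_general (a q r qt rt : ℝ) (ha : 0 ≤ a)
    (hadm : Admissible a q r) (hadmt : Admissible a qt rt) :
    ∃ C > (0 : ℝ), ∀ φ : ℝ → ℂ, Measurable ((Ioi 0).indicator φ) →
      MemL1L2 ((Ioi 0).indicator φ) (besselMeasure a) → ∀ F : ℝ → ℝ → ℂ,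
      IsTestFunction (fun t => (Ioi 0).indicator fun x => F x t) (besselMeasure a) →
      mixedNorm a q r (fun x t => Sop a t φ x + ∫ s in (0 : ℝ)..t, ∫ y in Ioi (0 : ℝ),
          Skernel a x y (t - s) * F y s * ((y ^ a : ℝ) : ℂ)) ≤
        C * (LrA a 2 φ + mixedNorm a (qt / (qt - 1)) (rt / (rt - 1)) F) := by
  obtain ⟨C, hC, hle⟩ := exists_mixedNorm_flow_add_duhamel_le ha hadm hadmt
  refine ⟨C, hC, fun φ hφm hφ F hF => ?_⟩
  have hF_eq : mixedNorm a (qt / (qt - 1)) (rt / (rt - 1)) F =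
      mixedNorm a (qt / (qt - 1)) (rt / (rt - 1)) fun x t =>
        (Ioi 0).indicator (fun y => F y t) x :=
    mixedNorm_congr (ae_of_all _ fun t => eqOn_indicator.symm)
  rw [mixedNorm_solution_eq (by linarith), LrA_congr eqOn_indicator.symm, hF_eq]
  exact hle _ _ _ hφm hφ isTimeCutoff_orientedCutoff hF

/-- Strichartz estimate with two different admissible pairs: for `a ≥ 0` and `a`-admissible
pairs `(q,r)` and `(q̃,r̃)`, `‖u‖_{L^q_t L^r_a} ≤ C(‖φ‖_{L²_a} + ‖F‖_{L^{q̃'}_t L^{r̃'}_a})`. -/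
theorem strichartz_estimate_two_pairs (a q r qt rt : ℝ) (ha : 0 ≤ a)
    (hadm : Admissible a q r) (hadmt : Admissible a qt rt) :
    ∃ C > (0:ℝ), ∀ φ : ℝ → ℂ, SPlus φ → ∀ F : ℝ → ℝ → ℂ, SPlusT F →
      mixedNorm a q r (fun x t =>
          Sop a t φ x +
            ∫ s in (0:ℝ)..t, ∫ y in Ioi (0:ℝ),
              Skernel a x y (t - s) * F y s * ((y ^ a : ℝ) : ℂ)) ≤
        C * (LrA a 2 φ + mixedNorm a (qt / (qt - 1)) (rt / (rt - 1)) F) := by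
  obtain ⟨C, hC, hle⟩ := strichartz_estimate_two_pairs_general a q r qt rt ha hadm hadmt
  exact ⟨C, hC, fun φ hφ F hF => hle φ (measurable_indicator_of_sPlus hφ)
    (memL1L2_indicator_of_sPlus hφ ha) F (isTestFunction_indicator_of_sPlusT hF ha)⟩
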